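/- Let q, q' ∈ L^∞(ℝ₊; L¹(ℝ²) ∩ L^∞(ℝ²)) be two compactly supported (in space, locally uniformly in time) solutions of the system ∂_t q + u·∇q = 0, div u = 0, curl(1 − αΔ)u = q + γδ₀, with u = K^α ∗ q + γK^α where K^α is the kernel of the solution operator, and with the same initial data q(0,·) = q'(0,·) = q₀. Assume the gradient bounds ‖∂₂K^α₁ + ∂₁K^α₂‖_{L^∞} < ∞ and ‖∂₁K^α₁ − ∂₂K^α₂‖_{L^∞} < ∞. Then q = q'. -/

import Mathlib

open MeasureTheory Real Set

noncomputable section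

/-- Euclidean norm on `ℝ × ℝ`. -/
def norm2 (x : ℝ × ℝ) : ℝ := Real.sqrt (x.1 ^ 2 + x.2 ^ 2)

/-- Partial derivative in the first coordinate direction. -/
def pd1 (f : ℝ × ℝ → ℝ) (x : ℝ × ℝ) : ℝ := fderiv ℝ f x (1, 0)

/-- Partial derivative in the second coordinate direction. -/
def pd2 (f : ℝ × ℝ → ℝ) (x : ℝ × ℝ) : ℝ := fderiv ℝ f x (0, 1)

/-- Laplacian. -/
def lap (f : ℝ × ℝ → ℝ) (x : ℝ × ℝ) : ℝ := pd1 (pd1 f) x + pd2 (pd2 f) x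

/-- The harmonic vector field `H(x) = x^⊥/(2π|x|²)`. -/
def Hvec (x : ℝ × ℝ) : ℝ × ℝ := (2 * π * (x.1 ^ 2 + x.2 ^ 2))⁻¹ • (-x.2, x.1)

/-- The velocity `u = K^α ∗ q + γ K^α` associated with a potential vorticity `q`. -/
def uvel (γ : ℝ) (K : ℝ × ℝ → ℝ × ℝ) (q : ℝ × ℝ → ℝ) (x : ℝ × ℝ) : ℝ × ℝ :=
  (∫ y : ℝ × ℝ, q y • K (x - y)) + γ • K x

/-- `q` is a weak solution of the limit system `∂_t q + u·∇q = 0`, `u = K^α ∗ q + γ K^α`,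
in the class `L^∞(ℝ₊; L¹ ∩ L^∞)`, compactly supported in space locally uniformly in time,
with initial data `q₀`. -/
def IsSol (γ : ℝ) (K : ℝ × ℝ → ℝ × ℝ) (q₀ : ℝ × ℝ → ℝ) (q : ℝ → ℝ × ℝ → ℝ) : Prop :=
  (Measurable fun p : ℝ × (ℝ × ℝ) => q p.1 p.2) ∧
  (∃ C : ℝ, ∀ t : ℝ, 0 ≤ t → (∫ x : ℝ × ℝ, |q t x|) ≤ C ∧ ∀ x : ℝ × ℝ, |q t x| ≤ C) ∧
  (∀ T > (0:ℝ), ∃ R : ℝ, ∀ t ∈ Set.Icc (0:ℝ) T, ∀ x : ℝ × ℝ, R < norm2 x → q t x = 0) ∧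
  (∀ φ : ℝ × (ℝ × ℝ) → ℝ, ContDiff ℝ (⊤ : ℕ∞) φ → HasCompactSupport φ →
    (∫ p in Set.Ioi (0:ℝ) ×ˢ (Set.univ : Set (ℝ × ℝ)),
        q p.1 p.2 * (fderiv ℝ φ p (1, (0, 0)) +
          (uvel γ K (q p.1) p.2).1 * fderiv ℝ φ p (0, (1, 0)) +
          (uvel γ K (q p.1) p.2).2 * fderiv ℝ φ p (0, (0, 1)))) +
      (∫ x : ℝ × ℝ, q₀ x * φ (0, x)) = 0)

/-!
Identify the plane with `ℂ` and write `∂ = ∂₁ + i ∂₂`. The two bounded combinations of derivatives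
of the kernel `k = K₁ + i K₂` are the real and imaginary parts of `∂k`. When `k` is tested against
a logarithmic cutoff at the origin, the equation `(1 - αΔ) K = H` allows one to replace it by
derivatives of `∂k`; hence the weak derivative `∂k` has no singular part at the origin. As the
vorticities have compact support, `k` may be cut off far away.

For two solutions `p`, `p'` with velocities `u`, `u'` and their difference `q = p - p'`, put
`V = c_δ ∗ q`, where `c_δ` is a smooth approximation of the Cauchy kernel `1 / z`, so that
`∂V = 2 ρ_δ ∗ q` with a mollifier `ρ_δ`. Up to constants, and to commutator errors of mollification
which tend to `0` with `δ` by continuity of translations in `L¹`, the time derivative of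
`‖V‖²_{L²}` is the integral of the momentum difference `p u - p' u' = q u + p' (k ∗ q)` against `V`.
Replacing `q` by `∂V` turns `q V` into `∂(V²)` and `k ∗ q` into `∂k ∗ V`, so both terms, including
the point vortex part of `u`, are `O(‖V‖²_{L²})` with a constant depending only on the vorticity
bounds, `sup |∂k|` and `‖∂k‖_{L¹}`. Grönwall's inequality shows that `‖V‖_{L²} → 0` as `δ → 0`,
hence `q = 0`.
-/

namespace AlphaEuler

open Filter Topology
open Complex (I)
open scoped ComplexConjugate NNReal

/-! ### Cauchy-Riemann operators -/

section CauchyRiemann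

/-- The first order operator `∂₁ + c ∂₂` on the plane, so that `crDeriv I = 2 ∂_z̄` and
`crDeriv (-I) = 2 ∂_z`. -/
def crDeriv (c : ℂ) (f : ℂ → ℂ) (z : ℂ) : ℂ := fderiv ℝ f z 1 + c * fderiv ℝ f z I

variable {c : ℂ} {f g : ℂ → ℂ} {z : ℂ} {U : Set ℂ}

lemma crDeriv_mul (hf : DifferentiableAt ℝ f z) (hg : DifferentiableAt ℝ g z) :
    crDeriv c (fun y => f y * g y) z = f z * crDeriv c g z + crDeriv c f z * g z := by
  simp only [crDeriv, fderiv_fun_mul hf hg, add_apply,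
    smul_apply, smul_eq_mul]
  ring

lemma crDeriv_congr (h : f =ᶠ[𝓝 z] g) : crDeriv c f z = crDeriv c g z := by
  simp only [crDeriv, h.fderiv_eq]

lemma crDeriv_const (a : ℂ) : crDeriv c (fun _ => a) z = 0 := by
  simp [crDeriv]

lemma crDeriv_eventuallyEq_zero {a : ℂ} (h : f =ᶠ[𝓝 z] fun _ => a) :
    crDeriv c f =ᶠ[𝓝 z] fun _ => 0 := by
  filter_upwards [h.eventually_nhds] with y hy
  exact (crDeriv_congr hy).trans (crDeriv_const a)

lemma contDiffOn_crDeriv {m n : WithTop ℕ∞} (hU : IsOpen U) (hf : ContDiffOn ℝ n f U)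
    (hmn : m + 1 ≤ n) : ContDiffOn ℝ m (crDeriv c f) U := by
  have h : ContDiffOn ℝ m (fderiv ℝ f) U := hf.fderiv_of_isOpen hU hmn
  exact (h.clm_apply contDiffOn_const).add (contDiffOn_const.mul (h.clm_apply contDiffOn_const))

lemma continuousOn_crDeriv (hU : IsOpen U) (hf : ContDiffOn ℝ 1 f U) :
    ContinuousOn (crDeriv c f) U :=
  (contDiffOn_crDeriv (m := 0) hU hf (by simp)).continuousOn

lemma contDiff_crDeriv {m n : WithTop ℕ∞} (hf : ContDiff ℝ n f) (hmn : m + 1 ≤ n) :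
    ContDiff ℝ m (crDeriv c f) :=
  contDiffOn_univ.1 (contDiffOn_crDeriv isOpen_univ hf.contDiffOn hmn)

lemma continuous_crDeriv (hf : ContDiff ℝ 1 f) : Continuous (crDeriv c f) :=
  (contDiff_crDeriv (m := 0) hf (by simp)).continuous

lemma tsupport_crDeriv_subset (c : ℂ) (f : ℂ → ℂ) : tsupport (crDeriv c f) ⊆ tsupport f := by
  intro z hz
  contrapose! hz
  rw [notMem_tsupport_iff_eventuallyEq] at hz ⊢
  exact crDeriv_eventuallyEq_zero hz

lemma hasCompactSupport_crDeriv (hf : HasCompactSupport f) : HasCompactSupport (crDeriv c f) :=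
  hf.mono' (subset_closure.trans (tsupport_crDeriv_subset c f))

end CauchyRiemann

section Support

variable {X : Type*} [TopologicalSpace X] {R : Type*} [NonUnitalNonAssocSemiring R]
  [TopologicalSpace R] [ContinuousMul R] {U : Set X} {f h : X → R}

lemma continuous_mul_of_tsupport_subset (hU : IsOpen U) (hf : ContinuousOn f U)
    (hh : Continuous h) (hs : tsupport h ⊆ U) : Continuous fun x => f x * h x :=
  continuous_of_tsupport fun _ hx =>
    (hf.continuousAt (hU.mem_nhds (hs (tsupport_mul_subset_right hx)))).mul hh.continuousAt

lemma integrable_mul_of_tsupport_subset [MeasurableSpace X] [OpensMeasurableSpace X]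
    {μ : Measure X} [IsFiniteMeasureOnCompacts μ] {A : Type*} [NormedRing A] {f h : X → A}
    (hU : IsOpen U) (hf : ContinuousOn f U) (hh : Continuous h) (hc : HasCompactSupport h)
    (hs : tsupport h ⊆ U) : Integrable (fun x => f x * h x) μ :=
  (continuous_mul_of_tsupport_subset hU hf hh hs).integrable_of_hasCompactSupport hc.mul_left

end Support

section IntegrationByParts

variable {c : ℂ} {f g : ℂ → ℂ} {U : Set ℂ}

lemma integral_mul_crDeriv_of_integrable (hf : ∀ z ∈ tsupport g, DifferentiableAt ℝ f z)
    (hg : ∀ z ∈ tsupport f, DifferentiableAt ℝ g z) (hfg : Integrable fun z => f z * g z)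
    (hfg' : ∀ v, Integrable fun z => f z * fderiv ℝ g z v)
    (hf'g : ∀ v, Integrable fun z => fderiv ℝ f z v * g z) :
    ∫ z, f z * crDeriv c g z = -∫ z, crDeriv c f z * g z := by
  have key (v : ℂ) : ∫ z, f z * fderiv ℝ g z v = -∫ z, fderiv ℝ f z v * g z :=
    integral_mul_fderiv_eq_neg_fderiv_mul_of_integrable (hf'g v) (hfg' v) hfg hf hg
  simp only [crDeriv, mul_add, add_mul, mul_left_comm _ c, mul_assoc c]
  rw [integral_add (hfg' 1) ((hfg' I).const_mul c), integral_add (hf'g 1) ((hf'g I).const_mul c),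
    integral_const_mul, integral_const_mul, key, key]
  ring

lemma integral_mul_crDeriv_of_tsupport_subset (hU : IsOpen U) (hf : ContDiffOn ℝ 1 f U)
    (hg : ContDiff ℝ 1 g) (hc : HasCompactSupport g) (hs : tsupport g ⊆ U) :
    ∫ z, f z * crDeriv c g z = -∫ z, crDeriv c f z * g z := by
  refine integral_mul_crDeriv_of_integrable
    (fun z hz => (hf.contDiffAt (hU.mem_nhds (hs hz))).differentiableAt one_ne_zero)
    (fun z _ => hg.differentiable one_ne_zero z)
    (integrable_mul_of_tsupport_subset hU hf.continuousOn hg.continuous hc hs) (fun v => ?_)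
    (fun v => ?_)
  · exact integrable_mul_of_tsupport_subset hU hf.continuousOn
      (hg.continuous_fderiv_apply one_ne_zero |>.comp (by fun_prop : Continuous fun z => (z, v)))
      (hc.fderiv_apply ℝ v) ((tsupport_fderiv_apply_subset ℝ v).trans hs)
  · exact integrable_mul_of_tsupport_subset hU
      ((hf.continuousOn_fderiv_of_isOpen hU le_rfl).clm_apply continuousOn_const) hg.continuous
      hc hs

end IntegrationByParts

/-! ### Logarithmic cutoffs -/

section LogCutoff

lemma deriv_smoothTransition_of_notMem {x : ℝ} (hx : x ∉ Icc 0 1) :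
    deriv smoothTransition x = 0 := by
  obtain hx | hx : x < 0 ∨ 1 < x := by simpa [or_iff_not_imp_left] using hx
  · have h : smoothTransition =ᶠ[𝓝 x] fun _ => 0 := by
      filter_upwards [Iio_mem_nhds hx] with y hy using smoothTransition.zero_of_nonpos hy.le
    rw [h.deriv_eq, deriv_const]
  · have h : smoothTransition =ᶠ[𝓝 x] fun _ => 1 := by
      filter_upwards [Ioi_mem_nhds hx] with y hy using smoothTransition.one_of_one_le hy.le
    rw [h.deriv_eq, deriv_const]

lemma deriv_deriv_smoothTransition_of_notMem {x : ℝ} (hx : x ∉ Icc 0 1) :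
    deriv (deriv smoothTransition) x = 0 := by
  have h : deriv smoothTransition =ᶠ[𝓝 x] fun _ => 0 := by
    filter_upwards [isClosed_Icc.isOpen_compl.mem_nhds hx] with y hy
    exact deriv_smoothTransition_of_notMem hy
  rw [h.deriv_eq, deriv_const]

lemma contDiff_deriv_smoothTransition : ContDiff ℝ (⊤ : ℕ∞) (deriv smoothTransition) :=
  (contDiff_infty_iff_deriv.1 smoothTransition.contDiff).2

lemma exists_abs_deriv_smoothTransition_le : ∃ B : ℝ, 0 ≤ B ∧
    (∀ x, |deriv smoothTransition x| ≤ B) ∧ ∀ x, |deriv (deriv smoothTransition) x| ≤ B := by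
  obtain ⟨B₁, hB₁⟩ := contDiff_deriv_smoothTransition.continuous.bounded_above_of_compact_support
    (HasCompactSupport.intro isCompact_Icc fun x => deriv_smoothTransition_of_notMem)
  obtain ⟨B₂, hB₂⟩ := (contDiff_infty_iff_deriv.1
    contDiff_deriv_smoothTransition).2.continuous.bounded_above_of_compact_support
    (HasCompactSupport.intro isCompact_Icc fun x => deriv_deriv_smoothTransition_of_notMem)
  exact ⟨max B₁ B₂, (norm_nonneg _).trans ((hB₁ 0).trans (le_max_left _ _)),
    fun x => (hB₁ x).trans (le_max_left _ _), fun x => (hB₂ x).trans (le_max_right _ _)⟩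

lemma hasFDerivAt_log_norm {E : Type*} [NormedAddCommGroup E] [InnerProductSpace ℝ E] {x : E}
    (hx : x ≠ 0) : HasFDerivAt (fun y : E => log ‖y‖) ((‖x‖ ^ 2)⁻¹ • innerSL ℝ x) x := by
  have h := ((hasStrictFDerivAt_norm_sq x).hasFDerivAt.log
    (pow_ne_zero 2 (norm_ne_zero_iff.2 hx))).const_mul (1 / 2)
  refine (h.congr_of_eventuallyEq (Eventually.of_forall fun y => ?_)).congr_fderiv ?_
  · simp [log_pow]
  · ext v
    simp
    ring

variable {a : ℝ → ℝ} {a' L : ℝ} {z : ℂ}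

lemma hasFDerivAt_comp_log_norm (hz : z ≠ 0) (ha : HasDerivAt a a' (log ‖z‖)) :
    HasFDerivAt (fun y : ℂ => (a (log ‖y‖) : ℂ))
      (Complex.ofRealCLM ∘L (a' • (‖z‖ ^ 2)⁻¹ • innerSL ℝ z)) z :=
  Complex.ofRealCLM.hasFDerivAt.comp z (ha.comp_hasFDerivAt z (hasFDerivAt_log_norm hz))

lemma crDeriv_comp_log_norm (hz : z ≠ 0) (ha : HasDerivAt a a' (log ‖z‖)) (c : ℂ) :
    crDeriv c (fun y => (a (log ‖y‖) : ℂ)) z = a' * ((z.re + c * z.im) / (z * conj z)) := by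
  rw [crDeriv, (hasFDerivAt_comp_log_norm hz ha).fderiv, Complex.mul_conj,
    Complex.normSq_eq_norm_sq]
  simp [Complex.inner]
  ring

lemma crDeriv_I_comp_log_norm (hz : z ≠ 0) (ha : HasDerivAt a a' (log ‖z‖)) :
    crDeriv I (fun y => (a (log ‖y‖) : ℂ)) z = a' * (conj z)⁻¹ := by
  have hcz : conj z ≠ 0 := by simpa using hz
  rw [crDeriv_comp_log_norm hz ha, mul_comm I, Complex.re_add_im]
  field_simp

lemma crDeriv_neg_I_comp_log_norm (hz : z ≠ 0) (ha : HasDerivAt a a' (log ‖z‖)) :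
    crDeriv (-I) (fun y => (a (log ‖y‖) : ℂ)) z = a' * z⁻¹ := by
  have hcz : conj z ≠ 0 := by simpa using hz
  have h : (z.re : ℂ) + -I * z.im = conj z := by apply Complex.ext <;> simp
  rw [crDeriv_comp_log_norm hz ha, h]
  field_simp

lemma hasFDerivAt_conj_inv (hz : z ≠ 0) :
    HasFDerivAt (fun y : ℂ => (conj y)⁻¹)
      ((-ContinuousLinearMap.mulLeftRight ℝ ℂ (conj z)⁻¹ (conj z)⁻¹) ∘L
        (Complex.conjCLE : ℂ →L[ℝ] ℂ)) z :=
  (hasFDerivAt_inv' (𝕜 := ℝ) (by simpa using hz)).comp z Complex.conjCLE.hasFDerivAt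

lemma crDeriv_neg_I_conj_inv (hz : z ≠ 0) : crDeriv (-I) (fun y : ℂ => (conj y)⁻¹) z = 0 := by
  rw [crDeriv, (hasFDerivAt_conj_inv hz).fderiv]
  simp only [ContinuousLinearMap.comp_apply, neg_apply,
    ContinuousLinearEquiv.coe_coe, Complex.conjCLE_apply, map_one, Complex.conj_I,
    ContinuousLinearMap.mulLeftRight_apply]
  linear_combination -((conj z)⁻¹ ^ 2) * Complex.I_sq

/-- A logarithmic cutoff at the origin: it is `0` where `‖z‖ ≤ exp (-2L)`, it is `1` where
`exp (-L) ≤ ‖z‖`, and its gradient is `O(1 / (L ‖z‖))`. The value at `0` is imposed because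
`Real.log 0 = 0`. -/
def logCutoff (L : ℝ) (z : ℂ) : ℂ :=
  if z = 0 then 0 else (smoothTransition (2 + log ‖z‖ / L) : ℝ)

lemma logCutoff_of_ne (hz : z ≠ 0) :
    logCutoff L z = (smoothTransition (2 + log ‖z‖ / L) : ℝ) := if_neg hz

lemma logCutoff_eventuallyEq_of_ne (hz : z ≠ 0) :
    logCutoff L =ᶠ[𝓝 z] fun y => ((smoothTransition (2 + log ‖y‖ / L) : ℝ) : ℂ) := by
  filter_upwards [isOpen_ne.mem_nhds hz] with y hy using logCutoff_of_ne hy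

lemma logCutoff_eventuallyEq_zero (hL : 0 < L) : logCutoff L =ᶠ[𝓝 0] fun _ => 0 := by
  filter_upwards [Metric.ball_mem_nhds 0 (exp_pos (-(2 * L)))] with z hz
  by_cases h0 : z = 0
  · exact if_pos h0
  · have h1 : log ‖z‖ ≤ -(2 * L) :=
      (log_le_iff_le_exp (norm_pos_iff.2 h0)).2 (mem_ball_zero_iff.1 hz).le
    have h2 : log ‖z‖ / L ≤ -2 := by rw [div_le_iff₀ hL]; linarith
    rw [logCutoff_of_ne h0, smoothTransition.zero_of_nonpos (by linarith), Complex.ofReal_zero]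

lemma zero_notMem_tsupport_logCutoff (hL : 0 < L) : (0 : ℂ) ∉ tsupport (logCutoff L) :=
  notMem_tsupport_iff_eventuallyEq.2 (logCutoff_eventuallyEq_zero hL)

lemma norm_logCutoff_le_one (L : ℝ) (z : ℂ) : ‖logCutoff L z‖ ≤ 1 := by
  by_cases hz : z = 0
  · simp [logCutoff, hz]
  · rw [logCutoff_of_ne hz, Complex.norm_real, norm_of_nonneg (smoothTransition.nonneg _)]
    exact smoothTransition.le_one _

lemma two_add_log_div_mem_Icc (hL : 0 < L) (hz : z ≠ 0)
    (h : 2 + log ‖z‖ / L ∈ Icc 0 1) : ‖z‖ ∈ Icc (exp (-(2 * L))) (exp (-L)) := by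
  have hz' := norm_pos_iff.2 hz
  have h₀ : -2 ≤ log ‖z‖ / L := by linarith [h.1]
  have h₁ : log ‖z‖ / L ≤ -1 := by linarith [h.2]
  rw [le_div_iff₀ hL] at h₀
  rw [div_le_iff₀ hL] at h₁
  exact ⟨(le_log_iff_exp_le hz').1 (by linarith), (log_le_iff_le_exp hz').1 (by linarith)⟩

lemma tendsto_logCutoff (hz : z ≠ 0) : Tendsto (fun L => logCutoff L z) atTop (𝓝 1) := by
  refine tendsto_const_nhds.congr' ?_
  filter_upwards [eventually_gt_atTop 0, eventually_ge_atTop (-log ‖z‖)] with L hL hzL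
  have h : -1 ≤ log ‖z‖ / L := by rw [le_div_iff₀ hL]; linarith
  rw [logCutoff_of_ne hz, smoothTransition.one_of_one_le (by linarith), Complex.ofReal_one]

lemma contDiff_logCutoff (hL : 0 < L) {n : ℕ∞} : ContDiff ℝ n (logCutoff L) := by
  refine contDiff_iff_contDiffAt.2 fun z => ?_
  by_cases hz : z = 0
  · subst hz
    exact contDiffAt_const.congr_of_eventuallyEq (logCutoff_eventuallyEq_zero hL)
  · refine ContDiffAt.congr_of_eventuallyEq ?_ (logCutoff_eventuallyEq_of_ne hz)
    exact Complex.ofRealCLM.contDiff.contDiffAt.comp z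
      (smoothTransition.contDiff.contDiffAt.comp z (contDiffAt_const.add
        (((contDiffAt_norm ℝ hz).log (norm_ne_zero_iff.2 hz)).div_const L)))

lemma hasDerivAt_comp_two_add_div {F : ℝ → ℝ} (hF : Differentiable ℝ F) (L x : ℝ) :
    HasDerivAt (fun x => F (2 + x / L)) (deriv F (2 + x / L) / L) x := by
  have h := (hF (2 + x / L)).hasDerivAt.comp x (((hasDerivAt_id' x).div_const L).const_add 2)
  exact h.congr_deriv (by ring)

lemma crDeriv_I_logCutoff (hL : 0 < L) : crDeriv I (logCutoff L) =
    fun z : ℂ => ((deriv smoothTransition (2 + log ‖z‖ / L) / L : ℝ) : ℂ) * (conj z)⁻¹ := by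
  ext z
  by_cases hz : z = 0
  · subst hz
    rw [(crDeriv_eventuallyEq_zero (logCutoff_eventuallyEq_zero hL)).eq_of_nhds]
    simp
  · rw [crDeriv_congr (logCutoff_eventuallyEq_of_ne hz)]
    exact crDeriv_I_comp_log_norm hz (hasDerivAt_comp_two_add_div
      (smoothTransition.contDiff.differentiable (n := 1) one_ne_zero) L _)

lemma crDeriv_neg_I_crDeriv_I_logCutoff (hL : 0 < L) (z : ℂ) :
    crDeriv (-I) (crDeriv I (logCutoff L)) z =
      (deriv (deriv smoothTransition) (2 + log ‖z‖ / L) / L / L : ℝ) * (z⁻¹ * (conj z)⁻¹) := by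
  by_cases hz : z = 0
  · subst hz
    rw [crDeriv_congr (crDeriv_eventuallyEq_zero (logCutoff_eventuallyEq_zero hL))]
    simp [crDeriv_const]
  · have hd := (hasDerivAt_comp_two_add_div
      (contDiff_deriv_smoothTransition.differentiable (by simp)) L (log ‖z‖)).div_const L
    rw [crDeriv_I_logCutoff hL, crDeriv_mul (hasFDerivAt_comp_log_norm hz hd).differentiableAt
      (hasFDerivAt_conj_inv hz).differentiableAt, crDeriv_neg_I_conj_inv hz,
      crDeriv_neg_I_comp_log_norm hz hd]
    ring

lemma crDeriv_I_logCutoff_I_mul (hL : 0 < L) (z : ℂ) :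
    crDeriv I (logCutoff L) (I * z) = I * crDeriv I (logCutoff L) z := by
  simp only [crDeriv_I_logCutoff hL, map_mul, norm_mul, Complex.norm_I, one_mul, Complex.conj_I,
    mul_inv, inv_neg, Complex.inv_I]
  ring

lemma exists_norm_crDeriv_logCutoff_le : ∃ B : ℝ, 0 ≤ B ∧ ∀ L : ℝ, 0 < L → ∀ z : ℂ,
    ‖crDeriv I (logCutoff L) z‖ ≤ B / (L * ‖z‖) ∧
    ‖crDeriv (-I) (crDeriv I (logCutoff L)) z‖ ≤ B / L ^ 2 *
      (Icc (exp (-(2 * L))) (exp (-L))).indicator (fun r => (r ^ 2)⁻¹) ‖z‖ := by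
  obtain ⟨B, hB, hB₁, hB₂⟩ := exists_abs_deriv_smoothTransition_le
  refine ⟨B, hB, fun L hL z => ⟨?_, ?_⟩⟩
  · rw [crDeriv_I_logCutoff hL, norm_mul, Complex.norm_real, norm_div, norm_of_nonneg hL.le,
      norm_inv, RCLike.norm_conj, div_mul_eq_div_div, div_eq_mul_inv (B / L)]
    gcongr
    exact hB₁ _
  · rw [crDeriv_neg_I_crDeriv_I_logCutoff hL]
    by_cases hz : 2 + log ‖z‖ / L ∈ Icc 0 1 ∧ z ≠ 0
    · rw [indicator_of_mem (two_add_log_div_mem_Icc hL hz.2 hz.1), norm_mul, Complex.norm_real,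
        norm_div, norm_div, norm_of_nonneg hL.le, norm_mul, norm_inv, norm_inv, RCLike.norm_conj,
        div_div, ← sq, ← mul_inv, ← sq]
      gcongr
      exact hB₂ _
    · have h0 : ((deriv (deriv smoothTransition) (2 + log ‖z‖ / L) / L / L : ℝ) : ℂ) *
          (z⁻¹ * (conj z)⁻¹) = 0 := by
        rcases not_and_or.1 hz with h | h
        · simp [deriv_deriv_smoothTransition_of_notMem h]
        · simp [not_not.1 h]
      rw [h0, norm_zero]
      exact mul_nonneg (by positivity) (indicator_nonneg (fun r _ => by positivity) _)

lemma tsupport_crDeriv_logCutoff_subset (hL : 0 < L) :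
    tsupport (crDeriv I (logCutoff L)) ⊆ Metric.closedBall 0 1 := by
  refine closure_minimal (fun z hz => ?_) Metric.isClosed_closedBall
  have hz0 : z ≠ 0 := by
    rintro rfl
    exact hz (by simp [crDeriv_I_logCutoff hL])
  have hmem : 2 + log ‖z‖ / L ∈ Icc 0 1 := by
    by_contra h
    exact hz (by simp [crDeriv_I_logCutoff hL, deriv_smoothTransition_of_notMem h])
  exact mem_closedBall_zero_iff.2 ((two_add_log_div_mem_Icc hL hz0 hmem).2.trans
    (exp_le_one_iff.2 (by linarith)))

lemma hasCompactSupport_crDeriv_logCutoff (hL : 0 < L) :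
    HasCompactSupport (crDeriv I (logCutoff L)) :=
  (isCompact_closedBall (0 : ℂ) 1).of_isClosed_subset (isClosed_tsupport _)
    (tsupport_crDeriv_logCutoff_subset hL)

end LogCutoff

/-! ### The weak Cauchy-Riemann derivative of the kernel -/

section Annulus

lemma integral_comp_I_mul {E : Type*} [NormedAddCommGroup E] [NormedSpace ℝ E] (F : ℂ → E) :
    ∫ z, F (I * z) = ∫ z, F z := by
  let e : ℂ ≃ₗᵢ[ℝ] ℂ := rotation ⟨I, by simp [Submonoid.unitSphere]⟩
  exact e.measurePreserving.integral_comp e.toHomeomorph.measurableEmbedding F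

lemma integral_eq_zero_of_comp_I_mul_eq_neg {E : Type*} [NormedAddCommGroup E] [NormedSpace ℝ E]
    {F : ℂ → E} (h : ∀ z, F (I * z) = -F z) : ∫ z, F z = 0 := by
  have h1 := integral_comp_I_mul F
  simp only [h, integral_neg] at h1
  have : IsAddTorsionFree E := .of_isTorsionFree ℝ E
  exact self_eq_neg.1 h1.symm

variable {E : Type*} [NormedAddCommGroup E] [NormedSpace ℝ E] [FiniteDimensional ℝ E]
  [Nontrivial E] {a b : ℝ}

lemma pow_smul_indicator_inv_pow_finrank (ha : 0 < a) (y : ℝ) :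
    y ^ (Module.finrank ℝ E - 1) •
      (Icc a b).indicator (fun r => (r ^ Module.finrank ℝ E)⁻¹) y =
      (Icc a b).indicator (fun r => r⁻¹) y := by
  by_cases hy : y ∈ Icc a b
  · have hy0 : y ≠ 0 := (ha.trans_le hy.1).ne'
    have hd : y ^ Module.finrank ℝ E = y ^ (Module.finrank ℝ E - 1) * y := by
      rw [← pow_succ, Nat.sub_add_cancel Module.finrank_pos]
    rw [indicator_of_mem hy, indicator_of_mem hy, hd, smul_eq_mul]
    field_simp
  · simp [indicator_of_notMem hy]

variable [MeasurableSpace E] [BorelSpace E] (μ : Measure E) [μ.IsAddHaarMeasure]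

lemma integrable_indicator_inv_norm_pow_finrank (ha : 0 < a) :
    Integrable (fun x : E => (Icc a b).indicator (fun r => (r ^ Module.finrank ℝ E)⁻¹) ‖x‖) μ := by
  have hcont : ContinuousOn (fun y : ℝ => y⁻¹) (Icc a b) :=
    continuousOn_inv₀.mono fun y hy => (ha.trans_le hy.1).ne'
  rw [integrable_fun_norm_addHaar (μ := μ)
    (f := (Icc a b).indicator fun r => (r ^ Module.finrank ℝ E)⁻¹)]
  simp only [pow_smul_indicator_inv_pow_finrank ha]
  exact (hcont.integrableOn_Icc.integrable_indicator measurableSet_Icc).integrableOn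

lemma integral_indicator_inv_norm_pow_finrank (ha : 0 < a) (hab : a ≤ b) :
    ∫ x : E, (Icc a b).indicator (fun r => (r ^ Module.finrank ℝ E)⁻¹) ‖x‖ ∂μ =
      Module.finrank ℝ E * μ.real (Metric.ball 0 1) * log (b / a) := by
  rw [integral_fun_norm_addHaar μ ((Icc a b).indicator fun r => (r ^ Module.finrank ℝ E)⁻¹)]
  simp only [pow_smul_indicator_inv_pow_finrank ha]
  rw [setIntegral_indicator measurableSet_Icc,
    inter_eq_right.2 fun y hy => mem_Ioi.2 (ha.trans_le hy.1), integral_Icc_eq_integral_Ioc,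
    ← intervalIntegral.integral_of_le hab, integral_inv_of_pos ha (ha.trans_le hab)]
  simp [mul_assoc]

lemma integrable_indicator_inv_norm_sq (ha : 0 < a) :
    Integrable fun z : ℂ => (Icc a b).indicator (fun r => (r ^ 2)⁻¹) ‖z‖ := by
  simpa using integrable_indicator_inv_norm_pow_finrank (E := ℂ) (b := b) volume ha

lemma integral_indicator_inv_norm_sq (ha : 0 < a) (hab : a ≤ b) :
    ∫ z : ℂ, (Icc a b).indicator (fun r => (r ^ 2)⁻¹) ‖z‖ = 2 * π * log (b / a) := by
  simpa [Measure.real] using integral_indicator_inv_norm_pow_finrank (E := ℂ) volume ha hab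

end Annulus

section WeakDerivative

variable {k φ : ℂ → ℂ} {α β : ℂ} {C L : ℝ}

lemma integrable_mul_of_hasCompactSupport (hk : LocallyIntegrable k) (hφ : Continuous φ)
    (hφc : HasCompactSupport φ) : Integrable fun z => k z * φ z :=
  hk.integrable_smul_right_of_hasCompactSupport hφ hφc

lemma integrable_mul_of_norm_le (hkm : Measurable k) (hk : ∀ z, ‖k z‖ ≤ C) (hφ : Continuous φ)
    (hφc : HasCompactSupport φ) : Integrable fun z => k z * φ z :=
  (hφ.integrable_of_hasCompactSupport hφc).bdd_mul hkm.aestronglyMeasurable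
    (Eventually.of_forall hk)

lemma integrable_mul_crDeriv_logCutoff (hL : 0 < L) (hk : ContinuousOn k {0}ᶜ) :
    Integrable fun z => k z * crDeriv I (logCutoff L) z :=
  integrable_mul_of_tsupport_subset isOpen_compl_singleton hk
    (continuous_crDeriv (contDiff_logCutoff (n := 1) hL))
    (hasCompactSupport_crDeriv_logCutoff hL) fun _ hz h0 =>
      zero_notMem_tsupport_logCutoff hL (h0 ▸ tsupport_crDeriv_subset _ _ hz)

/-- The Laplacian in the equation for `k` is moved onto the cutoff, and the source term
`β / z̄` drops out because its product with `crDeriv I (logCutoff L)` is odd under a quarter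
turn. -/
lemma integral_mul_crDeriv_logCutoff_eq (hk : ContDiffOn ℝ 2 k {0}ᶜ)
    (heq : ∀ z, z ≠ 0 → k z - α * crDeriv (-I) (crDeriv I k) z = β / conj z) (hL : 0 < L) :
    ∫ z, k z * crDeriv I (logCutoff L) z =
      -α * ∫ z, crDeriv I k z * crDeriv (-I) (crDeriv I (logCutoff L)) z := by
  set η := logCutoff L
  have hη : ContDiff ℝ 1 (crDeriv I η) := contDiff_crDeriv (contDiff_logCutoff (n := 2) hL) le_rfl
  have hS : ContDiffOn ℝ 1 (crDeriv I k) {0}ᶜ :=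
    contDiffOn_crDeriv isOpen_compl_singleton hk le_rfl
  have hsource : ContinuousOn (fun z : ℂ => β / conj z) {0}ᶜ :=
    continuousOn_const.div Complex.continuous_conj.continuousOn fun z hz => by simpa using hz
  have hodd : ∫ z, β / conj z * crDeriv I η z = 0 := by
    refine integral_eq_zero_of_comp_I_mul_eq_neg fun z => ?_
    rw [crDeriv_I_logCutoff_I_mul hL, map_mul, Complex.conj_I, div_eq_mul_inv, div_eq_mul_inv,
      mul_inv, inv_neg, Complex.inv_I, neg_neg]
    linear_combination (β * (conj z)⁻¹ * crDeriv I η z) * Complex.I_sq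
  have hbyParts : ∫ z, crDeriv I k z * crDeriv (-I) (crDeriv I η) z =
      -∫ z, crDeriv (-I) (crDeriv I k) z * crDeriv I η z :=
    integral_mul_crDeriv_of_tsupport_subset isOpen_compl_singleton hS hη
      (hasCompactSupport_crDeriv_logCutoff hL) fun _ hz h0 =>
        zero_notMem_tsupport_logCutoff hL (h0 ▸ tsupport_crDeriv_subset _ _ hz)
  have hsplit : ∫ z, k z * crDeriv I η z =
      ∫ z, (β / conj z * crDeriv I η z + α * (crDeriv (-I) (crDeriv I k) z * crDeriv I η z)) := by
    refine integral_congr_ae ?_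
    filter_upwards [Measure.ae_ne volume (0 : ℂ)] with z hz
    linear_combination crDeriv I η z * heq z hz
  rw [hsplit, integral_add (integrable_mul_crDeriv_logCutoff hL hsource)
    ((integrable_mul_crDeriv_logCutoff hL
      (continuousOn_crDeriv isOpen_compl_singleton hS)).const_mul _),
    integral_const_mul, hodd, hbyParts]
  ring

lemma tendsto_integral_mul_crDeriv_crDeriv_logCutoff {s : ℂ → ℂ} (hs : ∀ z, ‖s z‖ ≤ C) :
    Tendsto (fun L => ∫ z, s z * crDeriv (-I) (crDeriv I (logCutoff L)) z) atTop (𝓝 0) := by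
  obtain ⟨B, _, hcut⟩ := exists_norm_crDeriv_logCutoff_le
  have hC : 0 ≤ C := (norm_nonneg _).trans (hs 0)
  refine squeeze_zero_norm' (a := fun L => C * B * (2 * π) / L) ?_
    (tendsto_const_nhds.div_atTop tendsto_id)
  filter_upwards [eventually_gt_atTop 0] with L hL
  have hpos := exp_pos (-(2 * L))
  calc ‖∫ z, s z * crDeriv (-I) (crDeriv I (logCutoff L)) z‖
      ≤ ∫ z : ℂ, C * (B / L ^ 2 *
          (Icc (exp (-(2 * L))) (exp (-L))).indicator (fun r => (r ^ 2)⁻¹) ‖z‖) := by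
        refine norm_integral_le_of_norm_le
          (((integrable_indicator_inv_norm_sq hpos).const_mul _).const_mul _)
          (Eventually.of_forall fun z => ?_)
        rw [norm_mul]
        gcongr
        exacts [hs z, (hcut L hL z).2]
    _ = C * B * (2 * π) / L := by
        rw [integral_const_mul, integral_const_mul, integral_indicator_inv_norm_sq hpos
          (exp_le_exp.2 (by linarith)), ← exp_sub, log_exp]
        field_simp
        ring

lemma tendsto_integral_mul_crDeriv_logCutoff (hk : ContDiffOn ℝ 2 k {0}ᶜ)
    (hC : ∀ z, ‖crDeriv I k z‖ ≤ C)
    (heq : ∀ z, z ≠ 0 → k z - α * crDeriv (-I) (crDeriv I k) z = β / conj z) :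
    Tendsto (fun L => ∫ z, k z * crDeriv I (logCutoff L) z) atTop (𝓝 0) := by
  have h := (tendsto_integral_mul_crDeriv_crDeriv_logCutoff hC).const_mul (-α)
  rw [mul_zero] at h
  refine h.congr' ?_
  filter_upwards [eventually_gt_atTop 0] with L hL
  exact (integral_mul_crDeriv_logCutoff_eq hk heq hL).symm

/-- The factor `‖φ z - φ 0‖ = O(‖z‖)` compensates the singularity of the gradient of the cutoff. -/
lemma tendsto_integral_mul_sub_mul_crDeriv_logCutoff (hk : LocallyIntegrable k) {M : ℝ≥0}
    (hφ : LipschitzWith M φ) :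
    Tendsto (fun L => ∫ z, k z * ((φ z - φ 0) * crDeriv I (logCutoff L) z)) atTop (𝓝 0) := by
  obtain ⟨B, -, hcut⟩ := exists_norm_crDeriv_logCutoff_le
  have hkball : IntegrableOn k (Metric.closedBall 0 1) :=
    hk.integrableOn_isCompact (isCompact_closedBall _ _)
  refine squeeze_zero_norm' (a := fun L => M * B * (∫ z in Metric.closedBall 0 1, ‖k z‖) / L) ?_
    (tendsto_const_nhds.div_atTop tendsto_id)
  filter_upwards [eventually_gt_atTop 0] with L hL
  have hball : ∫ z, k z * ((φ z - φ 0) * crDeriv I (logCutoff L) z) =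
      ∫ z in Metric.closedBall 0 1, k z * ((φ z - φ 0) * crDeriv I (logCutoff L) z) := by
    refine (setIntegral_eq_integral_of_forall_compl_eq_zero fun z hz => ?_).symm
    rw [image_eq_zero_of_notMem_tsupport fun h => hz (tsupport_crDeriv_logCutoff_subset hL h),
      mul_zero, mul_zero]
  rw [hball, mul_div_right_comm, ← integral_const_mul]
  refine norm_integral_le_of_norm_le (hkball.norm.const_mul _) ?_
  filter_upwards [ae_restrict_of_ae (Measure.ae_ne volume (0 : ℂ))] with z hz
  have : 0 < ‖z‖ := norm_pos_iff.2 hz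
  have hlip : ‖φ z - φ 0‖ ≤ M * ‖z‖ := by simpa [dist_eq_norm] using hφ.dist_le_mul z 0
  calc ‖k z * ((φ z - φ 0) * crDeriv I (logCutoff L) z)‖
      ≤ ‖k z‖ * (M * ‖z‖ * (B / (L * ‖z‖))) := by
        rw [norm_mul, norm_mul]
        gcongr
        exact (hcut L hL z).1
    _ = M * B / L * ‖k z‖ := by field_simp

lemma tendsto_integral_mul_mul_crDeriv_logCutoff (hk : LocallyIntegrable k)
    (hlim : Tendsto (fun L => ∫ z, k z * crDeriv I (logCutoff L) z) atTop (𝓝 0))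
    (hφ : ContDiff ℝ 1 φ) (hφc : HasCompactSupport φ) :
    Tendsto (fun L => ∫ z, k z * (φ z * crDeriv I (logCutoff L) z)) atTop (𝓝 0) := by
  obtain ⟨M, hM⟩ := hφ.lipschitzWith_of_hasCompactSupport hφc one_ne_zero
  have h := (hlim.const_mul (φ 0)).add (tendsto_integral_mul_sub_mul_crDeriv_logCutoff hk hM)
  rw [mul_zero, add_zero] at h
  refine h.congr' ?_
  filter_upwards [eventually_gt_atTop 0] with L hL
  have hcont : Continuous (crDeriv I (logCutoff L)) :=
    continuous_crDeriv (contDiff_logCutoff (n := 1) hL)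
  have hc := hasCompactSupport_crDeriv_logCutoff hL
  rw [← integral_const_mul, ← integral_add
    ((integrable_mul_of_hasCompactSupport hk hcont hc).const_mul _)
    (integrable_mul_of_hasCompactSupport (φ := fun z => (φ z - φ 0) * crDeriv I (logCutoff L) z) hk
      ((hφ.continuous.sub continuous_const).mul hcont) hc.mul_left)]
  congr with z
  ring

lemma tendsto_integral_mul_logCutoff {G : ℂ → ℂ} (hG : Integrable G) :
    Tendsto (fun L => ∫ z, G z * logCutoff L z) atTop (𝓝 (∫ z, G z)) := by
  refine tendsto_integral_filter_of_dominated_convergence (fun z => ‖G z‖) ?_ ?_ hG.norm ?_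
  · filter_upwards [eventually_gt_atTop 0] with L hL
    exact hG.aestronglyMeasurable.mul
      (contDiff_logCutoff (n := 0) hL).continuous.aestronglyMeasurable
  · refine Eventually.of_forall fun L => Eventually.of_forall fun z => ?_
    rw [norm_mul]
    exact mul_le_of_le_one_right (norm_nonneg _) (norm_logCutoff_le_one L z)
  · filter_upwards [Measure.ae_ne volume (0 : ℂ)] with z hz
    simpa using (tendsto_logCutoff hz).const_mul (G z)

lemma integral_mul_crDeriv_of_tendsto_logCutoff (hk : ContDiffOn ℝ 1 k {0}ᶜ)
    (hloc : LocallyIntegrable k) (hC : ∀ z, ‖crDeriv I k z‖ ≤ C)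
    (hlim : Tendsto (fun L => ∫ z, k z * crDeriv I (logCutoff L) z) atTop (𝓝 0))
    (hφ : ContDiff ℝ 1 φ) (hφc : HasCompactSupport φ) :
    ∫ z, k z * crDeriv I φ z = -∫ z, crDeriv I k z * φ z := by
  have hkφ : Integrable fun z => k z * crDeriv I φ z :=
    integrable_mul_of_hasCompactSupport hloc (continuous_crDeriv hφ)
      (hasCompactSupport_crDeriv hφc)
  have hSφ : Integrable fun z => crDeriv I k z * φ z :=
    integrable_mul_of_norm_le (measurable_of_continuousOn_compl_singleton 0
      (continuousOn_crDeriv isOpen_compl_singleton hk)) hC hφ.continuous hφc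
  have hleft := (tendsto_integral_mul_logCutoff hkφ).add
    (tendsto_integral_mul_mul_crDeriv_logCutoff hloc hlim hφ hφc)
  rw [add_zero] at hleft
  refine tendsto_nhds_unique hleft ((tendsto_integral_mul_logCutoff hSφ).neg.congr' ?_)
  filter_upwards [eventually_gt_atTop 0] with L hL
  have hη : ContDiff ℝ 1 (logCutoff L) := contDiff_logCutoff (n := 1) hL
  have hsupp : tsupport (fun z => φ z * logCutoff L z) ⊆ {0}ᶜ := fun z hz h0 =>
    zero_notMem_tsupport_logCutoff hL (h0 ▸ tsupport_mul_subset_right hz)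
  have hparts := integral_mul_crDeriv_of_tsupport_subset (c := I) isOpen_compl_singleton hk
    (hφ.mul hη) hφc.mul_right hsupp
  rw [← integral_add]
  · refine Eq.trans ?_ (hparts.symm.trans ?_)
    · simp only [mul_assoc]
    · congr with z
      rw [crDeriv_mul (hφ.differentiable one_ne_zero z) (hη.differentiable one_ne_zero z)]
      ring
  · exact (integrable_mul_of_hasCompactSupport hloc ((continuous_crDeriv (c := I) hφ).mul
      hη.continuous) (hasCompactSupport_crDeriv hφc).mul_right).congr
      (Eventually.of_forall fun z => (mul_assoc _ _ _).symm)
  · exact integrable_mul_of_hasCompactSupport hloc (hφ.continuous.mul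
      (continuous_crDeriv hη)) hφc.mul_right

end WeakDerivative

section BoundedCRKernel

/-- `f` is an integrable kernel on the plane and `g` is its weak derivative for the operator
`∂₁ + i∂₂`; moreover `g` is integrable and bounded by `C`. The bound on `g` encodes the bounds on
`∂₁K₁ - ∂₂K₂` and `∂₂K₁ + ∂₁K₂` for `f = K₁ + iK₂`. Test functions need no decay since `f` and
`g` are meant to be compactly supported. -/
structure IsBoundedCRKernel (f g : ℂ → ℂ) (C : ℝ) : Prop where
  measurable : Measurable f
  integrable : Integrable f
  measurable_deriv : Measurable g
  integrable_deriv : Integrable g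
  norm_deriv_le : ∀ z, ‖g z‖ ≤ C
  integral_mul_crDeriv : ∀ φ : ℂ → ℂ, ContDiff ℝ 1 φ →
    ∫ z, f z * crDeriv I φ z = -∫ z, g z * φ z

variable {f g χ : ℂ → ℂ} {C C' : ℝ}

lemma isBoundedCRKernel_mul_cutoff (hfm : Measurable f) (hf : LocallyIntegrable f)
    (hgm : Measurable g) (hg : ∀ z, ‖g z‖ ≤ C)
    (hweak : ∀ φ : ℂ → ℂ, ContDiff ℝ 1 φ → HasCompactSupport φ →
      ∫ z, f z * crDeriv I φ z = -∫ z, g z * φ z)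
    (hχ : ContDiff ℝ 1 χ) (hχc : HasCompactSupport χ) (hχ1 : ∀ z, ‖χ z‖ ≤ 1)
    (hfχ : ∀ z, ‖f z * crDeriv I χ z‖ ≤ C') :
    IsBoundedCRKernel (fun z => f z * χ z) (fun z => g z * χ z + f z * crDeriv I χ z)
      (C + C') := by
  have hfψ {ψ : ℂ → ℂ} (hψ : Continuous ψ) (hψc : HasCompactSupport ψ) :
      Integrable fun z => f z * ψ z := integrable_mul_of_hasCompactSupport hf hψ hψc
  have hχ' : Continuous (crDeriv I χ) := continuous_crDeriv hχ
  have hχc' : HasCompactSupport (crDeriv I χ) := hasCompactSupport_crDeriv hχc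
  refine ⟨hfm.mul hχ.continuous.measurable, hfψ hχ.continuous hχc,
    (hgm.mul hχ.continuous.measurable).add (hfm.mul hχ'.measurable),
    (integrable_mul_of_norm_le hgm hg hχ.continuous hχc).add (hfψ hχ' hχc'), fun z => ?_,
    fun φ hφ => ?_⟩
  · refine (norm_add_le _ _).trans (add_le_add ?_ (hfχ z))
    rw [norm_mul]
    exact (mul_le_of_le_one_right (norm_nonneg _) (hχ1 z)).trans (hg z)
  · have h := hweak _ (hχ.mul hφ) hχc.mul_right
    have hprod (z : ℂ) : f z * crDeriv I (fun y => χ y * φ y) z =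
        f z * χ z * crDeriv I φ z + f z * (crDeriv I χ z * φ z) := by
      rw [crDeriv_mul (hχ.differentiable one_ne_zero z) (hφ.differentiable one_ne_zero z)]
      ring
    have hright (z : ℂ) : (g z * χ z + f z * crDeriv I χ z) * φ z =
        g z * (χ z * φ z) + f z * (crDeriv I χ z * φ z) := by ring
    have hint : Integrable fun z => f z * χ z * crDeriv I φ z := by
      simpa only [mul_assoc] using! hfψ (hχ.continuous.mul (continuous_crDeriv hφ)) hχc.mul_right
    have hint' : Integrable fun z => f z * (crDeriv I χ z * φ z) :=
      hfψ (hχ'.mul hφ.continuous) hχc'.mul_right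
    simp only [hprod] at h
    simp only [hright]
    rw [integral_add hint hint'] at h
    rw [integral_add (integrable_mul_of_norm_le hgm hg (hχ.mul hφ).continuous hχc.mul_right)
      hint']
    linear_combination h

lemma exists_isBoundedCRKernel_eqOn {k : ℂ → ℂ} {α β : ℂ} (hk : ContDiffOn ℝ 2 k {0}ᶜ)
    (hloc : LocallyIntegrable k) (hC : ∀ z, ‖crDeriv I k z‖ ≤ C)
    (heq : ∀ z, z ≠ 0 → k z - α * crDeriv (-I) (crDeriv I k) z = β / conj z) {R : ℝ}
    (hR : 0 < R) :
    ∃ (f g : ℂ → ℂ) (C' : ℝ), IsBoundedCRKernel f g C' ∧ EqOn f k (Metric.closedBall 0 R) := by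
  let b : ContDiffBump (0 : ℂ) := ⟨R, R + 1, hR, by linarith⟩
  have hχ : ContDiff ℝ 1 fun z => (b z : ℂ) := Complex.ofRealCLM.contDiff.comp b.contDiff
  have hχc : HasCompactSupport fun z => (b z : ℂ) :=
    b.hasCompactSupport.comp_left Complex.ofReal_zero
  have hχ1 : (fun z => (b z : ℂ)) =ᶠ[𝓝 0] fun _ => 1 :=
    b.eventuallyEq_one.mono fun z hz => by simp [hz]
  have hsupp : tsupport (crDeriv I fun z => (b z : ℂ)) ⊆ {0}ᶜ := by
    rintro z hz rfl
    exact notMem_tsupport_iff_eventuallyEq.2 (crDeriv_eventuallyEq_zero hχ1) hz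
  have hk1 : ContDiffOn ℝ 1 k {0}ᶜ := hk.of_le (by norm_num)
  obtain ⟨C', hC'⟩ := (continuous_mul_of_tsupport_subset isOpen_compl_singleton hk1.continuousOn
    (continuous_crDeriv hχ) hsupp).bounded_above_of_compact_support
    (hasCompactSupport_crDeriv hχc).mul_left
  refine ⟨_, _, _, isBoundedCRKernel_mul_cutoff
    (measurable_of_continuousOn_compl_singleton 0 hk1.continuousOn) hloc
    (measurable_of_continuousOn_compl_singleton 0
      (continuousOn_crDeriv isOpen_compl_singleton hk1)) hC
    (fun φ hφ hφc => integral_mul_crDeriv_of_tendsto_logCutoff hk1 hloc hC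
      (tendsto_integral_mul_crDeriv_logCutoff hk hC heq) hφ hφc) hχ hχc (fun z => ?_) hC',
    fun z hz => ?_⟩
  · rw [Complex.norm_real, norm_of_nonneg b.nonneg]
    exact b.le_one
  · simp [b.one_of_mem_closedBall hz]

end BoundedCRKernel

section JapaneseBracket

variable {E F : Type*} [NormedAddCommGroup E] [NormedAddCommGroup F]

/-- The Japanese bracket `√(1 + ‖z‖²)`, the weight in which decay at infinity is measured. -/
def japanese (z : E) : ℝ := √(1 + ‖z‖ ^ 2)

lemma japanese_sq (z : E) : japanese z ^ 2 = 1 + ‖z‖ ^ 2 := sq_sqrt (by positivity)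

lemma japanese_pos (z : E) : 0 < japanese z := sqrt_pos.2 (by positivity)

lemma continuous_japanese : Continuous (japanese : E → ℝ) := by unfold japanese; fun_prop

lemma japanese_sq_le (z w : E) : japanese z ^ 2 ≤ 2 * japanese w ^ 2 * japanese (z - w) ^ 2 := by
  simp only [japanese_sq]
  have h : ‖z‖ ≤ ‖w‖ + ‖z - w‖ := by simpa using norm_add_le w (z - w)
  nlinarith [norm_nonneg z, norm_nonneg w, norm_nonneg (z - w), sq_nonneg (‖w‖ - ‖z - w‖),
    mul_nonneg (sq_nonneg ‖w‖) (sq_nonneg ‖z - w‖), pow_le_pow_left₀ (norm_nonneg z) h 2]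

variable [NormedSpace ℝ E] [FiniteDimensional ℝ E] [MeasurableSpace E] [BorelSpace E]
  {μ : Measure E} [μ.IsAddHaarMeasure] {m n : ℕ}

lemma integrable_inv_japanese_pow (hn : Module.finrank ℝ E < n) :
    Integrable (fun z : E => (japanese z ^ n)⁻¹) μ := by
  have h := integrable_rpow_neg_one_add_norm_sq (μ := μ) (r := n) (mod_cast hn)
  refine h.congr (Eventually.of_forall fun z => ?_)
  have h₀ : (0 : ℝ) ≤ 1 + ‖z‖ ^ 2 := by positivity
  beta_reduce
  rw [show (-(n : ℝ) / 2) = -(1 / 2 * n) by ring, rpow_neg h₀, rpow_mul h₀, ← sqrt_eq_rpow,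
    rpow_natCast, japanese]

lemma integrable_mul_of_norm_le_japanese {A : Type*} [NormedRing A] {f g : E → A} {B C : ℝ}
    (hmn : Module.finrank ℝ E < m + n) (hf : Continuous f) (hg : Continuous g)
    (hfB : ∀ z, ‖f z‖ ≤ B / japanese z ^ m) (hgC : ∀ z, ‖g z‖ ≤ C / japanese z ^ n) :
    Integrable (fun z => f z * g z) μ := by
  refine ((integrable_inv_japanese_pow hmn).const_mul (B * C)).mono'
    (hf.mul hg).aestronglyMeasurable (Eventually.of_forall fun z => ?_)
  calc ‖f z * g z‖ ≤ B / japanese z ^ m * (C / japanese z ^ n) :=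
        (norm_mul_le _ _).trans (mul_le_mul (hfB z) (hgC z) (norm_nonneg _)
          ((norm_nonneg _).trans (hfB z)))
    _ = B * C * (japanese z ^ (m + n))⁻¹ := by
        rw [div_mul_div_comm, ← pow_add, div_eq_mul_inv]

end JapaneseBracket

/-! ### The regularised Cauchy kernel -/

section RegularisedCauchyKernel

/-- The Cauchy kernel `1 / z` regularised at scale `δ`: it is smooth on the whole plane and tends
to `1 / z` as `δ → 0`. -/
def regCauchy (δ : ℝ) (z : ℂ) : ℂ := conj z / (z * conj z + (δ : ℂ) ^ 2)

/-- The approximate identity, of total mass `mollifierMass` instead of `1`, to which `∂_z̄` maps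
`regCauchy δ`. -/
def mollifier (δ : ℝ) (z : ℂ) : ℝ := δ ^ 2 / (‖z‖ ^ 2 + δ ^ 2) ^ 2

/-- The integral of `mollifier δ`, which does not depend on `δ > 0`. -/
def mollifierMass : ℝ := ∫ z, mollifier 1 z

variable {δ : ℝ}

lemma mul_conj_add_sq (δ : ℝ) (z : ℂ) :
    z * conj z + (δ : ℂ) ^ 2 = ((‖z‖ ^ 2 + δ ^ 2 : ℝ) : ℂ) := by
  rw [Complex.mul_conj, Complex.normSq_eq_norm_sq]; push_cast; ring

lemma mul_conj_add_sq_ne_zero (hδ : 0 < δ) (z : ℂ) : z * conj z + (δ : ℂ) ^ 2 ≠ 0 := by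
  rw [mul_conj_add_sq]
  exact_mod_cast (by positivity : 0 < ‖z‖ ^ 2 + δ ^ 2).ne'

lemma regCauchy_neg (δ : ℝ) (z : ℂ) : regCauchy δ (-z) = -regCauchy δ z := by
  simp [regCauchy, neg_div]

lemma contDiff_regCauchy (hδ : 0 < δ) {n : WithTop ℕ∞} : ContDiff ℝ n (regCauchy δ) := by
  have h : ContDiff ℝ n fun z : ℂ => conj z := Complex.conjCLE.contDiff
  unfold regCauchy
  simp only [div_eq_mul_inv]
  exact h.mul (((contDiff_id.mul h).add contDiff_const).inv (mul_conj_add_sq_ne_zero hδ))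

lemma fderiv_regCauchy (hδ : 0 < δ) (z v : ℂ) :
    fderiv ℝ (regCauchy δ) z v =
      ((δ : ℂ) ^ 2 * conj v - conj z ^ 2 * v) / (z * conj z + (δ : ℂ) ^ 2) ^ 2 := by
  have hN := mul_conj_add_sq_ne_zero hδ z
  have hconj : HasFDerivAt (fun y : ℂ => conj y) (Complex.conjCLE : ℂ →L[ℝ] ℂ) z :=
    Complex.conjCLE.hasFDerivAt
  have hden : HasFDerivAt (fun y : ℂ => y * conj y + (δ : ℂ) ^ 2) _ z :=
    ((hasFDerivAt_id z).mul hconj).add_const ((δ : ℂ) ^ 2)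
  have hk : HasFDerivAt (regCauchy δ) _ z :=
    hconj.mul ((hasFDerivAt_inv' (𝕜 := ℝ) hN).comp z hden)
  rw [hk.fderiv]
  simp only [id_eq, add_apply, smul_apply, neg_apply, ContinuousLinearMap.comp_apply,
    ContinuousLinearMap.mulLeftRight_apply, ContinuousLinearEquiv.coe_coe, smul_eq_mul,
    Complex.conjCLE_apply, ContinuousLinearMap.id_apply]
  field_simp
  ring

lemma norm_fderiv_regCauchy_le (hδ : 0 < δ) (z v : ℂ) :
    ‖fderiv ℝ (regCauchy δ) z v‖ ≤ ‖v‖ / (‖z‖ ^ 2 + δ ^ 2) := by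
  have hN : 0 < ‖z‖ ^ 2 + δ ^ 2 := by positivity
  have hnum : ‖(δ : ℂ) ^ 2 * conj v - conj z ^ 2 * v‖ ≤ (‖z‖ ^ 2 + δ ^ 2) * ‖v‖ := by
    refine (norm_sub_le _ _).trans_eq ?_
    simp only [norm_mul, norm_pow, RCLike.norm_conj, Complex.norm_real, Real.norm_eq_abs, sq_abs]
    ring
  rw [fderiv_regCauchy hδ, mul_conj_add_sq, norm_div, norm_pow, Complex.norm_real,
    Real.norm_of_nonneg hN.le, div_le_div_iff₀ (by positivity) hN]
  calc ‖(δ : ℂ) ^ 2 * conj v - conj z ^ 2 * v‖ * (‖z‖ ^ 2 + δ ^ 2)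
      ≤ (‖z‖ ^ 2 + δ ^ 2) * ‖v‖ * (‖z‖ ^ 2 + δ ^ 2) := by gcongr
    _ = ‖v‖ * (‖z‖ ^ 2 + δ ^ 2) ^ 2 := by ring

lemma crDeriv_I_regCauchy (hδ : 0 < δ) (z : ℂ) :
    crDeriv I (regCauchy δ) z = 2 * (mollifier δ z : ℂ) := by
  simp only [crDeriv, fderiv_regCauchy hδ, mollifier, Complex.ofReal_div, Complex.ofReal_pow,
    ← mul_conj_add_sq, map_one, Complex.conj_I]
  rw [mul_div_assoc', ← mul_div_assoc, ← add_div]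
  congr 1
  linear_combination -((δ : ℂ) ^ 2 + conj z ^ 2) * Complex.I_sq

lemma norm_regCauchy (δ : ℝ) (z : ℂ) : ‖regCauchy δ z‖ = ‖z‖ / (‖z‖ ^ 2 + δ ^ 2) := by
  rw [regCauchy, mul_conj_add_sq, norm_div, Complex.norm_real, Real.norm_of_nonneg (by positivity),
    RCLike.norm_conj]

lemma norm_regCauchy_le (hδ : 0 < δ) (z : ℂ) : ‖regCauchy δ z‖ ≤ 1 / (2 * δ) := by
  rw [norm_regCauchy, div_le_div_iff₀ (by positivity) (by positivity)]
  nlinarith [sq_nonneg (‖z‖ - δ)]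

lemma norm_regCauchy_le_inv (δ : ℝ) (z : ℂ) : ‖regCauchy δ z‖ ≤ ‖z‖⁻¹ := by
  rw [norm_regCauchy]
  obtain h | h := (norm_nonneg z).eq_or_lt
  · simp [← h]
  · rw [inv_eq_one_div, div_le_div_iff₀ (by positivity) h]
    nlinarith [sq_nonneg δ]

lemma mollifier_neg (δ : ℝ) (z : ℂ) : mollifier δ (-z) = mollifier δ z := by
  simp [mollifier]

lemma mollifier_nonneg (δ : ℝ) (z : ℂ) : 0 ≤ mollifier δ z := by
  unfold mollifier; positivity

lemma continuous_mollifier (hδ : 0 < δ) : Continuous (mollifier δ) :=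
  continuous_const.div (by fun_prop) fun z => by positivity

lemma mollifier_one (z : ℂ) : mollifier 1 z = (japanese z ^ 4)⁻¹ := by
  rw [show japanese z ^ 4 = (japanese z ^ 2) ^ 2 by ring, japanese_sq]
  simp [mollifier, add_comm]

lemma mollifier_smul (hδ : 0 < δ) (z : ℂ) :
    mollifier δ (δ • z) = (δ ^ 2)⁻¹ * mollifier 1 z := by
  have : (0 : ℝ) < ‖z‖ ^ 2 + 1 := by positivity
  rw [mollifier, mollifier, norm_smul, Real.norm_of_nonneg hδ.le]
  field_simp

lemma integrable_mollifier (hδ : 0 < δ) : Integrable (mollifier δ) := by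
  rw [← integrable_comp_smul_iff volume _ hδ.ne']
  simp only [mollifier_smul hδ, mollifier_one]
  exact (integrable_inv_japanese_pow (by simp)).const_mul _

lemma integral_mollifier_mul (hδ : 0 < δ) (F : ℂ → ℝ) :
    ∫ z, mollifier δ z * F z = ∫ z, mollifier 1 z * F (δ • z) := by
  have h := Measure.integral_comp_smul (volume : Measure ℂ) (fun z => mollifier δ z * F z) δ
  rw [Complex.finrank_real_complex, abs_of_pos (by positivity)] at h
  simp only [mollifier_smul hδ, mul_assoc, integral_const_mul, smul_eq_mul] at h
  exact (mul_left_cancel₀ (by positivity) h).symm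

lemma integral_mollifier (hδ : 0 < δ) : ∫ z, mollifier δ z = mollifierMass := by
  simpa [mollifierMass] using integral_mollifier_mul hδ fun _ => 1

lemma mollifierMass_pos : 0 < mollifierMass := by
  refine (integral_pos_iff_support_of_nonneg (mollifier_nonneg 1)
    (integrable_mollifier one_pos)).2 ?_
  have h : Function.support (mollifier 1) = univ := by
    ext z
    simp only [Function.mem_support, mem_univ, iff_true, mollifier_one]
    exact (inv_pos.2 (pow_pos (japanese_pos z) 4)).ne'
  rw [h]
  exact Measure.measure_univ_pos.2 (NeZero.ne _)

end RegularisedCauchyKernel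

section TranslationModulus

/-- The `L¹` modulus of continuity of `f` under translations. -/
def translationModulus {E F : Type*} [Sub E] [MeasureSpace E] [NormedAddCommGroup F] (f : E → F)
    (ζ : E) : ℝ := ∫ x, ‖f (x - ζ) - f x‖

lemma translationModulus_nonneg {E F : Type*} [Sub E] [MeasureSpace E] [NormedAddCommGroup F]
    (f : E → F) (ζ : E) : 0 ≤ translationModulus f ζ :=
  integral_nonneg fun _ => norm_nonneg _

section

variable {E F : Type*} [NormedAddCommGroup E] [MeasureSpace E] [BorelSpace E]
  [(volume : Measure E).IsAddLeftInvariant] [NormedAddCommGroup F] {f : E → F}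

lemma translationModulus_eq_norm (hf : Integrable f) (ζ : E) :
    translationModulus f ζ = ‖(DomAddAct.mk (-ζ) +ᵥ hf.toL1) - hf.toL1‖ := by
  rw [L1.norm_eq_integral_norm]
  refine integral_congr_ae ?_
  have hvadd : ∀ᵐ x, (DomAddAct.mk (-ζ) +ᵥ hf.toL1) x = f (x - ζ) := by
    filter_upwards [DomAddAct.vadd_Lp_ae_eq (DomAddAct.mk (-ζ)) hf.toL1,
      (measurePreserving_vadd (-ζ) (volume : Measure E)).quasiMeasurePreserving.ae
        (Integrable.coeFn_toL1 hf)] with x h₁ h₂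
    rw [h₁, sub_eq_neg_add]
    exact h₂
  filter_upwards [hvadd, Integrable.coeFn_toL1 hf,
    Lp.coeFn_sub (DomAddAct.mk (-ζ) +ᵥ hf.toL1) hf.toL1] with x h₁ h₂ h₃
  rw [h₃, Pi.sub_apply, h₁, h₂]

lemma translationModulus_le (hf : Integrable f) (ζ : E) :
    translationModulus f ζ ≤ 2 * ∫ x, ‖f x‖ := by
  rw [translationModulus_eq_norm hf, two_mul, ← L1.norm_of_fun_eq_integral_norm hf]
  exact (norm_sub_le _ _).trans_eq (by rw [DomAddAct.norm_vadd_Lp])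

lemma continuous_translationModulus [IsLocallyFiniteMeasure (volume : Measure E)]
    [(volume : Measure E).InnerRegularCompactLTTop] (hf : Integrable f) :
    Continuous (translationModulus f) := by
  have : Fact ((1 : ENNReal) ≠ ⊤) := ⟨ENNReal.one_ne_top⟩
  rw [funext (translationModulus_eq_norm hf)]
  exact (((DomAddAct.mkHomeomorph.continuous.comp continuous_neg).vadd continuous_const).sub
    continuous_const).norm

end

variable {F : Type*} [NormedAddCommGroup F] {f : ℂ → F} {δ : ℝ}

/-- The translation modulus of `f` averaged against `mollifier δ`; it controls the commutators of
mollification with multiplication by `f`. -/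
def avgTranslationModulus (f : ℂ → F) (δ : ℝ) : ℝ := ∫ ζ, mollifier δ ζ * translationModulus f ζ

lemma avgTranslationModulus_nonneg (f : ℂ → F) (δ : ℝ) : 0 ≤ avgTranslationModulus f δ :=
  integral_nonneg fun ζ => mul_nonneg (mollifier_nonneg δ ζ) (translationModulus_nonneg f ζ)

lemma tendsto_avgTranslationModulus (hf : Integrable f) :
    Tendsto (avgTranslationModulus f) (𝓝[>] 0) (𝓝 0) := by
  have hcont := continuous_translationModulus hf
  have h : Tendsto (fun δ : ℝ => ∫ z, mollifier 1 z * translationModulus f (δ • z)) (𝓝[>] 0)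
      (𝓝 (∫ _ : ℂ, (0 : ℝ))) := by
    refine tendsto_integral_filter_of_dominated_convergence
      (fun z => mollifier 1 z * (2 * ∫ x, ‖f x‖)) (Eventually.of_forall fun δ => ?_)
      (Eventually.of_forall fun _ => Eventually.of_forall fun _ => ?_)
      ((integrable_mollifier one_pos).mul_const _) (Eventually.of_forall fun _ => ?_)
    · exact ((continuous_mollifier one_pos).mul
        (hcont.comp (continuous_const_smul δ))).aestronglyMeasurable
    · rw [norm_of_nonneg (mul_nonneg (mollifier_nonneg _ _) (translationModulus_nonneg _ _))]
      exact mul_le_mul_of_nonneg_left (translationModulus_le hf _) (mollifier_nonneg _ _)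
    · rename_i z
      have h₀ : Tendsto (fun δ : ℝ => translationModulus f (δ • z)) (𝓝[>] 0) (𝓝 0) := by
        have := (hcont.comp (continuous_id.smul continuous_const)).tendsto' (0 : ℝ) 0
          (by simp [translationModulus] : translationModulus f ((0 : ℝ) • z) = 0)
        exact this.mono_left nhdsWithin_le_nhds
      simpa using h₀.const_mul (mollifier 1 z)
  rw [integral_zero] at h
  refine h.congr' ?_
  filter_upwards [self_mem_nhdsWithin] with δ hδ
  exact (integral_mollifier_mul hδ _).symm

section

variable {E : Type*} [AddCommGroup E] [MeasureSpace E] [MeasurableAdd₂ E] [MeasurableNeg E]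
  [SFinite (volume : Measure E)] [(volume : Measure E).IsAddLeftInvariant]
  [(volume : Measure E).IsNegInvariant]

lemma measurePreserving_fst_sub : MeasurePreserving (fun x : E × E => (x.1, x.1 - x.2)) :=
  (MeasurePreserving.id volume).skew_product (g := fun x y => x - y)
    (measurable_fst.sub measurable_snd)
    (Eventually.of_forall fun x => Measure.map_sub_left_eq_self volume x)

lemma integrable_fst_mul_sub {p P : E → ℝ} (hp : Integrable p) (hP : Integrable P) :
    Integrable fun x : E × E => p x.1 * P (x.1 - x.2) :=
  measurePreserving_fst_sub.integrable_comp_of_integrable (hp.mul_prod hP)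

lemma integrable_snd_mul_sub {p P : E → ℝ} (hp : Integrable p) (hP : Integrable P)
    (heven : ∀ z, P (-z) = P z) : Integrable fun x : E × E => p x.2 * P (x.1 - x.2) := by
  refine (integrable_fst_mul_sub hp hP).swap.congr (Eventually.of_forall fun x => ?_)
  simp only [Function.comp, Prod.fst_swap, Prod.snd_swap]
  rw [← heven, neg_sub]

end

lemma integrable_norm_sub_mul_mollifier (hf : Integrable f) (hδ : 0 < δ) :
    Integrable fun p : ℂ × ℂ => ‖f p.1 - f p.2‖ * mollifier δ (p.1 - p.2) := by
  have hm := integrable_mollifier hδ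
  refine ((integrable_fst_mul_sub hf.norm hm).add
    (integrable_snd_mul_sub hf.norm hm (mollifier_neg δ))).mono' ?_ ?_
  · exact (hf.1.comp_fst.sub hf.1.comp_snd).norm.mul
      ((continuous_mollifier hδ).comp (continuous_fst.sub continuous_snd)).aestronglyMeasurable
  · filter_upwards with p
    rw [norm_of_nonneg (mul_nonneg (norm_nonneg _) (mollifier_nonneg _ _)), Pi.add_apply,
      ← add_mul]
    exact mul_le_mul_of_nonneg_right (norm_sub_le _ _) (mollifier_nonneg _ _)

lemma integral_norm_sub_mul_mollifier (hf : Integrable f) (hδ : 0 < δ) :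
    ∫ p : ℂ × ℂ, ‖f p.1 - f p.2‖ * mollifier δ (p.1 - p.2) = avgTranslationModulus f δ := by
  have h := integrable_norm_sub_mul_mollifier hf hδ
  have h' := measurePreserving_fst_sub.integrable_comp_of_integrable h
  simp only [Function.comp_def, sub_sub_cancel] at h'
  calc ∫ p : ℂ × ℂ, ‖f p.1 - f p.2‖ * mollifier δ (p.1 - p.2)
      = ∫ x : ℂ, ∫ y : ℂ, ‖f x - f y‖ * mollifier δ (x - y) := integral_prod _ h
    _ = ∫ x : ℂ, ∫ ζ : ℂ, ‖f x - f (x - ζ)‖ * mollifier δ ζ := by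
        congr 1 with x
        rw [← integral_sub_left_eq_self _ volume x]
        simp only [sub_sub_cancel]
    _ = ∫ ζ : ℂ, ∫ x : ℂ, ‖f x - f (x - ζ)‖ * mollifier δ ζ := integral_integral_swap h'
    _ = avgTranslationModulus f δ := by
        unfold avgTranslationModulus translationModulus
        congr 1 with ζ
        rw [integral_mul_const, mul_comm]
        simp only [norm_sub_rev]

end TranslationModulus

section Convolution

/-- The convolution `k ∗ q` of a complex kernel with a real density, through which velocities are
recovered from vorticities. -/
def conv (k : ℂ → ℂ) (q : ℂ → ℝ) (z : ℂ) : ℂ := ∫ w, k (z - w) * (q w : ℂ)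

variable {k : ℂ → ℂ} {q : ℂ → ℝ} {B B' : ℝ}

lemma integrable_smul_comp_sub {E : Type*} [NormedAddCommGroup E] [NormedSpace ℂ E] {A : ℂ → E}
    (hA : Continuous A) (hB : ∀ z, ‖A z‖ ≤ B) (hq : Integrable q) (z : ℂ) :
    Integrable fun w => (q w : ℂ) • A (z - w) :=
  (hq.ofReal (𝕜 := ℂ)).smul_bdd B (hA.comp (by fun_prop)).aestronglyMeasurable
    (Eventually.of_forall fun _ => hB _)

lemma integrable_comp_sub_mul (hk : Continuous k) (hB : ∀ z, ‖k z‖ ≤ B) (hq : Integrable q)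
    (z : ℂ) : Integrable fun w => k (z - w) * (q w : ℂ) := by
  simpa only [smul_eq_mul, mul_comm] using integrable_smul_comp_sub hk hB hq z

lemma hasFDerivAt_conv (hk : ContDiff ℝ 1 k) (hB : ∀ z, ‖k z‖ ≤ B)
    (hB' : ∀ z, ‖fderiv ℝ k z‖ ≤ B') (hq : Integrable q) (z : ℂ) :
    HasFDerivAt (conv k q) (∫ w, (q w : ℂ) • fderiv ℝ k (z - w)) z := by
  refine hasFDerivAt_integral_of_dominated_of_fderiv_le (F := fun z w => k (z - w) * (q w : ℂ))
    (F' := fun z w => (q w : ℂ) • fderiv ℝ k (z - w)) (s := univ) (bound := fun w => |q w| * B')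
    univ_mem
    (Eventually.of_forall fun z =>
      (integrable_comp_sub_mul hk.continuous hB hq z).aestronglyMeasurable)
    (integrable_comp_sub_mul hk.continuous hB hq z)
    (integrable_smul_comp_sub (hk.continuous_fderiv one_ne_zero) hB' hq z).aestronglyMeasurable
    ?_ (hq.abs.mul_const _) ?_
  · filter_upwards with w x _
    rw [norm_smul, Complex.norm_real, Real.norm_eq_abs]
    gcongr
    exact hB' _
  · filter_upwards with w x _
    exact (((hk.differentiable one_ne_zero (x - w)).hasFDerivAt.comp x
      ((hasFDerivAt_id x).sub_const w)).mul_const (q w : ℂ))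

lemma contDiff_conv (hk : ContDiff ℝ 1 k) (hB : ∀ z, ‖k z‖ ≤ B)
    (hB' : ∀ z, ‖fderiv ℝ k z‖ ≤ B') (hq : Integrable q) : ContDiff ℝ 1 (conv k q) := by
  have hk' := hk.continuous_fderiv one_ne_zero
  rw [contDiff_one_iff_fderiv]
  refine ⟨fun z => (hasFDerivAt_conv hk hB hB' hq z).differentiableAt, ?_⟩
  rw [funext fun z => (hasFDerivAt_conv hk hB hB' hq z).fderiv]
  refine continuous_of_dominated (bound := fun w => |q w| * B')
    (fun z => (integrable_smul_comp_sub hk' hB' hq z).aestronglyMeasurable)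
    (fun z => Eventually.of_forall fun w => ?_) (hq.abs.mul_const _)
    (Eventually.of_forall fun w => by fun_prop)
  rw [norm_smul, Complex.norm_real, Real.norm_eq_abs]
  gcongr
  exact hB' _

lemma fderiv_conv_apply (hk : ContDiff ℝ 1 k) (hB : ∀ z, ‖k z‖ ≤ B)
    (hB' : ∀ z, ‖fderiv ℝ k z‖ ≤ B') (hq : Integrable q) (z v : ℂ) :
    fderiv ℝ (conv k q) z v = ∫ w, (q w : ℂ) * fderiv ℝ k (z - w) v := by
  rw [(hasFDerivAt_conv hk hB hB' hq z).fderiv, ContinuousLinearMap.integral_apply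
    (integrable_smul_comp_sub (hk.continuous_fderiv one_ne_zero) hB' hq z)]
  rfl

lemma crDeriv_conv (hk : ContDiff ℝ 1 k) (hB : ∀ z, ‖k z‖ ≤ B)
    (hB' : ∀ z, ‖fderiv ℝ k z‖ ≤ B') (hq : Integrable q) (c z : ℂ) :
    crDeriv c (conv k q) z = conv (crDeriv c k) q z := by
  have hi (v : ℂ) : Integrable fun w => (q w : ℂ) * fderiv ℝ k (z - w) v :=
    (integrable_smul_comp_sub (hk.continuous_fderiv one_ne_zero) hB' hq
      z).apply_continuousLinearMap v
  simp only [crDeriv, fderiv_conv_apply hk hB hB' hq, conv]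
  rw [← integral_const_mul, ← integral_add (hi 1) ((hi I).const_mul c)]
  congr 1 with w
  ring

end Convolution

section RegularisedVelocity

/-- The velocity generated by the vorticity `q` through the regularised Cauchy kernel. -/
def regVelocity (δ : ℝ) (q : ℂ → ℝ) : ℂ → ℂ := conv (regCauchy δ) q

/-- Convolution with `mollifier δ`. -/
def mollify {E : Type*} [NormedAddCommGroup E] [NormedSpace ℝ E] (δ : ℝ) (A : ℂ → E) (z : ℂ) : E :=
  ∫ w, mollifier δ (z - w) • A w

variable {δ : ℝ} {q : ℂ → ℝ}

lemma opNorm_fderiv_regCauchy_le (hδ : 0 < δ) (z : ℂ) :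
    ‖fderiv ℝ (regCauchy δ) z‖ ≤ 1 / δ ^ 2 := by
  refine ContinuousLinearMap.opNorm_le_bound _ (by positivity) fun v => ?_
  refine (norm_fderiv_regCauchy_le hδ z v).trans ?_
  rw [div_mul_eq_mul_div, one_mul]
  gcongr
  exact le_add_of_nonneg_left (sq_nonneg _)

lemma contDiff_regVelocity (hδ : 0 < δ) (hq : Integrable q) : ContDiff ℝ 1 (regVelocity δ q) :=
  contDiff_conv (contDiff_regCauchy hδ) (norm_regCauchy_le hδ) (opNorm_fderiv_regCauchy_le hδ) hq

lemma crDeriv_I_regVelocity (hδ : 0 < δ) (hq : Integrable q) (z : ℂ) :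
    crDeriv I (regVelocity δ q) z = 2 * ((mollify δ q z : ℝ) : ℂ) := by
  rw [regVelocity, crDeriv_conv (contDiff_regCauchy hδ) (norm_regCauchy_le hδ)
    (opNorm_fderiv_regCauchy_le hδ) hq, conv, mollify, ← integral_complex_ofReal,
    ← integral_const_mul]
  simp only [crDeriv_I_regCauchy hδ, smul_eq_mul, Complex.ofReal_mul, mul_assoc]

lemma inv_norm_sub_sq_add_le (hδ : 0 < δ) (hδ₁ : δ ≤ 1) (z w : ℂ) :
    (‖z - w‖ ^ 2 + δ ^ 2)⁻¹ ≤ 2 * japanese w ^ 2 / δ ^ 2 / japanese z ^ 2 := by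
  have hz := japanese_pos z
  have hw := japanese_pos w
  have h : δ ^ 2 * japanese (z - w) ^ 2 ≤ ‖z - w‖ ^ 2 + δ ^ 2 := by
    rw [japanese_sq]
    nlinarith [sq_nonneg ‖z - w‖, pow_le_one₀ hδ.le hδ₁ (n := 2)]
  rw [div_div, inv_eq_one_div, div_le_div_iff₀ (by positivity) (by positivity), one_mul]
  calc δ ^ 2 * japanese z ^ 2 ≤ δ ^ 2 * (2 * japanese w ^ 2 * japanese (z - w) ^ 2) := by
        gcongr; exact japanese_sq_le z w
    _ = 2 * japanese w ^ 2 * (δ ^ 2 * japanese (z - w) ^ 2) := by ring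
    _ ≤ 2 * japanese w ^ 2 * (‖z - w‖ ^ 2 + δ ^ 2) := by gcongr

lemma norm_fderiv_regCauchy_sub_le (hδ : 0 < δ) (hδ₁ : δ ≤ 1) (z w v : ℂ) :
    ‖fderiv ℝ (regCauchy δ) (z - w) v‖ ≤ 2 * japanese w ^ 2 / δ ^ 2 * ‖v‖ / japanese z ^ 2 := by
  calc ‖fderiv ℝ (regCauchy δ) (z - w) v‖ ≤ ‖v‖ * (‖z - w‖ ^ 2 + δ ^ 2)⁻¹ :=
        (norm_fderiv_regCauchy_le hδ _ _).trans_eq (div_eq_mul_inv _ _)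
    _ ≤ ‖v‖ * (2 * japanese w ^ 2 / δ ^ 2 / japanese z ^ 2) := by
        gcongr; exact inv_norm_sub_sq_add_le hδ hδ₁ z w
    _ = 2 * japanese w ^ 2 / δ ^ 2 * ‖v‖ / japanese z ^ 2 := by ring

lemma norm_regCauchy_sub_le (hδ : 0 < δ) (hδ₁ : δ ≤ 1) (z w : ℂ) :
    ‖regCauchy δ (z - w)‖ ≤ 2 * japanese w / δ / japanese z := by
  have hz := japanese_pos z
  have hw := japanese_pos w
  refine (sq_le_sq₀ (norm_nonneg _) (by positivity)).1 ?_
  calc ‖regCauchy δ (z - w)‖ ^ 2 = ‖z - w‖ ^ 2 / (‖z - w‖ ^ 2 + δ ^ 2) ^ 2 := by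
        rw [norm_regCauchy, div_pow]
    _ ≤ (‖z - w‖ ^ 2 + δ ^ 2)⁻¹ := by
        rw [inv_eq_one_div, div_le_div_iff₀ (by positivity) (by positivity)]
        nlinarith [sq_nonneg δ]
    _ ≤ 2 * japanese w ^ 2 / δ ^ 2 / japanese z ^ 2 := inv_norm_sub_sq_add_le hδ hδ₁ z w
    _ ≤ 4 * japanese w ^ 2 / δ ^ 2 / japanese z ^ 2 := by gcongr; norm_num
    _ = (2 * japanese w / δ / japanese z) ^ 2 := by ring

lemma norm_fderiv_regVelocity_le (hδ : 0 < δ) (hδ₁ : δ ≤ 1) (hq : Integrable q)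
    (hqw : Integrable fun w => japanese w ^ 2 * |q w|) (z v : ℂ) :
    ‖fderiv ℝ (regVelocity δ q) z v‖ ≤
      2 / δ ^ 2 * ‖v‖ * (∫ w, japanese w ^ 2 * |q w|) / japanese z ^ 2 := by
  rw [regVelocity, fderiv_conv_apply (contDiff_regCauchy hδ) (norm_regCauchy_le hδ)
    (opNorm_fderiv_regCauchy_le hδ) hq, ← integral_const_mul, ← integral_div]
  refine norm_integral_le_of_norm_le ((hqw.const_mul _).div_const _)
    (Eventually.of_forall fun w => ?_)
  rw [norm_mul, Complex.norm_real, Real.norm_eq_abs]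
  calc |q w| * ‖fderiv ℝ (regCauchy δ) (z - w) v‖
      ≤ |q w| * (2 * japanese w ^ 2 / δ ^ 2 * ‖v‖ / japanese z ^ 2) := by
        gcongr; exact norm_fderiv_regCauchy_sub_le hδ hδ₁ z w v
    _ = 2 / δ ^ 2 * ‖v‖ * (japanese w ^ 2 * |q w|) / japanese z ^ 2 := by ring

end RegularisedVelocity

section IntegrationByParts

/-- The real part of `e` times the regularised Cauchy kernel centred at `w`; it is the test
function against which `∂_z̄` of the regularised velocity is integrated. -/
def regCauchyRe (δ : ℝ) (w e z : ℂ) : ℂ := ((e * regCauchy δ (z - w)).re : ℂ)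

variable {δ : ℝ} {q : ℂ → ℝ}

lemma contDiff_regCauchyRe (hδ : 0 < δ) (w e : ℂ) : ContDiff ℝ 1 (regCauchyRe δ w e) :=
  (Complex.ofRealCLM.comp Complex.reCLM).contDiff.comp
    (contDiff_const.mul ((contDiff_regCauchy hδ).comp (contDiff_id.sub contDiff_const)))

lemma fderiv_regCauchyRe (hδ : 0 < δ) (w e z v : ℂ) :
    fderiv ℝ (regCauchyRe δ w e) z v = ((e * fderiv ℝ (regCauchy δ) (z - w) v).re : ℂ) := by
  have hk : HasFDerivAt (regCauchy δ) (fderiv ℝ (regCauchy δ) (z - w)) (z - w) :=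
    ((contDiff_regCauchy hδ (n := 1)).differentiable one_ne_zero _).hasFDerivAt
  have h : HasFDerivAt (regCauchyRe δ w e) _ z :=
    (Complex.ofRealCLM.comp Complex.reCLM).hasFDerivAt.comp z
      ((hk.comp z ((hasFDerivAt_id z).sub_const w)).const_mul e)
  rw [h.fderiv]
  simp

lemma crDeriv_I_regCauchyRe (hδ : 0 < δ) (w e z : ℂ) :
    crDeriv I (regCauchyRe δ w e) z = conj (fderiv ℝ (regCauchy δ) (z - w) e) := by
  have hN := mul_conj_add_sq_ne_zero hδ (z - w)
  simp only [crDeriv, fderiv_regCauchyRe hδ, fderiv_regCauchy hδ, Complex.re_eq_add_conj]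
  generalize z - w = y at hN
  simp only [map_mul, map_div₀, map_sub, map_add, map_pow, Complex.conj_conj, Complex.conj_ofReal,
    Complex.conj_I, map_one, map_neg]
  rw [mul_comm (conj y) y]
  generalize y * conj y + (δ : ℂ) ^ 2 = n at hN
  field_simp
  linear_combination
    (-e * δ ^ 2 - e * (conj y) ^ 2 + conj e * δ ^ 2 + conj e * y ^ 2) * Complex.I_sq

lemma norm_regCauchyRe_le (hδ : 0 < δ) (hδ₁ : δ ≤ 1) (w e z : ℂ) :
    ‖regCauchyRe δ w e z‖ ≤ ‖e‖ * (2 * japanese w / δ) / japanese z ^ 1 := by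
  rw [regCauchyRe, Complex.norm_real, pow_one, mul_div_assoc]
  refine (Complex.abs_re_le_norm _).trans ?_
  rw [norm_mul]
  gcongr
  exact norm_regCauchy_sub_le hδ hδ₁ z w

lemma norm_fderiv_regCauchyRe_le (hδ : 0 < δ) (hδ₁ : δ ≤ 1) (w e z v : ℂ) :
    ‖fderiv ℝ (regCauchyRe δ w e) z v‖ ≤
      ‖e‖ * (2 * japanese w ^ 2 / δ ^ 2 * ‖v‖) / japanese z ^ 2 := by
  rw [fderiv_regCauchyRe hδ, Complex.norm_real, mul_div_assoc]
  refine (Complex.abs_re_le_norm _).trans ?_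
  rw [norm_mul]
  gcongr
  exact norm_fderiv_regCauchy_sub_le hδ hδ₁ z w v

lemma re_integral_conj_regVelocity_mul (hδ : 0 < δ) (hδ₁ : δ ≤ 1) (hq : Integrable q)
    (hqw : Integrable fun w => japanese w ^ 2 * |q w|) {C : ℝ}
    (hV : ∀ z, ‖regVelocity δ q z‖ ≤ C / japanese z ^ 2) (w e : ℂ) :
    (∫ z, conj (regVelocity δ q z) * fderiv ℝ (regCauchy δ) (z - w) e).re =
      -2 * ∫ z, mollify δ q z * (e * regCauchy δ (z - w)).re := by
  have hVc : ContDiff ℝ 1 (regVelocity δ q) := contDiff_regVelocity hδ hq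
  have hpc := contDiff_regCauchyRe hδ w e
  have := hVc.continuous_fderiv one_ne_zero
  have := hpc.continuous_fderiv one_ne_zero
  have key := integral_mul_crDeriv_of_integrable (c := I)
    (fun z _ => hVc.differentiable one_ne_zero z) (fun z _ => hpc.differentiable one_ne_zero z)
    (integrable_mul_of_norm_le_japanese (by simp) hVc.continuous hpc.continuous hV
      (norm_regCauchyRe_le hδ hδ₁ w e))
    (fun v => integrable_mul_of_norm_le_japanese (by simp) hVc.continuous (by fun_prop) hV
      fun z => norm_fderiv_regCauchyRe_le hδ hδ₁ w e z v)
    (fun v => integrable_mul_of_norm_le_japanese (by simp) (by fun_prop) hpc.continuous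
      (fun z => norm_fderiv_regVelocity_le hδ hδ₁ hq hqw z v) (norm_regCauchyRe_le hδ hδ₁ w e))
  have hleft (z : ℂ) : regVelocity δ q z * crDeriv I (regCauchyRe δ w e) z =
      conj (conj (regVelocity δ q z) * fderiv ℝ (regCauchy δ) (z - w) e) := by
    rw [crDeriv_I_regCauchyRe hδ, map_mul, Complex.conj_conj]
  have hright (z : ℂ) : crDeriv I (regVelocity δ q) z * regCauchyRe δ w e z =
      ((2 * (mollify δ q z * (e * regCauchy δ (z - w)).re) : ℝ) : ℂ) := by
    rw [crDeriv_I_regVelocity hδ hq, regCauchyRe]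
    push_cast
    ring
  simp only [hleft, hright] at key
  rw [integral_conj, integral_complex_ofReal, integral_const_mul] at key
  simpa using congrArg Complex.re key

end IntegrationByParts

/-! ### Bounded vorticities and their velocities -/

section BoundedVorticity

/-- The vorticity class `L¹ ∩ L^∞`: functions whose `L¹` and `L^∞` norms are at most `M`. -/
structure IsBddVorticity (M : ℝ) (q : ℂ → ℝ) : Prop where
  measurable : Measurable q
  bound : ∀ z, |q z| ≤ M
  integrable : Integrable q
  integral_le : ∫ z, |q z| ≤ M

variable {M M' : ℝ} {q q' : ℂ → ℝ}

lemma IsBddVorticity.nonneg (h : IsBddVorticity M q) : 0 ≤ M := (abs_nonneg _).trans (h.bound 0)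

lemma IsBddVorticity.sub (h : IsBddVorticity M q) (h' : IsBddVorticity M' q') :
    IsBddVorticity (M + M') fun z => q z - q' z where
  measurable := h.measurable.sub h'.measurable
  bound z := (abs_sub _ _).trans (add_le_add (h.bound z) (h'.bound z))
  integrable := h.integrable.sub h'.integrable
  integral_le := by
    refine le_trans ?_ (add_le_add h.integral_le h'.integral_le)
    rw [← integral_add h.integrable.abs h'.integrable.abs]
    exact integral_mono (h.integrable.sub h'.integrable).abs
      (h.integrable.abs.add h'.integrable.abs) fun z => abs_sub _ _

lemma integrable_indicator_inv_norm :
    Integrable fun z : ℂ => (Iio (1 : ℝ)).indicator (fun r => r⁻¹) ‖z‖ := by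
  rw [integrable_fun_norm_addHaar (μ := (volume : Measure ℂ))
    (f := (Iio (1 : ℝ)).indicator (fun r => r⁻¹))]
  have h : IntegrableOn ((Ioo (0 : ℝ) 1).indicator fun _ => (1 : ℝ)) (Ioi 0) :=
    ((integrable_indicator_iff measurableSet_Ioo).2 (by simp)).integrableOn
  refine h.congr_fun (fun y hy => ?_) measurableSet_Ioi
  have hy : (0 : ℝ) < y := hy
  by_cases hy₁ : y < 1 <;> simp [indicator, hy, hy₁, hy.ne']

-- The kernel is split at radius `1`: the singular part is integrable, the rest bounded by `1`.
lemma exists_norm_conv_le_of_norm_le_inv : ∃ C : ℝ, 0 ≤ C ∧ ∀ k : ℂ → ℂ, (∀ z, ‖k z‖ ≤ ‖z‖⁻¹) →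
    ∀ (M : ℝ) (q : ℂ → ℝ), IsBddVorticity M q → ∀ z, ‖conv k q z‖ ≤ C * M := by
  set s : ℂ → ℝ := fun z => (Iio (1 : ℝ)).indicator (fun r => r⁻¹) ‖z‖ with hs
  have hs₀ (z : ℂ) : 0 ≤ s z := indicator_apply_nonneg fun _ => inv_nonneg.2 (norm_nonneg z)
  have hle (z : ℂ) : ‖z‖⁻¹ ≤ s z + 1 := by
    by_cases h : ‖z‖ < 1
    · simp [hs, indicator_of_mem (show ‖z‖ ∈ Iio (1 : ℝ) from h)]
    · linarith [hs₀ z, inv_le_one_of_one_le₀ (not_lt.1 h)]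
  refine ⟨(∫ z, s z) + 1, add_nonneg (integral_nonneg hs₀) zero_le_one, fun k hk M q hq z => ?_⟩
  have := hq.nonneg
  have his : Integrable fun w => M * s (z - w) :=
    (integrable_indicator_inv_norm.comp_sub_left z).const_mul M
  have hbound (w : ℂ) : ‖k (z - w) * (q w : ℂ)‖ ≤ M * s (z - w) + |q w| := by
    rw [norm_mul, Complex.norm_real, Real.norm_eq_abs]
    calc ‖k (z - w)‖ * |q w| ≤ (s (z - w) + 1) * |q w| := by
          gcongr; exact (hk _).trans (hle _)
      _ = s (z - w) * |q w| + |q w| := by ring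
      _ ≤ s (z - w) * M + |q w| := by gcongr; exacts [hs₀ _, hq.bound w]
      _ = M * s (z - w) + |q w| := by ring
  calc ‖conv k q z‖ ≤ ∫ w, (M * s (z - w) + |q w|) :=
        norm_integral_le_of_norm_le (his.add hq.integrable.abs) (Eventually.of_forall hbound)
    _ = M * (∫ w, s w) + ∫ w, |q w| := by
        rw [integral_add his hq.integrable.abs, integral_const_mul,
          integral_sub_left_eq_self s volume z]
    _ ≤ ((∫ w, s w) + 1) * M := by linarith [hq.integral_le]

end BoundedVorticity

section Mollification

variable {E : Type*} [NormedAddCommGroup E] [NormedSpace ℝ E] {δ : ℝ}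

lemma mollifier_le (hδ : 0 < δ) (z : ℂ) : mollifier δ z ≤ (δ ^ 2)⁻¹ := by
  have h : (δ ^ 2) ^ 2 ≤ (‖z‖ ^ 2 + δ ^ 2) ^ 2 := by
    gcongr
    exact le_add_of_nonneg_left (sq_nonneg _)
  rw [mollifier, div_le_iff₀ (by positivity), inv_mul_eq_div, le_div_iff₀ (by positivity), ← sq]
  exact h

lemma integrable_mollifier_sub (hδ : 0 < δ) (z : ℂ) : Integrable fun w => mollifier δ (z - w) :=
  (integrable_mollifier hδ).comp_sub_left z

lemma integral_mollifier_sub (hδ : 0 < δ) (z : ℂ) :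
    ∫ w, mollifier δ (z - w) = mollifierMass := by
  rw [integral_sub_left_eq_self (mollifier δ) volume z, integral_mollifier hδ]

lemma integrable_mollifier_sub_smul (hδ : 0 < δ) {A : ℂ → E} (hA : Integrable A) (z : ℂ) :
    Integrable fun w => mollifier δ (z - w) • A w := by
  refine hA.bdd_smul (δ ^ 2)⁻¹
    ((continuous_mollifier hδ).comp (by fun_prop)).aestronglyMeasurable
    (Eventually.of_forall fun w => ?_)
  rw [norm_of_nonneg (mollifier_nonneg _ _)]
  exact mollifier_le hδ _

lemma integrable_mollifier_smul_prod (hδ : 0 < δ) {A : ℂ → E} (hA : Integrable A) :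
    Integrable fun x : ℂ × ℂ => mollifier δ (x.1 - x.2) • A x.2 := by
  refine (integrable_snd_mul_sub hA.norm (integrable_mollifier hδ) (mollifier_neg δ)).mono'
    (((continuous_mollifier hδ).comp
      (continuous_fst.sub continuous_snd)).aestronglyMeasurable.smul hA.1.comp_snd)
    (Eventually.of_forall fun x => ?_)
  rw [norm_smul, norm_of_nonneg (mollifier_nonneg _ _), mul_comm]

lemma integrable_mollify (hδ : 0 < δ) {A : ℂ → E} (hA : Integrable A) :
    Integrable (mollify δ A) :=
  (integrable_mollifier_smul_prod hδ hA).integral_prod_left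

lemma norm_mollify_le_integral (A : ℂ → E) (z : ℂ) :
    ‖mollify δ A z‖ ≤ ∫ w, mollifier δ (z - w) * ‖A w‖ := by
  refine (norm_integral_le_integral_norm _).trans_eq ?_
  simp only [norm_smul, norm_of_nonneg (mollifier_nonneg _ _)]

lemma norm_mollify_le (hδ : 0 < δ) {A : ℂ → E} {b : ℝ} (hb : ∀ z, ‖A z‖ ≤ b) (z : ℂ) :
    ‖mollify δ A z‖ ≤ mollifierMass * b := by
  rw [← integral_mollifier_sub hδ z, ← integral_mul_const]
  refine norm_integral_le_of_norm_le ((integrable_mollifier_sub hδ z).mul_const b)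
    (Eventually.of_forall fun w => ?_)
  rw [norm_smul, norm_of_nonneg (mollifier_nonneg _ _)]
  exact mul_le_mul_of_nonneg_left (hb w) (mollifier_nonneg _ _)

lemma measurable_mollify [MeasurableSpace E] [BorelSpace E] [SecondCountableTopology E]
    (hδ : 0 < δ) {A : ℂ → E} (hA : Measurable A) : Measurable (mollify δ A) := by
  have h : StronglyMeasurable (Function.uncurry fun z w : ℂ => mollifier δ (z - w) • A w) :=
    (((continuous_mollifier hδ).measurable.comp (measurable_fst.sub measurable_snd)).smul
      (hA.comp measurable_snd)).stronglyMeasurable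
  exact h.integral_prod_right.measurable

lemma mollify_ofReal (δ : ℝ) (q : ℂ → ℝ) (z : ℂ) :
    mollify δ (fun w => (q w : ℂ)) z = ((mollify δ q z : ℝ) : ℂ) := by
  simp only [mollify, Complex.real_smul, smul_eq_mul, ← Complex.ofReal_mul, integral_complex_ofReal]

lemma mollify_one (hδ : 0 < δ) (z : ℂ) :
    mollify δ (fun _ => (1 : ℂ)) z = (mollifierMass : ℂ) := by
  simp only [mollify, Complex.real_smul, mul_one, integral_complex_ofReal,
    integral_mollifier_sub hδ]

lemma integral_mollify (hδ : 0 < δ) {q : ℂ → ℝ} (hq : Integrable q) :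
    ∫ z, mollify δ q z = mollifierMass * ∫ w, q w := by
  unfold mollify
  rw [integral_integral_swap (integrable_mollifier_smul_prod hδ hq), ← integral_const_mul]
  congr 1 with w
  rw [integral_smul_const, integral_sub_right_eq_self (mollifier δ) w, integral_mollifier hδ,
    smul_eq_mul]

lemma conv_mollify {k : ℂ → ℂ} {q : ℂ → ℝ} {B : ℝ} (hk : Continuous k) (hB : ∀ z, ‖k z‖ ≤ B)
    (hδ : 0 < δ) (hq : Integrable q) (w : ℂ) :
    conv k (mollify δ q) w = mollify δ (conv k q) w := by
  have hi₁ : Integrable fun x : ℂ × ℂ =>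
      k (w - x.1) * ((mollifier δ (x.1 - x.2) • q x.2 : ℝ) : ℂ) :=
    (integrable_mollifier_smul_prod hδ hq).ofReal.bdd_mul (c := B)
      (hk.comp (by fun_prop)).aestronglyMeasurable (Eventually.of_forall fun _ => hB _)
  have hi₂ : Integrable fun x : ℂ × ℂ =>
      k (x.1 - x.2) * ((mollifier δ (w - x.1) * q x.2 : ℝ) : ℂ) :=
    ((integrable_mollifier_sub hδ w).mul_prod hq).ofReal.bdd_mul (c := B)
      (hk.comp (by fun_prop)).aestronglyMeasurable (Eventually.of_forall fun _ => hB _)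
  calc conv k (mollify δ q) w
      = ∫ z, ∫ y, k (w - z) * ((mollifier δ (z - y) • q y : ℝ) : ℂ) := by
        simp only [conv, mollify, ← integral_complex_ofReal, integral_const_mul]
    _ = ∫ y, ∫ z, k (w - z) * ((mollifier δ (z - y) • q y : ℝ) : ℂ) := integral_integral_swap hi₁
    _ = ∫ y, ∫ z, k (z - y) * ((mollifier δ (w - z) * q y : ℝ) : ℂ) := by
        congr 1 with y
        rw [← integral_sub_left_eq_self
          (fun z => k (z - y) * ((mollifier δ (w - z) * q y : ℝ) : ℂ)) volume (w + y)]
        simp only [show ∀ z, w + y - z - y = w - z by intro z; ring, smul_eq_mul,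
          show ∀ z, w - (w + y - z) = z - y by intro z; ring]
    _ = ∫ z, ∫ y, k (z - y) * ((mollifier δ (w - z) * q y : ℝ) : ℂ) :=
        (integral_integral_swap hi₂).symm
    _ = mollify δ (conv k q) w := by
        simp only [mollify, conv, Complex.real_smul, ← integral_const_mul, Complex.ofReal_mul,
          mul_left_comm]

end Mollification

section Forcing

/-- The rate of change of the regularised velocity when the vorticity is transported with momentum
density `m`. -/
def forcing (δ : ℝ) (m : ℂ → ℂ) (z : ℂ) : ℂ := -∫ w, fderiv ℝ (regCauchy δ) (z - w) (m w)

variable {δ : ℝ} {m : ℂ → ℂ}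

lemma continuous_fderiv_regCauchy_apply (hδ : 0 < δ) :
    Continuous fun p : ℂ × ℂ => fderiv ℝ (regCauchy δ) p.1 p.2 :=
  (((contDiff_regCauchy hδ (n := 1)).continuous_fderiv one_ne_zero).comp
    continuous_fst).clm_apply continuous_snd

-- By Young's inequality the kernel costs a factor `(‖z - w‖² + δ²)⁻²`, which is a mollifier.
lemma integrable_conj_mul_fderiv_regCauchy {V : ℂ → ℂ} (hδ : 0 < δ) (hV : Continuous V)
    (hV₂ : Integrable fun z => ‖V z‖ ^ 2) (hm : Integrable m) :
    Integrable fun x : ℂ × ℂ => conj (V x.1) * fderiv ℝ (regCauchy δ) (x.1 - x.2) (m x.2) := by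
  refine ((hV₂.mul_prod hm.norm).add
    ((integrable_mollifier_smul_prod hδ hm.norm).const_mul (δ ^ 2)⁻¹)).mono' ?_
    (Eventually.of_forall fun x => ?_)
  · exact (Complex.continuous_conj.comp (hV.comp continuous_fst)).aestronglyMeasurable.mul
      ((continuous_fderiv_regCauchy_apply hδ).comp_aestronglyMeasurable
        ((continuous_fst.sub continuous_snd).aestronglyMeasurable.prodMk hm.1.comp_snd))
  · set a := (‖x.1 - x.2‖ ^ 2 + δ ^ 2)⁻¹ with ha
    have hmoll : (δ ^ 2)⁻¹ * (mollifier δ (x.1 - x.2) * ‖m x.2‖) = ‖m x.2‖ * a ^ 2 := by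
      rw [mollifier, ha]
      field_simp
    calc ‖conj (V x.1) * fderiv ℝ (regCauchy δ) (x.1 - x.2) (m x.2)‖
        ≤ ‖V x.1‖ * (‖m x.2‖ / (‖x.1 - x.2‖ ^ 2 + δ ^ 2)) := by
          rw [norm_mul, RCLike.norm_conj]
          gcongr
          exact norm_fderiv_regCauchy_le hδ _ _
      _ = ‖m x.2‖ * (‖V x.1‖ * a) := by rw [ha]; ring
      _ ≤ ‖m x.2‖ * (‖V x.1‖ ^ 2 + a ^ 2) := by
          gcongr
          nlinarith [sq_nonneg (‖V x.1‖ - a), sq_nonneg ‖V x.1‖, sq_nonneg a]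
      _ = ‖V x.1‖ ^ 2 * ‖m x.2‖ + (δ ^ 2)⁻¹ * (mollifier δ (x.1 - x.2) * ‖m x.2‖) := by
          rw [hmoll]; ring

lemma integral_conj_mul_forcing {V : ℂ → ℂ} (hδ : 0 < δ) (hV : Continuous V)
    (hV₂ : Integrable fun z => ‖V z‖ ^ 2) (hm : Integrable m) :
    ∫ z, conj (V z) * forcing δ m z =
      -∫ w, ∫ z, conj (V z) * fderiv ℝ (regCauchy δ) (z - w) (m w) := by
  rw [← integral_integral_swap (integrable_conj_mul_fderiv_regCauchy hδ hV hV₂ hm),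
    ← integral_neg]
  simp only [integral_const_mul, forcing, mul_neg]

lemma re_mul_conv_regCauchy {p : ℂ → ℝ} (hδ : 0 < δ) (hp : Integrable p) (w e : ℂ) :
    (e * conv (regCauchy δ) p w).re = -∫ z, p z * (e * regCauchy δ (z - w)).re := by
  rw [conv, ← integral_const_mul, ← RCLike.re_eq_complex_re,
    ← integral_re ((integrable_comp_sub_mul (contDiff_regCauchy hδ (n := 1)).continuous
      (norm_regCauchy_le hδ) hp w).const_mul e), ← integral_neg]
  congr 1 with z
  rw [RCLike.re_eq_complex_re, ← neg_sub z w, regCauchy_neg, ← Complex.re_ofReal_mul,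
    ← Complex.neg_re]
  congr 1
  ring

lemma re_integral_conj_regVelocity_mul_forcing {q : ℂ → ℝ} (hδ : 0 < δ) (hδ₁ : δ ≤ 1)
    (hq : Integrable q) (hqw : Integrable fun w => japanese w ^ 2 * |q w|) {C : ℝ}
    (hV : ∀ z, ‖regVelocity δ q z‖ ≤ C / japanese z ^ 2) (hm : Integrable m) :
    (∫ z, conj (regVelocity δ q z) * forcing δ m z).re =
      -2 * ∫ w, (m w * mollify δ (regVelocity δ q) w).re := by
  have hVc : Continuous (regVelocity δ q) := (contDiff_regVelocity hδ hq).continuous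
  have hV' (z : ℂ) : ‖‖regVelocity δ q z‖‖ ≤ C / japanese z ^ 2 := (norm_norm _).trans_le (hV z)
  have hV₂ : Integrable fun z => ‖regVelocity δ q z‖ ^ 2 := by
    simpa only [sq] using
      integrable_mul_of_norm_le_japanese (by simp) hVc.norm hVc.norm hV' hV'
  have hi := (integrable_conj_mul_fderiv_regCauchy hδ hVc hV₂ hm).integral_prod_right
  rw [integral_conj_mul_forcing hδ hVc hV₂ hm, Complex.neg_re, ← RCLike.re_eq_complex_re,
    ← integral_re hi, ← integral_neg, ← integral_const_mul]
  congr 1 with w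
  rw [RCLike.re_eq_complex_re, re_integral_conj_regVelocity_mul hδ hδ₁ hq hqw hV w (m w),
    regVelocity, ← conv_mollify (contDiff_regCauchy hδ (n := 1)).continuous
      (norm_regCauchy_le hδ) hδ hq, re_mul_conv_regCauchy hδ (integrable_mollify hδ hq)]
  ring

end Forcing

section Commutator

lemma translationModulus_comp_sub_right {E F : Type*} [AddCommGroup E] [MeasureSpace E]
    [MeasurableAdd E] [(volume : Measure E).IsAddRightInvariant] [NormedAddCommGroup F]
    (f : E → F) (y : E) : translationModulus (fun z => f (z - y)) = translationModulus f := by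
  ext ζ
  unfold translationModulus
  rw [← integral_sub_right_eq_self (fun x => ‖f (x - ζ) - f x‖) y]
  simp only [sub_right_comm]

lemma translationModulus_comp_sub_left {E F : Type*} [AddCommGroup E] [MeasureSpace E]
    [MeasurableAdd E] [MeasurableNeg E] [(volume : Measure E).IsAddLeftInvariant]
    [(volume : Measure E).IsNegInvariant] [NormedAddCommGroup F]
    (f : E → F) (y : E) : translationModulus (fun z => f (y - z)) = translationModulus f := by
  ext ζ
  unfold translationModulus
  rw [← integral_sub_left_eq_self (fun x => ‖f (x - ζ) - f x‖) volume (y + ζ)]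
  congr 1 with x
  rw [← norm_sub_rev, show y + ζ - x - ζ = y - x by abel, show y + ζ - x = y - (x - ζ) by abel]

variable {δ : ℝ} {F A B : ℂ → ℂ} {a b : ℝ}

lemma norm_mul_mollifier_mul_le (ha : ∀ z, ‖A z‖ ≤ a) (hb : ∀ z, ‖B z‖ ≤ b) (c : ℂ)
    (x : ℂ × ℂ) : ‖c * (A x.1 * mollifier δ (x.1 - x.2) • B x.2)‖ ≤
      a * b * (‖c‖ * mollifier δ (x.1 - x.2)) := by
  have ha₀ := (norm_nonneg _).trans (ha 0)
  have hm := mollifier_nonneg δ (x.1 - x.2)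
  rw [norm_mul, norm_mul, norm_smul, norm_of_nonneg hm]
  calc ‖c‖ * (‖A x.1‖ * (mollifier δ (x.1 - x.2) * ‖B x.2‖))
      ≤ ‖c‖ * (a * (mollifier δ (x.1 - x.2) * b)) := by
        gcongr
        exacts [ha _, hb _]
    _ = a * b * (‖c‖ * mollifier δ (x.1 - x.2)) := by ring

lemma integrable_mul_mollifier_mul (hδ : 0 < δ) (hA : Measurable A) (hB : Measurable B)
    (ha : ∀ z, ‖A z‖ ≤ a) (hb : ∀ z, ‖B z‖ ≤ b) {G : ℂ × ℂ → ℂ} (hG : AEStronglyMeasurable G)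
    (hGi : Integrable fun x : ℂ × ℂ => ‖G x‖ * mollifier δ (x.1 - x.2)) :
    Integrable fun x : ℂ × ℂ => G x * (A x.1 * mollifier δ (x.1 - x.2) • B x.2) :=
  (hGi.const_mul (a * b)).mono'
    (hG.mul ((hA.comp measurable_fst).mul (((continuous_mollifier hδ).measurable.comp
      (measurable_fst.sub measurable_snd)).smul (hB.comp measurable_snd))).aestronglyMeasurable)
    (Eventually.of_forall fun x => norm_mul_mollifier_mul_le ha hb (G x) x)

lemma norm_integral_mul_mollify_sub_le (hδ : 0 < δ) (hF : Integrable F) (hA : Measurable A)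
    (hB : Measurable B) (ha : ∀ z, ‖A z‖ ≤ a) (hb : ∀ z, ‖B z‖ ≤ b) :
    ‖(∫ w, F w * (A w * mollify δ B w)) - ∫ w, F w * (B w * mollify δ A w)‖ ≤
      a * b * avgTranslationModulus F δ := by
  have hm := integrable_mollifier hδ
  have hi₁ := integrable_mul_mollifier_mul hδ hA hB ha hb hF.1.comp_fst
    (integrable_fst_mul_sub hF.norm hm)
  have hi₂ := integrable_mul_mollifier_mul hδ hA hB ha hb hF.1.comp_snd
    (integrable_snd_mul_sub hF.norm hm (mollifier_neg δ))
  have hAB : ∫ w, F w * (A w * mollify δ B w) =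
      ∫ x : ℂ × ℂ, F x.1 * (A x.1 * mollifier δ (x.1 - x.2) • B x.2) := by
    rw [Measure.volume_eq_prod, integral_prod _ hi₁]
    simp only [integral_const_mul, mollify]
  have hBA : ∫ w, F w * (B w * mollify δ A w) =
      ∫ x : ℂ × ℂ, F x.2 * (A x.1 * mollifier δ (x.1 - x.2) • B x.2) := by
    rw [Measure.volume_eq_prod, integral_prod_symm _ hi₂]
    simp only [integral_const_mul, mollify]
    congr 1 with w
    rw [← integral_const_mul]
    congr 2 with z
    rw [← mollifier_neg, neg_sub, Complex.real_smul, Complex.real_smul]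
    ring
  rw [hAB, hBA, ← integral_sub hi₁ hi₂, ← integral_norm_sub_mul_mollifier hF hδ,
    ← integral_const_mul]
  refine norm_integral_le_of_norm_le ((integrable_norm_sub_mul_mollifier hF hδ).const_mul _)
    (Eventually.of_forall fun x => ?_)
  rw [← sub_mul]
  exact norm_mul_mollifier_mul_le ha hb _ x

end Commutator

section ConvolutionBounds

variable {f : ℂ → ℂ} {q q' : ℂ → ℝ} {M M' : ℝ}

lemma integrable_comp_sub_mul_of_isBddVorticity (hf : Integrable f) (hq : IsBddVorticity M q)
    (z : ℂ) : Integrable fun w => f (z - w) * (q w : ℂ) :=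
  (hf.comp_sub_left z).mul_bdd (c := M)
    (Complex.measurable_ofReal.comp hq.measurable).aestronglyMeasurable
    (Eventually.of_forall fun w => (Complex.norm_real _).trans_le (hq.bound w))

lemma measurable_conv (hf : Measurable f) (hq : Measurable q) : Measurable (conv f q) := by
  have h : Measurable (Function.uncurry fun z w : ℂ => f (z - w) * (q w : ℂ)) :=
    (hf.comp (measurable_fst.sub measurable_snd)).mul
      (Complex.measurable_ofReal.comp (hq.comp measurable_snd))
  exact h.stronglyMeasurable.integral_prod_right.measurable

lemma norm_conv_le (hf : Integrable f) (hq : IsBddVorticity M q) (z : ℂ) :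
    ‖conv f q z‖ ≤ M * ∫ w, ‖f w‖ := by
  rw [← integral_sub_left_eq_self (fun w => ‖f w‖) volume z, ← integral_const_mul]
  refine norm_integral_le_of_norm_le ((hf.comp_sub_left z).norm.const_mul _)
    (Eventually.of_forall fun w => ?_)
  rw [norm_mul, Complex.norm_real, mul_comm]
  gcongr
  exact hq.bound w

lemma conv_sub (hf : Integrable f) (hq : IsBddVorticity M q) (hq' : IsBddVorticity M' q')
    (z : ℂ) : conv f (fun w => q w - q' w) z = conv f q z - conv f q' z := by
  simp only [conv, Complex.ofReal_sub, mul_sub]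
  exact integral_sub (integrable_comp_sub_mul_of_isBddVorticity hf hq z)
    (integrable_comp_sub_mul_of_isBddVorticity hf hq' z)

lemma integral_conv_mul (hf : Integrable f) (hq : Integrable q) {G : ℂ → ℂ} (hG : Measurable G)
    {c : ℝ} (hc : ∀ z, ‖G z‖ ≤ c) :
    ∫ w, conv f q w * G w = ∫ y, (q y : ℂ) * ∫ w, f (w - y) * G w := by
  have hi₀ : Integrable fun x : ℂ × ℂ => f (x.1 - x.2) * (q x.2 : ℂ) := by
    refine (hq.ofReal (𝕜 := ℂ).convolution_integrand (ContinuousLinearMap.mul ℝ ℂ) hf).congr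
      (Eventually.of_forall fun x => ?_)
    exact mul_comm (q x.2 : ℂ) (f (x.1 - x.2))
  have hi : Integrable fun x : ℂ × ℂ => f (x.1 - x.2) * (q x.2 : ℂ) * G x.1 :=
    hi₀.mul_bdd (c := c) (hG.comp measurable_fst).aestronglyMeasurable
      (Eventually.of_forall fun x => hc _)
  simp only [conv, ← integral_mul_const, ← integral_const_mul]
  rw [integral_integral_swap hi]
  simp only [mul_left_comm, mul_assoc]

lemma norm_integral_conv_mul_le (hf : Integrable f) (hq : IsBddVorticity M q) {G : ℂ → ℂ}
    (hG : Measurable G) {c : ℝ} (hc : ∀ z, ‖G z‖ ≤ c) {B : ℝ}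
    (hB : ∀ y, ‖∫ w, f (w - y) * G w‖ ≤ B) : ‖∫ w, conv f q w * G w‖ ≤ M * B := by
  have hB₀ : 0 ≤ B := (norm_nonneg _).trans (hB 0)
  calc ‖∫ w, conv f q w * G w‖ = ‖∫ y, (q y : ℂ) * ∫ w, f (w - y) * G w‖ := by
        rw [integral_conv_mul hf hq.integrable hG hc]
    _ ≤ ∫ y, |q y| * B := by
        refine norm_integral_le_of_norm_le (hq.integrable.abs.mul_const B)
          (Eventually.of_forall fun y => ?_)
        rw [norm_mul, Complex.norm_real, Real.norm_eq_abs]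
        gcongr
        exact hB y
    _ ≤ M * B := by
        rw [integral_mul_const]
        gcongr
        exact hq.integral_le

end ConvolutionBounds

section KernelEnergy

lemma sq_integral_mul_le {X : Type*} [MeasurableSpace X] {μ : Measure X} {p v : X → ℝ}
    (hp : ∀ x, 0 ≤ p x) (h₀ : Integrable p μ) (h₁ : Integrable (fun x => p x * v x) μ)
    (h₂ : Integrable (fun x => p x * v x ^ 2) μ) :
    (∫ x, p x * v x ∂μ) ^ 2 ≤ (∫ x, p x ∂μ) * ∫ x, p x * v x ^ 2 ∂μ := by
  have key (t : ℝ) : 0 ≤ (∫ x, p x ∂μ) * (t * t) + (-2 * ∫ x, p x * v x ∂μ) * t +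
      ∫ x, p x * v x ^ 2 ∂μ := by
    have h : 0 ≤ ∫ x, p x * (v x - t) ^ 2 ∂μ :=
      integral_nonneg fun x => mul_nonneg (hp x) (sq_nonneg _)
    have hexp : (fun x => p x * (v x - t) ^ 2) =
        fun x => p x * (t * t) + p x * v x * (-2 * t) + p x * v x ^ 2 := by
      ext x; ring
    rw [hexp, integral_add (by exact (h₀.mul_const _).add (h₁.mul_const _)) h₂,
      integral_add (h₀.mul_const _) (h₁.mul_const _), integral_mul_const, integral_mul_const] at h
    linarith
  have hdisc := discrim_le_zero key
  unfold discrim at hdisc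
  linarith

lemma crDeriv_comp_add_right (c : ℂ) (h : ℂ → ℂ) (y z : ℂ) :
    crDeriv c (fun ζ => h (ζ + y)) z = crDeriv c h (z + y) := by
  simp only [crDeriv, fderiv_comp_add_right]

lemma crDeriv_comp_sub_left (c : ℂ) {h : ℂ → ℂ} {y z : ℂ} (hh : DifferentiableAt ℝ h (y - z)) :
    crDeriv c (fun ζ => h (y - ζ)) z = -crDeriv c h (y - z) := by
  have hd := hh.hasFDerivAt.comp z ((hasFDerivAt_id z).const_sub y)
  simp only [crDeriv, show fderiv ℝ (fun ζ => h (y - ζ)) z = _ from hd.fderiv,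
    ContinuousLinearMap.comp_apply, neg_apply, ContinuousLinearMap.id_apply, map_neg]
  ring

lemma avgTranslationModulus_comp_sub_right (f : ℂ → ℂ) (y : ℂ) :
    avgTranslationModulus (fun z => f (z - y)) = avgTranslationModulus f := by
  ext δ
  simp only [avgTranslationModulus, translationModulus_comp_sub_right]

lemma avgTranslationModulus_comp_sub_left (f : ℂ → ℂ) (y : ℂ) :
    avgTranslationModulus (fun z => f (y - z)) = avgTranslationModulus f := by
  ext δ
  simp only [avgTranslationModulus, translationModulus_comp_sub_left]

variable {f g : ℂ → ℂ} {C δ a b : ℝ} {q : ℂ → ℝ}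

/-- `2 V · mollify q = V · ∂V = ∂(V²) / 2` for the velocity `V` and `∂ = crDeriv I`, so a single
integration by parts moves the derivative onto the kernel. -/
lemma integral_comp_sub_mul_regVelocity_mul_mollify (hK : IsBoundedCRKernel f g C) (hδ : 0 < δ)
    (hq : Integrable q) (y : ℂ) :
    ∫ w, f (w - y) * (regVelocity δ q w * ((mollify δ q w : ℝ) : ℂ)) =
      -(1 / 4) * ∫ ζ, g ζ * (regVelocity δ q (ζ + y) * regVelocity δ q (ζ + y)) := by
  have hV := contDiff_regVelocity hδ hq
  have hVy : ContDiff ℝ 1 fun ζ => regVelocity δ q (ζ + y) :=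
    hV.comp (contDiff_id.add contDiff_const)
  have hcr (ζ : ℂ) : crDeriv I (fun ζ => regVelocity δ q (ζ + y) * regVelocity δ q (ζ + y)) ζ =
      4 * (regVelocity δ q (ζ + y) * ((mollify δ q (ζ + y) : ℝ) : ℂ)) := by
    have hd := hVy.differentiable one_ne_zero ζ
    rw [crDeriv_mul hd hd, crDeriv_comp_add_right, crDeriv_I_regVelocity hδ hq]
    ring
  have hparts := hK.integral_mul_crDeriv _ (hVy.mul hVy)
  simp only [hcr, mul_left_comm _ (4 : ℂ), integral_const_mul] at hparts
  rw [← integral_add_right_eq_self _ y]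
  simp only [add_sub_cancel_right]
  linear_combination hparts / 4

lemma norm_integral_comp_sub_mul_mollify_le (hK : IsBoundedCRKernel f g C) (hδ : 0 < δ)
    (hq : IsBddVorticity a q) (hb : ∀ z, ‖regVelocity δ q z‖ ≤ b)
    (hE : Integrable fun z => ‖regVelocity δ q z‖ ^ 2) (y : ℂ) :
    ‖∫ w, f (w - y) * ((q w : ℂ) * mollify δ (regVelocity δ q) w)‖ ≤
      a * b * avgTranslationModulus f δ + C / 4 * ∫ z, ‖regVelocity δ q z‖ ^ 2 := by
  have hcomm := norm_integral_mul_mollify_sub_le hδ (hK.integrable.comp_sub_right y)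
    (Complex.measurable_ofReal.comp hq.measurable)
    (contDiff_regVelocity hδ hq.integrable).continuous.measurable
    (fun z => (Complex.norm_real _).trans_le (hq.bound z)) hb
  simp only [Function.comp_apply, Function.comp_def, mollify_ofReal,
    avgTranslationModulus_comp_sub_right,
    integral_comp_sub_mul_regVelocity_mul_mollify hK hδ hq.integrable y] at hcomm
  have henergy : ‖∫ ζ, g ζ * (regVelocity δ q (ζ + y) * regVelocity δ q (ζ + y))‖ ≤
      C * ∫ z, ‖regVelocity δ q z‖ ^ 2 := by
    rw [← integral_add_right_eq_self (fun z => ‖regVelocity δ q z‖ ^ 2) y, ← integral_const_mul]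
    refine norm_integral_le_of_norm_le ((hE.comp_add_right y).const_mul C)
      (Eventually.of_forall fun ζ => ?_)
    rw [norm_mul, norm_mul, ← sq]
    gcongr
    exact hK.norm_deriv_le ζ
  refine (norm_le_norm_sub_add _ _).trans ((add_le_add_left hcomm _).trans ?_)
  rw [norm_mul, norm_neg, show ‖(1 / 4 : ℂ)‖ = 1 / 4 by norm_num]
  linarith

lemma integral_comp_sub_left_mul_mollify (hK : IsBoundedCRKernel f g C) (hδ : 0 < δ)
    (hq : Integrable q) (z : ℂ) :
    ∫ w, f (z - w) * ((mollify δ q w : ℝ) : ℂ) =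
      1 / 2 * ∫ ζ, g ζ * regVelocity δ q (z - ζ) := by
  have hV := contDiff_regVelocity hδ hq
  have hcr (ζ : ℂ) : crDeriv I (fun ζ => regVelocity δ q (z - ζ)) ζ =
      -2 * ((mollify δ q (z - ζ) : ℝ) : ℂ) := by
    rw [crDeriv_comp_sub_left I (hV.differentiable one_ne_zero _), crDeriv_I_regVelocity hδ hq]
    ring
  have hparts := hK.integral_mul_crDeriv _ (hV.comp ((contDiff_const (c := z)).sub contDiff_id))
  simp only [Function.comp_def, id_eq, hcr, mul_left_comm _ (-2 : ℂ), integral_const_mul] at hparts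
  rw [← integral_sub_left_eq_self _ volume z]
  simp only [sub_sub_cancel]
  linear_combination -hparts / 2

lemma mollifierMass_mul_norm_conv_le (hK : IsBoundedCRKernel f g C) (hδ : 0 < δ)
    (hq : IsBddVorticity a q) (z : ℂ) :
    mollifierMass * ‖conv f q z‖ ≤
      a * avgTranslationModulus f δ + 1 / 2 * ∫ w, ‖g (z - w)‖ * ‖regVelocity δ q w‖ := by
  have hcomm := norm_integral_mul_mollify_sub_le hδ (hK.integrable.comp_sub_left z)
    (Complex.measurable_ofReal.comp hq.measurable) (measurable_const (a := (1 : ℂ)))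
    (fun z => (Complex.norm_real _).trans_le (hq.bound z)) (fun _ => norm_one.le)
  simp only [Function.comp_apply, Function.comp_def, mollify_ofReal, mollify_one hδ, one_mul,
    mul_one, avgTranslationModulus_comp_sub_left, ← mul_assoc, integral_mul_const,
    integral_comp_sub_left_mul_mollify hK hδ hq.integrable z] at hcomm
  have hg : ‖∫ ζ, g ζ * regVelocity δ q (z - ζ)‖ ≤ ∫ w, ‖g (z - w)‖ * ‖regVelocity δ q w‖ := by
    rw [← integral_sub_left_eq_self (fun w => ‖g (z - w)‖ * ‖regVelocity δ q w‖) volume z]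
    simpa only [sub_sub_cancel, norm_mul] using
      norm_integral_le_integral_norm fun ζ => g ζ * regVelocity δ q (z - ζ)
  have hmass : mollifierMass * ‖conv f q z‖ =
      ‖(∫ w, f (z - w) * (q w : ℂ)) * (mollifierMass : ℂ)‖ := by
    rw [norm_mul, Complex.norm_real, Real.norm_of_nonneg mollifierMass_pos.le, mul_comm, conv]
  rw [hmass]
  refine (norm_le_norm_sub_add _ _).trans ((add_le_add_left hcomm _).trans ?_)
  rw [norm_mul, show ‖(1 / 2 : ℂ)‖ = 1 / 2 by norm_num]
  gcongr

end KernelEnergy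

section CauchySchwarz

variable {δ C b : ℝ} {V g : ℂ → ℂ}

lemma sq_norm_mollify_le (hδ : 0 < δ) (hV : Measurable V) (hb : ∀ z, ‖V z‖ ≤ b)
    (hE : Integrable fun z => ‖V z‖ ^ 2) (z : ℂ) :
    ‖mollify δ V z‖ ^ 2 ≤ mollifierMass * mollify δ (fun w => ‖V w‖ ^ 2) z := by
  have hi : Integrable fun w => mollifier δ (z - w) * ‖V w‖ :=
    (integrable_mollifier_sub hδ z).mul_bdd (c := b) hV.norm.aestronglyMeasurable
      (Eventually.of_forall fun w => (norm_norm _).trans_le (hb w))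
  have hcs := sq_integral_mul_le (fun w => mollifier_nonneg δ (z - w))
    (integrable_mollifier_sub hδ z) hi (integrable_mollifier_sub_smul hδ hE z)
  rw [integral_mollifier_sub hδ] at hcs
  exact (pow_le_pow_left₀ (norm_nonneg _) (norm_mollify_le_integral V z) 2).trans hcs

lemma sq_integral_norm_mul_norm_le (hgm : Measurable g) (hg : Integrable g)
    (hC : ∀ z, ‖g z‖ ≤ C) (hV : Measurable V) (hb : ∀ z, ‖V z‖ ≤ b)
    (hE : Integrable fun z => ‖V z‖ ^ 2) (z : ℂ) :
    (∫ w, ‖g (z - w)‖ * ‖V w‖) ^ 2 ≤ (∫ w, ‖g w‖) * (C * ∫ w, ‖V w‖ ^ 2) := by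
  have h₀ : Integrable fun w => ‖g (z - w)‖ := (hg.comp_sub_left z).norm
  have h₁ : Integrable fun w => ‖g (z - w)‖ * ‖V w‖ :=
    h₀.mul_bdd (c := b) hV.norm.aestronglyMeasurable
      (Eventually.of_forall fun w => (norm_norm _).trans_le (hb w))
  have h₂ : Integrable fun w => ‖g (z - w)‖ * ‖V w‖ ^ 2 :=
    hE.bdd_mul (c := C) (hgm.comp (measurable_id.const_sub z)).norm.aestronglyMeasurable
      (Eventually.of_forall fun w => (norm_norm _).trans_le (hC _))
  refine (sq_integral_mul_le (fun w => norm_nonneg _) h₀ h₁ h₂).trans ?_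
  rw [integral_sub_left_eq_self (fun w => ‖g w‖) volume z]
  refine mul_le_mul_of_nonneg_left ?_ (integral_nonneg fun w => norm_nonneg _)
  rw [← integral_const_mul]
  exact integral_mono h₂ (hE.const_mul C) fun w =>
    mul_le_mul_of_nonneg_right (hC _) (sq_nonneg _)

end CauchySchwarz

section Flux

/-- The vorticity flux `q u` of the velocity `u = f ∗ q + γ f` in complex notation. -/
def flux (γ : ℝ) (f : ℂ → ℂ) (q : ℂ → ℝ) (z : ℂ) : ℂ := (q z : ℂ) * (conv f q z + γ * f z)

variable {f : ℂ → ℂ} {q q' : ℂ → ℝ} {M : ℝ}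

lemma measurable_flux (γ : ℝ) (hf : Measurable f) (hq : Measurable q) :
    Measurable (flux γ f q) :=
  (Complex.measurable_ofReal.comp hq).mul ((measurable_conv hf hq).add (hf.const_mul _))

lemma norm_flux_le (γ : ℝ) (hf : Integrable f) (hq : IsBddVorticity M q) (z : ℂ) :
    ‖flux γ f q z‖ ≤ M * (∫ w, ‖f w‖) * |q z| + M * |γ| * ‖f z‖ := by
  have hu : ‖conv f q z + γ * f z‖ ≤ M * (∫ w, ‖f w‖) + |γ| * ‖f z‖ := by
    refine (norm_add_le _ _).trans (add_le_add (norm_conv_le hf hq z) (le_of_eq ?_))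
    rw [norm_mul, Complex.norm_real, Real.norm_eq_abs]
  have hγ : |q z| * (|γ| * ‖f z‖) ≤ M * (|γ| * ‖f z‖) := by
    gcongr
    exact hq.bound z
  calc ‖flux γ f q z‖ ≤ |q z| * (M * (∫ w, ‖f w‖) + |γ| * ‖f z‖) := by
        rw [flux, norm_mul, Complex.norm_real, Real.norm_eq_abs]
        gcongr
    _ ≤ M * (∫ w, ‖f w‖) * |q z| + M * |γ| * ‖f z‖ := by linarith

lemma integrable_flux (γ : ℝ) (hfm : Measurable f) (hf : Integrable f)
    (hq : IsBddVorticity M q) : Integrable (flux γ f q) :=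
  ((hq.integrable.abs.const_mul _).add (hf.norm.const_mul _)).mono'
    (measurable_flux γ hfm hq.measurable).aestronglyMeasurable
    (Eventually.of_forall fun z => norm_flux_le γ hf hq z)

lemma integral_norm_flux_le (γ : ℝ) (hfm : Measurable f) (hf : Integrable f)
    (hq : IsBddVorticity M q) :
    ∫ z, ‖flux γ f q z‖ ≤ (M ^ 2 + M * |γ|) * ∫ z, ‖f z‖ := by
  have : 0 ≤ ∫ z, ‖f z‖ := integral_nonneg fun z => norm_nonneg _
  have h₁ := hq.integrable.abs.const_mul (M * ∫ w, ‖f w‖)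
  have h₂ := hf.norm.const_mul (M * |γ|)
  have hM := hq.nonneg
  calc ∫ z, ‖flux γ f q z‖ ≤ ∫ z, (M * (∫ w, ‖f w‖) * |q z| + M * |γ| * ‖f z‖) :=
        integral_mono (integrable_flux γ hfm hf hq).norm (h₁.add h₂)
          fun z => norm_flux_le γ hf hq z
    _ = M * (∫ w, ‖f w‖) * (∫ z, |q z|) + M * |γ| * ∫ z, ‖f z‖ := by
        rw [integral_add h₁ h₂, integral_const_mul, integral_const_mul]
    _ ≤ M * (∫ w, ‖f w‖) * M + M * |γ| * ∫ z, ‖f z‖ := by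
        gcongr
        exact hq.integral_le
    _ = (M ^ 2 + M * |γ|) * ∫ z, ‖f z‖ := by ring

lemma flux_sub_flux (γ : ℝ) (hf : Integrable f) (hq : IsBddVorticity M q)
    (hq' : IsBddVorticity M q') (z : ℂ) :
    flux γ f q z - flux γ f q' z = conv f q z * ((q z - q' z : ℝ) : ℂ) +
      γ * (f z * ((q z - q' z : ℝ) : ℂ)) + conv f (fun w => q w - q' w) z * (q' z : ℂ) := by
  rw [conv_sub hf hq hq', flux, flux, Complex.ofReal_sub]
  ring

lemma integral_flux_sub_mul (γ : ℝ) (hfm : Measurable f) (hf : Integrable f)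
    (hq : IsBddVorticity M q) (hq' : IsBddVorticity M q') {W : ℂ → ℂ} (hW : Measurable W) {c : ℝ}
    (hc : ∀ z, ‖W z‖ ≤ c) :
    ∫ w, (flux γ f q w - flux γ f q' w) * W w =
      (∫ w, conv f q w * (((q w - q' w : ℝ) : ℂ) * W w)) +
        γ * (∫ w, f w * (((q w - q' w : ℝ) : ℂ) * W w)) +
        ∫ w, conv f (fun w => q w - q' w) w * (q' w : ℂ) * W w := by
  have hd := hq.sub hq'
  have hWc : ∀ᵐ z, ‖W z‖ ≤ c := Eventually.of_forall hc
  have hdm : Measurable fun w => ((q w - q' w : ℝ) : ℂ) :=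
    Complex.measurable_ofReal.comp hd.measurable
  have hdb : ∀ᵐ w, ‖((q w - q' w : ℝ) : ℂ)‖ ≤ M + M :=
    Eventually.of_forall fun w => (Complex.norm_real _).trans_le (hd.bound w)
  have hi₁ : Integrable fun w => conv f q w * (((q w - q' w : ℝ) : ℂ) * W w) :=
    (hd.integrable.ofReal.mul_bdd hW.aestronglyMeasurable hWc).bdd_mul
      (measurable_conv hfm hq.measurable).aestronglyMeasurable
      (Eventually.of_forall (norm_conv_le hf hq))
  have hi₂ : Integrable fun w => f w * (((q w - q' w : ℝ) : ℂ) * W w) := by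
    simpa only [mul_assoc] using (hf.mul_bdd hdm.aestronglyMeasurable hdb).mul_bdd
      hW.aestronglyMeasurable hWc
  have hi₃ : Integrable fun w => conv f (fun w => q w - q' w) w * (q' w : ℂ) * W w :=
    (hq'.integrable.ofReal.bdd_mul (measurable_conv hfm hd.measurable).aestronglyMeasurable
      (Eventually.of_forall (norm_conv_le hf hd))).mul_bdd hW.aestronglyMeasurable hWc
  rw [← integral_const_mul, ← integral_add hi₁ (hi₂.const_mul _),
    ← integral_add (by exact hi₁.add (hi₂.const_mul _)) hi₃]
  congr 1 with w
  rw [flux_sub_flux γ hf hq hq']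
  ring

end Flux

section FluxDifference

variable {f g : ℂ → ℂ} {C δ a b M : ℝ} {p p' q : ℂ → ℝ}

lemma norm_conv_mul_norm_mollify_le (hK : IsBoundedCRKernel f g C) (hδ : 0 < δ)
    (hq : IsBddVorticity a q) (hb : ∀ z, ‖regVelocity δ q z‖ ≤ b)
    (hE : Integrable fun z => ‖regVelocity δ q z‖ ^ 2) (z : ℂ) :
    ‖conv f q z‖ * ‖mollify δ (regVelocity δ q) z‖ ≤
      a * b * avgTranslationModulus f δ +
        (∫ w, ‖g w‖) * (C * ∫ w, ‖regVelocity δ q w‖ ^ 2) / (4 * mollifierMass) +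
          1 / 4 * mollify δ (fun w => ‖regVelocity δ q w‖ ^ 2) z := by
  have hV := (contDiff_regVelocity hδ hq.integrable).continuous.measurable
  have hconv := mollifierMass_mul_norm_conv_le hK hδ hq z
  have hg := sq_integral_norm_mul_norm_le hK.measurable_deriv hK.integrable_deriv
    hK.norm_deriv_le hV hb hE z
  have hW := sq_norm_mollify_le hδ hV hb hE z
  set S := ∫ w, ‖g (z - w)‖ * ‖regVelocity δ q w‖
  set W := ‖mollify δ (regVelocity δ q) z‖
  have hη : a * avgTranslationModulus f δ * W ≤
      a * avgTranslationModulus f δ * (mollifierMass * b) :=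
    mul_le_mul_of_nonneg_left (norm_mollify_le hδ hb z)
      (mul_nonneg hq.nonneg (avgTranslationModulus_nonneg f δ))
  have hSW := two_mul_le_add_sq S W
  have hm := mollifierMass_pos
  refine le_of_mul_le_mul_left ?_ hm
  rw [mul_add, mul_add, mul_div_assoc', mul_comm 4 mollifierMass, mul_div_mul_left _ _ hm.ne']
  nlinarith [mul_le_mul_of_nonneg_right hconv (norm_nonneg (mollify δ (regVelocity δ q) z))]

lemma norm_integral_conv_mul_mollify_le (hK : IsBoundedCRKernel f g C) (hδ : 0 < δ)
    (hq : IsBddVorticity a q) (hp : IsBddVorticity M p) (hb : ∀ z, ‖regVelocity δ q z‖ ≤ b)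
    (hE : Integrable fun z => ‖regVelocity δ q z‖ ^ 2) :
    ‖∫ w, conv f q w * (p w : ℂ) * mollify δ (regVelocity δ q) w‖ ≤
      M * (a * b * avgTranslationModulus f δ) +
        M / 4 * ((∫ w, ‖g w‖) * C / mollifierMass + mollifierMass) *
          ∫ w, ‖regVelocity δ q w‖ ^ 2 := by
  have hm := mollifierMass_pos
  set E := ∫ w, ‖regVelocity δ q w‖ ^ 2
  set R := mollify δ fun w => ‖regVelocity δ q w‖ ^ 2
  set A := a * b * avgTranslationModulus f δ + (∫ w, ‖g w‖) * (C * E) / (4 * mollifierMass)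
  have hR (w : ℂ) : 0 ≤ R w :=
    integral_nonneg fun _ => mul_nonneg (mollifier_nonneg _ _) (sq_nonneg _)
  have hA (w : ℂ) : ‖conv f q w‖ * ‖mollify δ (regVelocity δ q) w‖ ≤ A + 1 / 4 * R w :=
    norm_conv_mul_norm_mollify_le hK hδ hq hb hE w
  have hle (w : ℂ) : ‖conv f q w * (p w : ℂ) * mollify δ (regVelocity δ q) w‖ ≤
      |p w| * A + M / 4 * R w := by
    rw [norm_mul, norm_mul, Complex.norm_real, Real.norm_eq_abs]
    nlinarith [mul_le_mul_of_nonneg_left (hA w) (abs_nonneg (p w)),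
      mul_le_mul_of_nonneg_right (hp.bound w) (hR w)]
  have hA₀ : 0 ≤ A := by
    have := hq.nonneg
    have := (norm_nonneg _).trans (hb 0)
    have := (norm_nonneg _).trans (hK.norm_deriv_le 0)
    have := avgTranslationModulus_nonneg f δ
    positivity
  have hi₁ := hp.integrable.abs.mul_const A
  have hi₂ := (integrable_mollify hδ hE).const_mul (M / 4)
  calc ‖∫ w, conv f q w * (p w : ℂ) * mollify δ (regVelocity δ q) w‖
      ≤ ∫ w, (|p w| * A + M / 4 * R w) :=
        norm_integral_le_of_norm_le (hi₁.add hi₂) (Eventually.of_forall hle)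
    _ = (∫ w, |p w|) * A + M / 4 * (mollifierMass * E) := by
        rw [integral_add hi₁ hi₂, integral_mul_const, integral_const_mul, integral_mollify hδ hE]
    _ ≤ M * A + M / 4 * (mollifierMass * E) := by
        gcongr
        exact hp.integral_le
    _ = _ := by
        simp only [A]
        field_simp
        ring

lemma norm_integral_flux_sub_mul_mollify_le (hK : IsBoundedCRKernel f g C) (hδ : 0 < δ) (γ : ℝ)
    (hp : IsBddVorticity M p) (hp' : IsBddVorticity M p')
    (hb : ∀ z, ‖regVelocity δ (fun w => p w - p' w) z‖ ≤ b)
    (hE : Integrable fun z => ‖regVelocity δ (fun w => p w - p' w) z‖ ^ 2) :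
    ‖∫ w, (flux γ f p w - flux γ f p' w) * mollify δ (regVelocity δ fun w => p w - p' w) w‖ ≤
      (M + |γ|) * (2 * M * b * avgTranslationModulus f δ +
        C / 4 * ∫ z, ‖regVelocity δ (fun w => p w - p' w) z‖ ^ 2) +
      (M * (2 * M * b * avgTranslationModulus f δ) +
        M / 4 * ((∫ w, ‖g w‖) * C / mollifierMass + mollifierMass) *
          ∫ z, ‖regVelocity δ (fun w => p w - p' w) z‖ ^ 2) := by
  have hq : IsBddVorticity (2 * M) fun w => p w - p' w := two_mul M ▸ hp.sub hp'
  set q : ℂ → ℝ := fun w => p w - p' w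
  set W := mollify δ (regVelocity δ q)
  set B := 2 * M * b * avgTranslationModulus f δ + C / 4 * ∫ z, ‖regVelocity δ q z‖ ^ 2
  have hW : Measurable W :=
    measurable_mollify hδ (contDiff_regVelocity hδ hq.integrable).continuous.measurable
  have hWb := norm_mollify_le hδ hb
  have hG : Measurable fun w => (q w : ℂ) * W w :=
    (Complex.measurable_ofReal.comp hq.measurable).mul hW
  have hGb (w : ℂ) : ‖(q w : ℂ) * W w‖ ≤ 2 * M * (mollifierMass * b) := by
    rw [norm_mul, Complex.norm_real]
    exact mul_le_mul (hq.bound w) (hWb w) (norm_nonneg _) hq.nonneg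
  have hB : ∀ y, ‖∫ w, f (w - y) * ((q w : ℂ) * W w)‖ ≤ B :=
    norm_integral_comp_sub_mul_mollify_le hK hδ hq hb hE
  have hsing : ‖(γ : ℂ) * ∫ w, f w * ((q w : ℂ) * W w)‖ ≤ |γ| * B := by
    rw [norm_mul, Complex.norm_real, Real.norm_eq_abs]
    gcongr
    simpa only [sub_zero] using hB 0
  have hreg := norm_integral_conv_mul_le hK.integrable hp hG hGb hB
  have hdiff := norm_integral_conv_mul_mollify_le hK hδ hq hp' hb hE
  rw [integral_flux_sub_mul γ hK.measurable hK.integrable hp hp' hW hWb]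
  linarith [norm_add₃_le (a := ∫ w, conv f p w * ((q w : ℂ) * W w))
    (b := (γ : ℂ) * ∫ w, f w * ((q w : ℂ) * W w)) (c := ∫ w, conv f q w * (p' w : ℂ) * W w)]

lemma exists_norm_integral_flux_sub_mul_mollify_le (hK : IsBoundedCRKernel f g C) (γ : ℝ)
    (hM : 0 ≤ M) : ∃ C₀ : ℝ, 0 ≤ C₀ ∧ ∀ δ : ℝ, 0 < δ → ∀ p p' : ℂ → ℝ,
      IsBddVorticity M p → IsBddVorticity M p' →
      (Integrable fun z => ‖regVelocity δ (fun w => p w - p' w) z‖ ^ 2) →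
      ‖∫ w, (flux γ f p w - flux γ f p' w) * mollify δ (regVelocity δ fun w => p w - p' w) w‖ ≤
        C₀ * ((∫ z, ‖regVelocity δ (fun w => p w - p' w) z‖ ^ 2) +
          avgTranslationModulus f δ) := by
  obtain ⟨CV, hCV, hvel⟩ := exists_norm_conv_le_of_norm_le_inv
  have hC : 0 ≤ C := (norm_nonneg _).trans (hK.norm_deriv_le 0)
  have hm := mollifierMass_pos
  set b := CV * (2 * M)
  set cE := (M + |γ|) * (C / 4) + M / 4 * ((∫ w, ‖g w‖) * C / mollifierMass + mollifierMass)
  set cη := (M + |γ|) * (2 * M * b) + M * (2 * M * b)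
  have hcE : 0 ≤ cE := by positivity
  have hcη : 0 ≤ cη := by positivity
  refine ⟨cE + cη, by positivity, fun δ hδ p p' hp hp' hE => ?_⟩
  have hb : ∀ z, ‖regVelocity δ (fun w => p w - p' w) z‖ ≤ b :=
    hvel _ (norm_regCauchy_le_inv δ) _ _ (two_mul M ▸ hp.sub hp')
  refine (norm_integral_flux_sub_mul_mollify_le hK hδ γ hp hp' hb hE).trans ?_
  set E := ∫ z, ‖regVelocity δ (fun w => p w - p' w) z‖ ^ 2
  have hE₀ : 0 ≤ cη * E := mul_nonneg hcη (integral_nonneg fun z => sq_nonneg _)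
  have hη₀ := mul_nonneg hcE (avgTranslationModulus_nonneg f δ)
  calc _ = cE * E + cη * avgTranslationModulus f δ := by ring
    _ ≤ _ := by linarith

end FluxDifference

/-! ### Primitives in time and Grönwall's inequality -/

section Primitive

variable {a b T : ℝ} {f F P Q ψ : ℝ → ℝ}

lemma ae_deriv_primitive_eq (hf : IntervalIntegrable f volume a b) :
    ∀ᵐ s, s ∈ uIoc a b → deriv (fun t => ∫ u in a..t, f u) s = f s := by
  filter_upwards [hf.ae_hasDerivAt_integral] with s hs hs'
  exact (hs (uIoc_subset_uIcc hs') a left_mem_uIcc).deriv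

lemma integral_mul_eq_sub_integral_deriv_mul_primitive
    (hF : AbsolutelyContinuousOnInterval F a b) (hf : IntervalIntegrable f volume a b) :
    ∫ s in a..b, F s * f s =
      F b * (∫ u in a..b, f u) - ∫ s in a..b, deriv F s * ∫ u in a..s, f u := by
  have key := hF.integral_mul_deriv_eq_deriv_mul
    (hf.absolutelyContinuousOnInterval_intervalIntegral left_mem_uIcc)
  rw [intervalIntegral.integral_same, mul_zero, sub_zero] at key
  rw [← key]
  refine intervalIntegral.integral_congr_ae ?_
  filter_upwards [ae_deriv_primitive_eq hf] with s hs hs'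
  rw [hs hs']

lemma sq_primitive_eq (hf : IntervalIntegrable f volume a b) :
    (∫ s in a..b, f s) ^ 2 = 2 * ∫ s in a..b, (∫ u in a..s, f u) * f s := by
  have key := integral_mul_eq_sub_integral_deriv_mul_primitive
    (hf.absolutelyContinuousOnInterval_intervalIntegral left_mem_uIcc) hf
  have hderiv : ∫ s in a..b, deriv (fun t => ∫ u in a..t, f u) s * ∫ u in a..s, f u =
      ∫ s in a..b, (∫ u in a..s, f u) * f s := by
    refine intervalIntegral.integral_congr_ae ?_
    filter_upwards [ae_deriv_primitive_eq hf] with s hs hs'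
    rw [hs hs', mul_comm]
  rw [hderiv] at key
  linarith

lemma norm_sq_primitive_eq {A : ℝ → ℂ} (hA : IntervalIntegrable A volume a b) :
    ‖∫ s in a..b, A s‖ ^ 2 = 2 * (∫ s in a..b, conj (∫ u in a..s, A u) * A s).re := by
  have hre : IntervalIntegrable (fun s => (A s).re) volume a b := ⟨hA.1.re, hA.2.re⟩
  have him : IntervalIntegrable (fun s => (A s).im) volume a b := ⟨hA.1.im, hA.2.im⟩
  have hprim : ContinuousOn (fun s => ∫ u in a..s, A u) (uIcc a b) :=
    intervalIntegral.continuousOn_primitive_interval' hA left_mem_uIcc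
  have hpart : ∀ s ∈ uIcc a b, (∫ u in a..s, A u).re = ∫ u in a..s, (A u).re ∧
      (∫ u in a..s, A u).im = ∫ u in a..s, (A u).im := fun s hs =>
    have hAs := hA.mono_set (uIcc_subset_uIcc left_mem_uIcc hs)
    ⟨(intervalIntegral.intervalIntegral_re hAs).symm,
      (intervalIntegral.intervalIntegral_im hAs).symm⟩
  have hsplit : (∫ s in a..b, conj (∫ u in a..s, A u) * A s).re =
      ∫ s in a..b, ((∫ u in a..s, (A u).re) * (A s).re + (∫ u in a..s, (A u).im) * (A s).im) := by
    refine (intervalIntegral.intervalIntegral_re (hA.continuousOn_mul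
      (Complex.continuous_conj.comp_continuousOn hprim))).symm.trans
      (intervalIntegral.integral_congr fun s hs => ?_)
    rw [← (hpart s hs).1, ← (hpart s hs).2]
    simp
  rw [hsplit, intervalIntegral.integral_add
    (hre.continuousOn_mul (intervalIntegral.continuousOn_primitive_interval' hre left_mem_uIcc))
    (him.continuousOn_mul (intervalIntegral.continuousOn_primitive_interval' him left_mem_uIcc)),
    mul_add, ← sq_primitive_eq hre, ← sq_primitive_eq him, ← (hpart b right_mem_uIcc).1,
    ← (hpart b right_mem_uIcc).2, Complex.sq_norm, Complex.normSq_apply]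
  ring

lemma exists_contDiff_primitive (hψ : ContDiff ℝ (⊤ : ℕ∞) ψ) (b : ℝ) :
    ∃ p : ℝ → ℝ, ContDiff ℝ (⊤ : ℕ∞) p ∧ p b = 0 ∧ ∀ t, HasDerivAt p (ψ t) t := by
  have hp : ∀ t, HasDerivAt (fun t => ∫ s in b..t, ψ s) (ψ t) t := fun t =>
    intervalIntegral.integral_hasDerivAt_right (hψ.continuous.intervalIntegrable _ _)
      (hψ.continuous.stronglyMeasurableAtFilter _ _) hψ.continuous.continuousAt
  refine ⟨_, contDiff_infty_iff_deriv.2 ⟨fun t => (hp t).differentiableAt, ?_⟩,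
    intervalIntegral.integral_same, hp⟩
  rwa [show deriv (fun t => ∫ s in b..t, ψ s) = ψ from funext fun t => (hp t).deriv]

lemma exists_hasCompactSupport_deriv_eqOn (hT : 0 < T) (hψ : ContDiff ℝ (⊤ : ℕ∞) ψ)
    (hψT : ∀ t, T ≤ t → ψ t = 0) :
    ∃ F : ℝ → ℝ, ContDiff ℝ (⊤ : ℕ∞) F ∧ HasCompactSupport F ∧ (∀ t, T ≤ t → F t = 0) ∧
      ∀ t ∈ Ioo 0 T, deriv F t = ψ t := by
  obtain ⟨p, hp, hpT, hpψ⟩ := exists_contDiff_primitive hψ T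
  have hp₀ : ∀ t, T ≤ t → p t = 0 := fun t ht =>
    (constant_of_has_deriv_right_zero hp.continuous.continuousOn
      (fun s hs => by simpa only [hψT s hs.1] using (hpψ s).hasDerivWithinAt)
      t (right_mem_Icc.2 ht)).trans hpT
  let χ : ContDiffBump (0 : ℝ) := ⟨T, T + 1, hT, lt_add_one T⟩
  refine ⟨fun t => χ t * p t, χ.contDiff.mul hp, χ.hasCompactSupport.mul_right,
    fun t ht => by simp only [hp₀ t ht, mul_zero], fun t ht => ?_⟩
  have hχ : (fun t => χ t * p t) =ᶠ[𝓝 t] p := by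
    filter_upwards [isOpen_Ioo.mem_nhds ht] with s hs
    rw [χ.one_of_mem_closedBall, one_mul]
    rw [mem_closedBall_zero_iff, Real.norm_of_nonneg hs.1.le]
    exact hs.2.le
  rw [hχ.deriv_eq, (hpψ t).deriv]

-- The test functions need not vanish at `0`, which encodes the zero initial value of `Q`.
lemma ae_eq_primitive_of_integral_deriv_mul_add_eq_zero (hT : 0 < T)
    (hQ : IntervalIntegrable Q volume 0 T) (hP : IntervalIntegrable P volume 0 T)
    (h : ∀ F : ℝ → ℝ, ContDiff ℝ (⊤ : ℕ∞) F → HasCompactSupport F → (∀ t, T ≤ t → F t = 0) →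
      ∫ t in 0..T, (deriv F t * Q t + F t * P t) = 0) :
    ∀ᵐ t, t ∈ Ioo 0 T → Q t = ∫ s in 0..t, P s := by
  have hN : IntervalIntegrable (fun t => ∫ s in 0..t, P s) volume 0 T :=
    (intervalIntegral.continuousOn_primitive_interval' hP left_mem_uIcc).intervalIntegrable
  have hint : IntegrableOn (fun t => Q t - ∫ s in 0..t, P s) (Ioo 0 T) :=
    ((hQ.sub hN).1).mono_set Ioo_subset_Ioc_self
  have key : ∀ᵐ t, t ∈ Ioo 0 T → Q t - ∫ s in 0..t, P s = 0 := by
    refine isOpen_Ioo.ae_eq_zero_of_integral_contDiff_smul_eq_zero hint.locallyIntegrableOn ?_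
    intro ψ hψ _ hψT
    have hψ₀ : ∀ t ∉ Ioo 0 T, ψ t = 0 := fun t ht =>
      image_eq_zero_of_notMem_tsupport fun h' => ht (hψT h')
    obtain ⟨F, hF, hFc, hFT, hFψ⟩ := exists_hasCompactSupport_deriv_eqOn hT hψ fun t ht =>
      hψ₀ t fun h' => ht.not_gt h'.2
    have hF' : Continuous (deriv F) := hF.continuous_deriv (by simp)
    have hFN := integral_mul_eq_sub_integral_deriv_mul_primitive
      (hF.of_le (by simp)).contDiffOn.absolutelyContinuousOnInterval hP
    have hFQ := h F hF hFc hFT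
    rw [intervalIntegral.integral_add (hQ.continuousOn_mul hF'.continuousOn)
      (hP.continuousOn_mul hF.continuous.continuousOn), hFN, hFT T le_rfl] at hFQ
    calc ∫ t, ψ t • (Q t - ∫ s in 0..t, P s)
        = ∫ t in Ioo 0 T, ψ t • (Q t - ∫ s in 0..t, P s) :=
          (setIntegral_eq_integral_of_forall_compl_eq_zero fun t ht => by
            rw [hψ₀ t ht, zero_smul]).symm
      _ = ∫ t in Ioo 0 T, (deriv F t * Q t - deriv F t * ∫ s in 0..t, P s) :=
          setIntegral_congr_fun measurableSet_Ioo fun t ht => by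
            simp only [hFψ t ht, smul_eq_mul, mul_sub]
      _ = 0 := by
          rw [← integral_Ioc_eq_integral_Ioo, ← intervalIntegral.integral_of_le hT.le,
            intervalIntegral.integral_sub (hQ.continuousOn_mul hF'.continuousOn)
              (hN.continuousOn_mul hF'.continuousOn)]
          linarith
  filter_upwards [key] with t ht h₁
  exact sub_eq_zero.1 (ht h₁)

lemma le_mul_exp_of_le_mul_integral {C η : ℝ} {E : ℝ → ℝ} (hC : 0 < C) (hη : 0 ≤ η)
    (hE : Continuous E) (hE₀ : ∀ t, 0 ≤ E t)
    (h : ∀ t ∈ Icc 0 T, E t ≤ C * ∫ s in 0..t, (E s + η)) {t : ℝ} (ht : t ∈ Icc 0 T) :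
    E t ≤ η * Real.exp (C * t) := by
  have hcont : Continuous fun s => E s + η := hE.add continuous_const
  have hderiv : ∀ s, HasDerivAt (fun t => ∫ s in 0..t, (E s + η)) (E s + η) s := fun s =>
    intervalIntegral.integral_hasDerivAt_right (hcont.intervalIntegrable _ _)
      (hcont.stronglyMeasurableAtFilter _ _) hcont.continuousAt
  have hnonneg : ∀ s, 0 ≤ s → 0 ≤ ∫ r in 0..s, (E r + η) := fun s hs =>
    intervalIntegral.integral_nonneg hs fun r _ => add_nonneg (hE₀ r) hη
  have hgron := norm_le_gronwallBound_of_norm_deriv_right_le (δ := 0) (K := C) (ε := η) (b := T)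
    (fun s _ => (hderiv s).continuousAt.continuousWithinAt)
    (fun s _ => (hderiv s).hasDerivWithinAt) (by simp) (fun s hs => by
      rw [Real.norm_of_nonneg (add_nonneg (hE₀ s) hη), Real.norm_of_nonneg (hnonneg s hs.1)]
      linarith [h s (Ico_subset_Icc_self hs)]) t ht
  rw [Real.norm_of_nonneg (hnonneg t ht.1), gronwallBound_of_K_ne_0 hC.ne', sub_zero] at hgron
  simp only [zero_mul, zero_add] at hgron
  calc E t ≤ C * ∫ s in 0..t, (E s + η) := h t ht
    _ ≤ C * (η / C * (Real.exp (C * t) - 1)) := by gcongr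
    _ = η * (Real.exp (C * t) - 1) := by field_simp
    _ ≤ η * Real.exp (C * t) := by gcongr; exact sub_le_self _ zero_le_one

end Primitive

/-! ### Weak solutions of a transport equation -/

section Transport

/-- A bounded, compactly supported weak solution on `(0, T)` of `∂ₜ q + div m = 0` with zero
initial datum, for which the regularised velocity satisfies an energy estimate. Test functions are
products of a function of time, which need not vanish at time `0`, and a function of space. -/
structure IsWeakTransport (T R M : ℝ) (q : ℝ → ℂ → ℝ) (m : ℝ → ℂ → ℂ) : Prop where
  measurable : Measurable fun p : ℝ × ℂ => q p.1 p.2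
  measurable_flux : Measurable fun p : ℝ × ℂ => m p.1 p.2
  isBdd : ∀ t, IsBddVorticity M (q t)
  eq_zero : ∀ t z, R < ‖z‖ → q t z = 0
  integrable_flux : ∀ t, Integrable (m t)
  integral_flux_le : ∀ t, ∫ z, ‖m t z‖ ≤ M
  flux_eq_zero : ∀ t z, R < ‖z‖ → m t z = 0
  weak : ∀ (a : ℝ → ℝ) (b : ℂ → ℝ), ContDiff ℝ (⊤ : ℕ∞) a → HasCompactSupport a →
    ContDiff ℝ (⊤ : ℕ∞) b → HasCompactSupport b → (∀ t, T ≤ t → a t = 0) →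
    ∫ t in 0..T, (deriv a t * (∫ z, q t z * b z) + a t * ∫ z, fderiv ℝ b z (m t z)) = 0

variable {T R M δ : ℝ} {q : ℝ → ℂ → ℝ} {m : ℝ → ℂ → ℂ}

lemma japanese_sq_le_of_norm_le {w : ℂ} (hw : ‖w‖ ≤ R) : japanese w ^ 2 ≤ 1 + R ^ 2 := by
  rw [japanese_sq]
  gcongr

lemma integrable_japanese_sq_mul (h : IsWeakTransport T R M q m) (t : ℝ) :
    Integrable fun w => japanese w ^ 2 * |q t w| := by
  refine ((h.isBdd t).integrable.abs.const_mul (1 + R ^ 2)).mono'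
    ((continuous_japanese.pow 2).measurable.mul (h.isBdd t).measurable.abs).aestronglyMeasurable
    (Eventually.of_forall fun w => ?_)
  rw [Real.norm_of_nonneg (by positivity)]
  rcases le_or_gt ‖w‖ R with hw | hw
  · gcongr
    exact japanese_sq_le_of_norm_le hw
  · simp [h.eq_zero t w hw]

lemma norm_fderiv_regCauchy_flux_le (h : IsWeakTransport T R M q m) (hδ : 0 < δ) (hδ₁ : δ ≤ 1)
    (t : ℝ) (z w : ℂ) :
    ‖fderiv ℝ (regCauchy δ) (z - w) (m t w)‖ ≤
      2 * (1 + R ^ 2) / δ ^ 2 / japanese z ^ 2 * ‖m t w‖ := by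
  rcases le_or_gt ‖w‖ R with hw | hw
  · calc ‖fderiv ℝ (regCauchy δ) (z - w) (m t w)‖
        ≤ 2 * japanese w ^ 2 / δ ^ 2 * ‖m t w‖ / japanese z ^ 2 :=
          norm_fderiv_regCauchy_sub_le hδ hδ₁ z w _
      _ ≤ 2 * (1 + R ^ 2) / δ ^ 2 * ‖m t w‖ / japanese z ^ 2 := by
          gcongr
          exact japanese_sq_le_of_norm_le hw
      _ = 2 * (1 + R ^ 2) / δ ^ 2 / japanese z ^ 2 * ‖m t w‖ := by ring
  · simp [h.flux_eq_zero t w hw]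

lemma integrable_fderiv_regCauchy_flux (h : IsWeakTransport T R M q m) (hδ : 0 < δ) (hδ₁ : δ ≤ 1)
    (t : ℝ) (z : ℂ) : Integrable fun w => fderiv ℝ (regCauchy δ) (z - w) (m t w) :=
  ((h.integrable_flux t).norm.const_mul _).mono'
    ((continuous_fderiv_regCauchy_apply hδ).measurable.comp
      ((measurable_const.sub measurable_id).prodMk
        (h.measurable_flux.comp measurable_prodMk_left))).aestronglyMeasurable
    (Eventually.of_forall (norm_fderiv_regCauchy_flux_le h hδ hδ₁ t z))

lemma norm_forcing_le (h : IsWeakTransport T R M q m) (hδ : 0 < δ) (hδ₁ : δ ≤ 1) (t : ℝ)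
    (z : ℂ) : ‖forcing δ (m t) z‖ ≤ 2 * (1 + R ^ 2) / δ ^ 2 * M / japanese z ^ 2 := by
  rw [forcing, norm_neg]
  refine (norm_integral_le_of_norm_le ((h.integrable_flux t).norm.const_mul _)
    (Eventually.of_forall (norm_fderiv_regCauchy_flux_le h hδ hδ₁ t z))).trans ?_
  rw [integral_const_mul, div_mul_eq_mul_div]
  gcongr
  exact h.integral_flux_le t

lemma stronglyMeasurable_forcing (h : IsWeakTransport T R M q m) (hδ : 0 < δ) :
    StronglyMeasurable fun p : ℝ × ℂ => forcing δ (m p.1) p.2 := by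
  have hmeas : Measurable fun p : (ℝ × ℂ) × ℂ =>
      fderiv ℝ (regCauchy δ) (p.1.2 - p.2) (m p.1.1 p.2) :=
    (continuous_fderiv_regCauchy_apply hδ).measurable.comp
      ((measurable_fst.snd.sub measurable_snd).prodMk
        (h.measurable_flux.comp (measurable_fst.fst.prodMk measurable_snd)))
  exact hmeas.stronglyMeasurable.integral_prod_right.neg

lemma stronglyMeasurable_regVelocity (h : IsWeakTransport T R M q m) (hδ : 0 < δ) :
    StronglyMeasurable fun p : ℝ × ℂ => regVelocity δ (q p.1) p.2 := by
  have hmeas : Measurable fun p : (ℝ × ℂ) × ℂ => regCauchy δ (p.1.2 - p.2) * (q p.1.1 p.2 : ℂ) :=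
    ((contDiff_regCauchy hδ (n := 1)).continuous.measurable.comp
      (measurable_fst.snd.sub measurable_snd)).mul
      (Complex.measurable_ofReal.comp
        (h.measurable.comp (measurable_fst.fst.prodMk measurable_snd)))
  exact hmeas.stronglyMeasurable.integral_prod_right

lemma intervalIntegrable_forcing (h : IsWeakTransport T R M q m) (hδ : 0 < δ) (hδ₁ : δ ≤ 1)
    (z : ℂ) (a b : ℝ) :
    IntervalIntegrable (fun s => forcing δ (m s) z) volume a b :=
  intervalIntegrable_const.mono_fun
    ((stronglyMeasurable_forcing h hδ).comp_measurable
      (measurable_id.prodMk measurable_const)).aestronglyMeasurable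
    (Eventually.of_forall fun s => (norm_forcing_le h hδ hδ₁ s z).trans (Real.le_norm_self _))

lemma norm_regVelocity_le (hδ : 0 < δ) {q : ℂ → ℝ} (hq : Integrable q) (z : ℂ) :
    ‖regVelocity δ q z‖ ≤ 1 / (2 * δ) * ∫ w, |q w| := by
  rw [regVelocity, conv, ← integral_const_mul]
  refine norm_integral_le_of_norm_le (hq.abs.const_mul _) (Eventually.of_forall fun w => ?_)
  rw [norm_mul, Complex.norm_real, Real.norm_eq_abs]
  gcongr
  exact norm_regCauchy_le hδ _

lemma intervalIntegrable_regVelocity (h : IsWeakTransport T R M q m) (hδ : 0 < δ) (z : ℂ)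
    (a b : ℝ) : IntervalIntegrable (fun s => regVelocity δ (q s) z) volume a b := by
  refine (intervalIntegrable_const (c := 1 / (2 * δ) * M)).mono_fun
    ((stronglyMeasurable_regVelocity h hδ).comp_measurable
      (measurable_id.prodMk measurable_const)).aestronglyMeasurable
    (Eventually.of_forall fun s => ?_)
  refine ((norm_regVelocity_le hδ (h.isBdd s).integrable z).trans ?_).trans (Real.le_norm_self _)
  gcongr
  exact (h.isBdd s).integral_le

lemma exists_hasCompactSupport_eq_of_norm_le {f : ℂ → ℝ} (hf : ContDiff ℝ (⊤ : ℕ∞) f) (R : ℝ) :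
    ∃ b : ℂ → ℝ, ContDiff ℝ (⊤ : ℕ∞) b ∧ HasCompactSupport b ∧
      ∀ w, ‖w‖ ≤ R → b w = f w ∧ fderiv ℝ b w = fderiv ℝ f w := by
  let χ : ContDiffBump (0 : ℂ) := ⟨|R| + 1, |R| + 2, by positivity, by linarith⟩
  have hχ : EqOn (fun w => χ w * f w) f (Metric.ball 0 (|R| + 1)) := fun w hw => by
    simp only [χ.one_of_mem_closedBall (Metric.ball_subset_closedBall hw), one_mul]
  refine ⟨fun w => χ w * f w, χ.contDiff.mul hf, χ.hasCompactSupport.mul_right, fun w hw => ?_⟩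
  have hmem : w ∈ Metric.ball (0 : ℂ) (|R| + 1) := by
    rw [mem_ball_zero_iff]
    linarith [le_abs_self R]
  exact ⟨hχ hmem, (hχ.eventuallyEq_of_mem (Metric.isOpen_ball.mem_nhds hmem)).fderiv_eq⟩

lemma exists_test_function_regCauchy (h : IsWeakTransport T R M q m) (hδ : 0 < δ) (hδ₁ : δ ≤ 1)
    (z : ℂ) (L : ℂ →L[ℝ] ℝ) :
    ∃ b : ℂ → ℝ, ContDiff ℝ (⊤ : ℕ∞) b ∧ HasCompactSupport b ∧ ∀ t,
      (∫ w, q t w * b w = L (regVelocity δ (q t) z)) ∧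
      ∫ w, fderiv ℝ b w (m t w) = L (forcing δ (m t) z) := by
  have hk : ContDiff ℝ (⊤ : ℕ∞) (regCauchy δ) := contDiff_regCauchy hδ
  have hf : ContDiff ℝ (⊤ : ℕ∞) fun w => L (regCauchy δ (z - w)) :=
    L.contDiff.comp (hk.comp (contDiff_const.sub contDiff_id))
  have hf' : ∀ w v, fderiv ℝ (fun w => L (regCauchy δ (z - w))) w v =
      -L (fderiv ℝ (regCauchy δ) (z - w) v) := fun w v => by
    have hd := (hk.differentiable (by simp) (z - w)).hasFDerivAt
    have hLd : HasFDerivAt (fun w => L (regCauchy δ (z - w))) _ w :=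
      L.hasFDerivAt.comp w (hd.comp w ((hasFDerivAt_id w).const_sub z))
    rw [hLd.fderiv]
    simp
  obtain ⟨b, hb, hbc, hbf⟩ := exists_hasCompactSupport_eq_of_norm_le hf R
  refine ⟨b, hb, hbc, fun t => ⟨?_, ?_⟩⟩
  · rw [regVelocity, conv, ← L.integral_comp_comm (integrable_comp_sub_mul hk.continuous
      (norm_regCauchy_le hδ) (h.isBdd t).integrable z)]
    refine integral_congr_ae (Eventually.of_forall fun w => ?_)
    rcases le_or_gt ‖w‖ R with hw | hw
    · simp only [(hbf w hw).1]
      rw [mul_comm (regCauchy δ (z - w)), ← Complex.real_smul, map_smul, smul_eq_mul]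
    · simp [h.eq_zero t w hw]
  · rw [forcing, map_neg, ← L.integral_comp_comm (integrable_fderiv_regCauchy_flux h hδ hδ₁ t z),
      ← integral_neg]
    refine integral_congr_ae (Eventually.of_forall fun w => ?_)
    rcases le_or_gt ‖w‖ R with hw | hw
    · simp only [(hbf w hw).2, hf']
    · simp [h.flux_eq_zero t w hw]

lemma ae_apply_regVelocity_eq (h : IsWeakTransport T R M q m) (hT : 0 < T) (hδ : 0 < δ)
    (hδ₁ : δ ≤ 1) (z : ℂ) (L : ℂ →L[ℝ] ℝ) :
    ∀ᵐ t, t ∈ Ioo 0 T → L (regVelocity δ (q t) z) = L (∫ s in 0..t, forcing δ (m s) z) := by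
  have hV := intervalIntegrable_regVelocity h hδ z 0 T
  have hA := intervalIntegrable_forcing h hδ hδ₁ z 0
  obtain ⟨b, hb, hbc, hbq⟩ := exists_test_function_regCauchy h hδ hδ₁ z L
  filter_upwards [ae_eq_primitive_of_integral_deriv_mul_add_eq_zero hT
    (Q := fun t => L (regVelocity δ (q t) z)) (P := fun t => L (forcing δ (m t) z))
    ⟨L.integrable_comp hV.1, L.integrable_comp hV.2⟩
    ⟨L.integrable_comp (hA T).1, L.integrable_comp (hA T).2⟩
    fun a ha hac haT => by simpa only [hbq] using h.weak a b ha hac hb hbc haT] with t ht htT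
  rw [ht htT, L.intervalIntegral_comp_comm (hA t)]

lemma ae_regVelocity_eq (h : IsWeakTransport T R M q m) (hT : 0 < T) (hδ : 0 < δ) (hδ₁ : δ ≤ 1)
    (z : ℂ) : ∀ᵐ t, t ∈ Ioo 0 T → regVelocity δ (q t) z = ∫ s in 0..t, forcing δ (m s) z := by
  filter_upwards [ae_apply_regVelocity_eq h hT hδ hδ₁ z Complex.reCLM,
    ae_apply_regVelocity_eq h hT hδ hδ₁ z Complex.imCLM] with t hre him ht
  exact Complex.ext (hre ht) (him ht)

end Transport

/-! ### The energy estimate -/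

section TimePrimitive

variable {X : Type*} {A : ℝ → X → ℂ} {g : X → ℝ} {t : ℝ}

/-- The primitive in time, vanishing at time `0`, of a time-dependent function. The regularised
velocity of a weak transport solution is the time primitive of its forcing. -/
def timePrimitive (A : ℝ → X → ℂ) (t : ℝ) (x : X) : ℂ := ∫ s in 0..t, A s x

lemma norm_timePrimitive_le (hAg : ∀ s x, ‖A s x‖ ≤ g x) (t : ℝ) (x : X) :
    ‖timePrimitive A t x‖ ≤ |t| * g x := by
  simpa only [timePrimitive, sub_zero, mul_comm] using
    intervalIntegral.norm_integral_le_of_norm_le_const (a := 0) (b := t) fun s _ => hAg s x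

variable [MeasurableSpace X] {μ : Measure X}

lemma intervalIntegrable_of_norm_le (hA : Measurable fun p : ℝ × X => A p.1 p.2)
    (hAg : ∀ s x, ‖A s x‖ ≤ g x) (x : X) (a b : ℝ) :
    IntervalIntegrable (fun s => A s x) volume a b :=
  intervalIntegrable_const.mono_fun (hA.comp measurable_prodMk_right).aestronglyMeasurable
    (Eventually.of_forall fun s => (hAg s x).trans (Real.le_norm_self _))

lemma measurable_timePrimitive (hA : Measurable fun p : ℝ × X => A p.1 p.2)
    (hAg : ∀ s x, ‖A s x‖ ≤ g x) :
    Measurable fun p : ℝ × X => timePrimitive A p.1 p.2 := by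
  refine measurable_uncurry_of_continuous_of_measurable
    (fun x => intervalIntegral.continuous_primitive (intervalIntegrable_of_norm_le hA hAg x) 0)
    fun t => ?_
  have hswap : StronglyMeasurable fun p : X × ℝ => A p.2 p.1 :=
    (hA.comp measurable_swap).stronglyMeasurable
  exact (hswap.integral_prod_right'.sub hswap.integral_prod_right').measurable

lemma integrable_sq_timePrimitive (hA : Measurable fun p : ℝ × X => A p.1 p.2)
    (hAg : ∀ s x, ‖A s x‖ ≤ g x) (hg : Integrable (fun x => g x ^ 2) μ) (t : ℝ) :
    Integrable (fun x => ‖timePrimitive A t x‖ ^ 2) μ := by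
  refine (hg.const_mul (t ^ 2)).mono' (((measurable_timePrimitive hA hAg).comp
    measurable_prodMk_left).norm.pow_const 2).aestronglyMeasurable
    (Eventually.of_forall fun x => ?_)
  rw [norm_pow, norm_norm, ← sq_abs t, ← mul_pow]
  gcongr
  exact norm_timePrimitive_le hAg t x

lemma integrable_conj_timePrimitive_mul (hA : Measurable fun p : ℝ × X => A p.1 p.2)
    (hAg : ∀ s x, ‖A s x‖ ≤ g x) (hg : Integrable (fun x => g x ^ 2) μ) (t : ℝ) :
    Integrable (fun p : ℝ × X => conj (timePrimitive A p.1 p.2) * A p.1 p.2)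
      ((volume.restrict (uIoc 0 t)).prod μ) := by
  have hbound : Integrable (fun p : ℝ × X => |t| * g p.2 ^ 2)
      ((volume.restrict (uIoc 0 t)).prod μ) :=
    Integrable.mul_prod (f := fun _ => |t|)
      (intervalIntegrable_iff.1 intervalIntegrable_const) hg
  refine hbound.mono' ((Complex.continuous_conj.measurable.comp
    (measurable_timePrimitive hA hAg)).mul hA).aestronglyMeasurable ?_
  filter_upwards [Measure.quasiMeasurePreserving_fst.ae (ae_restrict_mem measurableSet_uIoc)]
    with p hp
  have hpt : |p.1| ≤ |t| := by
    simpa using abs_sub_left_of_mem_uIcc (uIoc_subset_uIcc hp)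
  have hg₀ : 0 ≤ g p.2 := (norm_nonneg _).trans (hAg p.1 p.2)
  calc ‖conj (timePrimitive A p.1 p.2) * A p.1 p.2‖
      = ‖timePrimitive A p.1 p.2‖ * ‖A p.1 p.2‖ := by rw [norm_mul, RCLike.norm_conj]
    _ ≤ |p.1| * g p.2 * g p.2 := by
        gcongr
        exacts [norm_timePrimitive_le hAg _ _, hAg _ _]
    _ ≤ |t| * g p.2 * g p.2 := by gcongr
    _ = |t| * g p.2 ^ 2 := by ring

variable [SFinite μ]

lemma intervalIntegrable_re_integral_conj_timePrimitive_mul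
    (hA : Measurable fun p : ℝ × X => A p.1 p.2) (hAg : ∀ s x, ‖A s x‖ ≤ g x)
    (hg : Integrable (fun x => g x ^ 2) μ) (a b : ℝ) :
    IntervalIntegrable (fun s => (∫ x, conj (timePrimitive A s x) * A s x ∂μ).re) volume a b := by
  have hi (t : ℝ) : IntervalIntegrable (fun s => (∫ x, conj (timePrimitive A s x) * A s x ∂μ).re)
      volume 0 t :=
    intervalIntegrable_iff.2 (integrable_conj_timePrimitive_mul hA hAg hg t).integral_prod_left.re
  exact (hi a).symm.trans (hi b)

lemma integral_sq_timePrimitive (hA : Measurable fun p : ℝ × X => A p.1 p.2)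
    (hAg : ∀ s x, ‖A s x‖ ≤ g x) (hg : Integrable (fun x => g x ^ 2) μ) (t : ℝ) :
    ∫ x, ‖timePrimitive A t x‖ ^ 2 ∂μ =
      2 * ∫ s in 0..t, (∫ x, conj (timePrimitive A s x) * A s x ∂μ).re := by
  have hi := integrable_conj_timePrimitive_mul hA hAg hg t
  have hsq (x : X) : ‖timePrimitive A t x‖ ^ 2 =
      2 * (∫ s in 0..t, conj (timePrimitive A s x) * A s x).re :=
    norm_sq_primitive_eq (intervalIntegrable_of_norm_le hA hAg x 0 t)
  calc ∫ x, ‖timePrimitive A t x‖ ^ 2 ∂μ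
      = ∫ x, 2 * (∫ s in 0..t, conj (timePrimitive A s x) * A s x).re ∂μ := by simp only [hsq]
    _ = 2 * ∫ x, (∫ s in 0..t, (conj (timePrimitive A s x) * A s x).re) ∂μ := by
        rw [integral_const_mul]
        congr 1
        refine integral_congr_ae ?_
        filter_upwards [hi.prod_left_ae] with x hx
        exact (intervalIntegral.intervalIntegral_re (intervalIntegrable_iff.2 hx)).symm
    _ = 2 * ∫ s in 0..t, (∫ x, (conj (timePrimitive A s x) * A s x).re ∂μ) := by
        rw [intervalIntegral_integral_swap hi.re]
    _ = 2 * ∫ s in 0..t, (∫ x, conj (timePrimitive A s x) * A s x ∂μ).re := by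
        simp only [intervalIntegral.intervalIntegral_eq_integral_uIoc]
        congr 2
        refine integral_congr_ae ?_
        filter_upwards [hi.prod_right_ae] with s hs
        exact integral_re hs

lemma continuous_integral_sq_timePrimitive (hA : Measurable fun p : ℝ × X => A p.1 p.2)
    (hAg : ∀ s x, ‖A s x‖ ≤ g x) (hg : Integrable (fun x => g x ^ 2) μ) :
    Continuous fun t => ∫ x, ‖timePrimitive A t x‖ ^ 2 ∂μ := by
  simp only [integral_sq_timePrimitive hA hAg hg]
  exact (intervalIntegral.continuous_primitive
    (intervalIntegrable_re_integral_conj_timePrimitive_mul hA hAg hg) 0).const_mul 2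

lemma integral_sq_timePrimitive_le (hA : Measurable fun p : ℝ × X => A p.1 p.2)
    (hAg : ∀ s x, ‖A s x‖ ≤ g x) (hg : Integrable (fun x => g x ^ 2) μ) {T C η : ℝ}
    (hC : 0 < C) (hη : 0 ≤ η) (h : ∀ᵐ s, s ∈ Ioo 0 T →
      2 * (∫ x, conj (timePrimitive A s x) * A s x ∂μ).re ≤
        C * ((∫ x, ‖timePrimitive A s x‖ ^ 2 ∂μ) + η)) (ht : t ∈ Icc 0 T) :
    ∫ x, ‖timePrimitive A t x‖ ^ 2 ∂μ ≤ η * Real.exp (C * t) := by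
  have hE := continuous_integral_sq_timePrimitive hA hAg hg
  refine le_mul_exp_of_le_mul_integral (E := fun t => ∫ x, ‖timePrimitive A t x‖ ^ 2 ∂μ) hC hη hE
    (fun t => integral_nonneg fun x => sq_nonneg _) (fun t ht => ?_) ht
  rw [integral_sq_timePrimitive hA hAg hg, ← intervalIntegral.integral_const_mul,
    ← intervalIntegral.integral_const_mul]
  rw [intervalIntegral.integral_of_le ht.1, intervalIntegral.integral_of_le ht.1,
    integral_Ioc_eq_integral_Ioo, integral_Ioc_eq_integral_Ioo]
  have hprod := (intervalIntegrable_re_integral_conj_timePrimitive_mul hA hAg hg 0 t).const_mul 2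
  have hbound : IntervalIntegrable (fun s => C * ((∫ x, ‖timePrimitive A s x‖ ^ 2 ∂μ) + η))
      volume 0 t := (continuous_const.mul (hE.add continuous_const)).intervalIntegrable 0 t
  refine setIntegral_mono_on_ae
    ((intervalIntegrable_iff_integrableOn_Ioo_of_le ht.1).1 hprod)
    ((intervalIntegrable_iff_integrableOn_Ioo_of_le ht.1).1 hbound) measurableSet_Ioo ?_
  filter_upwards [h] with s hs hst
  exact hs (Ioo_subset_Ioo_right ht.2 hst)

end TimePrimitive

section EnergyEstimate

variable {T R M δ : ℝ} {q : ℝ → ℂ → ℝ} {m : ℝ → ℂ → ℂ} {t : ℝ}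

lemma integrable_sq_div_japanese_sq (B : ℝ) : Integrable fun z : ℂ => (B / japanese z ^ 2) ^ 2 := by
  refine ((integrable_inv_japanese_pow (E := ℂ) (n := 4) (by simp)).const_mul (B ^ 2)).congr
    (Eventually.of_forall fun z => ?_)
  ring

lemma ae_regVelocity_ae_eq_timePrimitive (h : IsWeakTransport T R M q m) (hT : 0 < T)
    (hδ : 0 < δ) (hδ₁ : δ ≤ 1) : ∀ᵐ t, t ∈ Ioo 0 T →
      regVelocity δ (q t) =ᵐ[volume] timePrimitive (fun s => forcing δ (m s)) t := by
  have hprim : Measurable fun p : ℝ × ℂ => timePrimitive (fun s => forcing δ (m s)) p.1 p.2 :=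
    measurable_timePrimitive (stronglyMeasurable_forcing h hδ).measurable
      (norm_forcing_le h hδ hδ₁)
  have hmeas : MeasurableSet {p : ℂ × ℝ | p.2 ∈ Ioo 0 T →
      regVelocity δ (q p.2) p.1 = timePrimitive (fun s => forcing δ (m s)) p.2 p.1} := by
    have hIoo : MeasurableSet {p : ℂ × ℝ | p.2 ∈ Ioo 0 T} := measurable_snd measurableSet_Ioo
    have heq : MeasurableSet {p : ℂ × ℝ | regVelocity δ (q p.2) p.1 =
        timePrimitive (fun s => forcing δ (m s)) p.2 p.1} :=
      measurableSet_eq_fun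
        ((stronglyMeasurable_regVelocity h hδ).comp_measurable measurable_swap).measurable
        (hprim.comp measurable_swap)
    exact hIoo.imp heq
  filter_upwards [(Measure.ae_ae_comm (μ := volume) (ν := volume) hmeas).1
    (Eventually.of_forall (ae_regVelocity_eq h hT hδ hδ₁))] with t ht htT
  filter_upwards [ht] with z hz using hz htT

lemma norm_regVelocity_le_of_ae_eq (h : IsWeakTransport T R M q m) (hδ : 0 < δ) (hδ₁ : δ ≤ 1)
    (he : regVelocity δ (q t) =ᵐ[volume] timePrimitive (fun s => forcing δ (m s)) t) (z : ℂ) :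
    ‖regVelocity δ (q t) z‖ ≤ |t| * (2 * (1 + R ^ 2) / δ ^ 2 * M) / japanese z ^ 2 := by
  have hV : Continuous (regVelocity δ (q t)) :=
    (contDiff_regVelocity hδ (h.isBdd t).integrable).continuous
  have hg : Continuous fun z : ℂ => |t| * (2 * (1 + R ^ 2) / δ ^ 2 * M) / japanese z ^ 2 :=
    continuous_const.div (continuous_japanese.pow 2) fun z => (pow_pos (japanese_pos z) 2).ne'
  have hmax := (Continuous.ae_eq_iff_eq volume (hV.norm.max hg) hg).1 <| by
    filter_upwards [he] with w hw
    rw [hw, max_eq_right]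
    simpa only [mul_div_assoc] using norm_timePrimitive_le (norm_forcing_le h hδ hδ₁) t w
  exact max_eq_right_iff.1 (congrFun hmax z)

lemma integrable_flux_mul_mollify_regVelocity (h : IsWeakTransport T R M q m) (hδ : 0 < δ)
    (t : ℝ) : Integrable fun w => m t w * mollify δ (regVelocity δ (q t)) w :=
  (h.integrable_flux t).mul_bdd
    (measurable_mollify hδ
      (contDiff_regVelocity hδ (h.isBdd t).integrable).continuous.measurable).aestronglyMeasurable
    (Eventually.of_forall
      (norm_mollify_le hδ (norm_regVelocity_le hδ (h.isBdd t).integrable)))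

lemma two_mul_re_integral_conj_timePrimitive_mul_forcing_le (h : IsWeakTransport T R M q m)
    (hδ : 0 < δ) (hδ₁ : δ ≤ 1) {B : ℝ}
    (hB : ‖∫ w, m t w * mollify δ (regVelocity δ (q t)) w‖ ≤ B)
    (he : regVelocity δ (q t) =ᵐ[volume] timePrimitive (fun s => forcing δ (m s)) t) :
    2 * (∫ z, conj (timePrimitive (fun s => forcing δ (m s)) t z) * forcing δ (m t) z).re ≤
      4 * B := by
  have hcongr : ∫ z, conj (timePrimitive (fun s => forcing δ (m s)) t z) * forcing δ (m t) z =
      ∫ z, conj (regVelocity δ (q t) z) * forcing δ (m t) z :=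
    integral_congr_ae <| by filter_upwards [he] with z hz; rw [hz]
  have hre : ∫ w, (m t w * mollify δ (regVelocity δ (q t)) w).re =
      (∫ w, m t w * mollify δ (regVelocity δ (q t)) w).re :=
    integral_re (integrable_flux_mul_mollify_regVelocity h hδ t)
  rw [hcongr, re_integral_conj_regVelocity_mul_forcing hδ hδ₁ (h.isBdd t).integrable
    (integrable_japanese_sq_mul h t) (norm_regVelocity_le_of_ae_eq h hδ hδ₁ he)
    (h.integrable_flux t), hre]
  linarith [(abs_le.1 ((Complex.abs_re_le_norm _).trans hB)).1]

lemma integral_sq_regVelocity_le (h : IsWeakTransport T R M q m) (hT : 0 < T) (hδ : 0 < δ)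
    (hδ₁ : δ ≤ 1) {C η : ℝ} (hC : 0 ≤ C) (hη : 0 ≤ η)
    (hflux : ∀ t, Integrable (fun z => ‖regVelocity δ (q t) z‖ ^ 2) →
      ‖∫ w, m t w * mollify δ (regVelocity δ (q t)) w‖ ≤
        C * ((∫ z, ‖regVelocity δ (q t) z‖ ^ 2) + η)) :
    ∀ᵐ t, t ∈ Ioo 0 T → Integrable (fun z => ‖regVelocity δ (q t) z‖ ^ 2) ∧
      ∫ z, ‖regVelocity δ (q t) z‖ ^ 2 ≤ η * Real.exp (4 * (C + 1) * t) := by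
  have hA := (stronglyMeasurable_forcing h hδ).measurable
  have hAg := norm_forcing_le h hδ hδ₁
  have hg := integrable_sq_div_japanese_sq (2 * (1 + R ^ 2) / δ ^ 2 * M)
  have hae := ae_regVelocity_ae_eq_timePrimitive h hT hδ hδ₁
  have hsq (t : ℝ)
      (he : regVelocity δ (q t) =ᵐ[volume] timePrimitive (fun s => forcing δ (m s)) t) :
      (fun z => ‖regVelocity δ (q t) z‖ ^ 2) =ᵐ[volume]
        fun z => ‖timePrimitive (fun s => forcing δ (m s)) t z‖ ^ 2 :=
    he.fun_comp fun v => ‖v‖ ^ 2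
  have hint (t : ℝ)
      (he : regVelocity δ (q t) =ᵐ[volume] timePrimitive (fun s => forcing δ (m s)) t) :
      Integrable fun z => ‖regVelocity δ (q t) z‖ ^ 2 :=
    (integrable_sq_timePrimitive hA hAg hg t).congr (hsq t he).symm
  have hprod : ∀ᵐ s, s ∈ Ioo 0 T →
      2 * (∫ z, conj (timePrimitive (fun s => forcing δ (m s)) s z) * forcing δ (m s) z).re ≤
        4 * (C + 1) * ((∫ z, ‖timePrimitive (fun s => forcing δ (m s)) s z‖ ^ 2) + η) := by
    filter_upwards [hae] with s hs hsT
    have hE : 0 ≤ ∫ z, ‖regVelocity δ (q s) z‖ ^ 2 := integral_nonneg fun z => sq_nonneg _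
    have hle := two_mul_re_integral_conj_timePrimitive_mul_forcing_le h hδ hδ₁
      (hflux s (hint s (hs hsT))) (hs hsT)
    rw [← integral_congr_ae (hsq s (hs hsT))]
    linarith
  filter_upwards [hae] with t ht htT
  refine ⟨hint t (ht htT), ?_⟩
  rw [integral_congr_ae (hsq t (ht htT))]
  exact integral_sq_timePrimitive_le hA hAg hg (by positivity) hη hprod (Ioo_subset_Icc_self htT)

end EnergyEstimate

/-! ### Uniqueness for bounded kernels -/

section Uniqueness

variable {φ : ℂ → ℂ} {δ : ℝ} {q : ℂ → ℝ}

lemma norm_integral_mul_mollify_le (hφ : ContDiff ℝ 1 φ) (hφc : HasCompactSupport φ)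
    (hδ : 0 < δ) (hq : Integrable q) :
    ‖∫ z, φ z * ((mollify δ q z : ℝ) : ℂ)‖ ≤ ∫ z, ‖crDeriv I φ z‖ * ‖regVelocity δ q z‖ := by
  have hdual : 2 * ∫ z, φ z * ((mollify δ q z : ℝ) : ℂ) =
      -∫ z, regVelocity δ q z * crDeriv I φ z := by
    rw [integral_mul_crDeriv_of_tsupport_subset isOpen_univ
      (contDiff_regVelocity hδ hq).contDiffOn hφ hφc (subset_univ _), neg_neg,
      ← integral_const_mul]
    congr 1 with z
    rw [crDeriv_I_regVelocity hδ hq]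
    ring
  calc ‖∫ z, φ z * ((mollify δ q z : ℝ) : ℂ)‖ ≤ ‖2 * ∫ z, φ z * ((mollify δ q z : ℝ) : ℂ)‖ := by
        rw [norm_mul, Complex.norm_ofNat]
        linarith [norm_nonneg (∫ z, φ z * ((mollify δ q z : ℝ) : ℂ))]
    _ ≤ ∫ z, ‖regVelocity δ q z * crDeriv I φ z‖ := by
        rw [hdual, norm_neg]
        exact norm_integral_le_integral_norm _
    _ = ∫ z, ‖crDeriv I φ z‖ * ‖regVelocity δ q z‖ := by simp only [norm_mul, mul_comm]

lemma sq_norm_integral_mul_mollify_le (hφ : ContDiff ℝ 1 φ) (hφc : HasCompactSupport φ) {B : ℝ}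
    (hB : ∀ z, ‖crDeriv I φ z‖ ≤ B) (hδ : 0 < δ) (hq : Integrable q)
    (hE : Integrable fun z => ‖regVelocity δ q z‖ ^ 2) :
    ‖∫ z, φ z * ((mollify δ q z : ℝ) : ℂ)‖ ^ 2 ≤
      (∫ z, ‖crDeriv I φ z‖) * (B * ∫ z, ‖regVelocity δ q z‖ ^ 2) := by
  have hcont : Continuous (crDeriv I φ) := continuous_crDeriv hφ
  have hsupp : HasCompactSupport (crDeriv I φ) := hasCompactSupport_crDeriv hφc
  have hV : Continuous (regVelocity δ q) := (contDiff_regVelocity hδ hq).continuous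
  have hint₁ : Integrable fun z => ‖crDeriv I φ z‖ * ‖regVelocity δ q z‖ :=
    (hcont.norm.mul hV.norm).integrable_of_hasCompactSupport hsupp.norm.mul_right
  have hint₂ : Integrable fun z => ‖crDeriv I φ z‖ * ‖regVelocity δ q z‖ ^ 2 :=
    (hcont.norm.mul (hV.norm.pow 2)).integrable_of_hasCompactSupport hsupp.norm.mul_right
  calc ‖∫ z, φ z * ((mollify δ q z : ℝ) : ℂ)‖ ^ 2
      ≤ (∫ z, ‖crDeriv I φ z‖ * ‖regVelocity δ q z‖) ^ 2 := by
        gcongr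
        exact norm_integral_mul_mollify_le hφ hφc hδ hq
    _ ≤ (∫ z, ‖crDeriv I φ z‖) * ∫ z, ‖crDeriv I φ z‖ * ‖regVelocity δ q z‖ ^ 2 :=
        sq_integral_mul_le (fun z => norm_nonneg _)
          (hcont.integrable_of_hasCompactSupport hsupp).norm hint₁ hint₂
    _ ≤ (∫ z, ‖crDeriv I φ z‖) * (B * ∫ z, ‖regVelocity δ q z‖ ^ 2) := by
        rw [← integral_const_mul B]
        refine mul_le_mul_of_nonneg_left (integral_mono hint₂ (hE.const_mul B) fun z => ?_)
          (integral_nonneg fun z => norm_nonneg _)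
        exact mul_le_mul_of_nonneg_right (hB z) (sq_nonneg _)

variable {ι : Type*} {l : Filter ι} {δ : ι → ℝ} {M : ℝ}

lemma tendsto_norm_integral_mul_mollify (hφ : ContDiff ℝ 1 φ) (hφc : HasCompactSupport φ)
    (hδ : ∀ i, 0 < δ i) (hq : Integrable q)
    (hE : ∀ i, Integrable fun z => ‖regVelocity (δ i) q z‖ ^ 2)
    (hlim : Tendsto (fun i => ∫ z, ‖regVelocity (δ i) q z‖ ^ 2) l (𝓝 0)) :
    Tendsto (fun i => ‖∫ z, φ z * ((mollify (δ i) q z : ℝ) : ℂ)‖) l (𝓝 0) := by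
  obtain ⟨B, hB⟩ :=
    (hasCompactSupport_crDeriv (c := I) hφc).exists_bound_of_continuous (continuous_crDeriv hφ)
  have hsqrt : Tendsto (fun i => √((∫ z, ‖crDeriv I φ z‖) *
      (B * ∫ z, ‖regVelocity (δ i) q z‖ ^ 2))) l (𝓝 0) := by
    simpa only [mul_zero, Real.sqrt_zero] using ((hlim.const_mul B).const_mul _).sqrt
  exact squeeze_zero (fun i => norm_nonneg _) (fun i => Real.le_sqrt_of_sq_le
    (sq_norm_integral_mul_mollify_le hφ hφc hB (hδ i) hq (hE i))) hsqrt

lemma mollifierMass_mul_norm_integral_mul_le (hφ : Integrable φ) {δ : ℝ} (hδ : 0 < δ)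
    (hq : IsBddVorticity M q) :
    mollifierMass * ‖∫ z, φ z * (q z : ℂ)‖ ≤
      ‖∫ z, φ z * ((mollify δ q z : ℝ) : ℂ)‖ + M * avgTranslationModulus φ δ := by
  have hcomm : ‖(∫ z, φ z * ((mollify δ q z : ℝ) : ℂ)) - (∫ z, φ z * (q z : ℂ)) * mollifierMass‖ ≤
      M * avgTranslationModulus φ δ := by
    simpa only [mollify_ofReal, mollify_one hδ, one_mul, mul_assoc, ← integral_mul_const]
      using norm_integral_mul_mollify_sub_le hδ hφ (A := fun _ => 1) (B := fun z => (q z : ℂ))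
        measurable_const (Complex.measurable_ofReal.comp hq.measurable) (a := 1) (b := M)
        (fun z => norm_one.le) fun z => (Complex.norm_real _).trans_le (hq.bound z)
  calc mollifierMass * ‖∫ z, φ z * (q z : ℂ)‖
      = ‖(∫ z, φ z * (q z : ℂ)) * mollifierMass‖ := by
        rw [norm_mul, Complex.norm_real, Real.norm_of_nonneg mollifierMass_pos.le, mul_comm]
    _ ≤ ‖∫ z, φ z * ((mollify δ q z : ℝ) : ℂ)‖ + ‖(∫ z, φ z * ((mollify δ q z : ℝ) : ℂ)) -
          (∫ z, φ z * (q z : ℂ)) * mollifierMass‖ := norm_le_norm_add_norm_sub _ _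
    _ ≤ _ := by gcongr

lemma ae_eq_zero_of_tendsto [l.NeBot] (hq : IsBddVorticity M q) (hδ : ∀ i, 0 < δ i)
    (hδ₀ : Tendsto δ l (𝓝 0)) (hE : ∀ i, Integrable fun z => ‖regVelocity (δ i) q z‖ ^ 2)
    (hlim : Tendsto (fun i => ∫ z, ‖regVelocity (δ i) q z‖ ^ 2) l (𝓝 0)) :
    q =ᵐ[volume] 0 := by
  refine ae_eq_zero_of_integral_contDiff_smul_eq_zero hq.integrable.locallyIntegrable
    fun g hg hgc => ?_
  have hφ : ContDiff ℝ 1 fun z => (g z : ℂ) :=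
    Complex.ofRealCLM.contDiff.comp (hg.of_le (by exact_mod_cast le_top))
  have hφc : HasCompactSupport fun z => (g z : ℂ) :=
    hgc.comp_left (g := fun x : ℝ => (x : ℂ)) Complex.ofReal_zero
  have hφi : Integrable fun z => (g z : ℂ) := hφ.continuous.integrable_of_hasCompactSupport hφc
  have hδ' : Tendsto δ l (𝓝[>] 0) :=
    tendsto_nhdsWithin_iff.2 ⟨hδ₀, Eventually.of_forall hδ⟩
  have hlim' := (tendsto_norm_integral_mul_mollify hφ hφc hδ hq.integrable hE hlim).add
    (((tendsto_avgTranslationModulus hφi).comp hδ').const_mul M)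
  rw [mul_zero, add_zero] at hlim'
  have hle : mollifierMass * ‖∫ z, (g z : ℂ) * (q z : ℂ)‖ ≤ 0 :=
    ge_of_tendsto' hlim' fun i => mollifierMass_mul_norm_integral_mul_le hφi (hδ i) hq
  have hzero : ∫ z, (g z : ℂ) * (q z : ℂ) = 0 :=
    norm_le_zero_iff.1 (nonpos_of_mul_nonpos_right hle mollifierMass_pos)
  simpa only [← Complex.ofReal_mul, integral_complex_ofReal, Complex.ofReal_eq_zero,
    smul_eq_mul] using hzero

lemma ae_eq_of_isWeakTransport {T R N C γ : ℝ} (hT : 0 < T) {f g : ℂ → ℂ}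
    (hK : IsBoundedCRKernel f g C) {q q' : ℝ → ℂ → ℝ} (hq : ∀ t, IsBddVorticity M (q t))
    (hq' : ∀ t, IsBddVorticity M (q' t))
    (h : IsWeakTransport T R N (fun t z => q t z - q' t z)
      fun t z => flux γ f (q t) z - flux γ f (q' t) z) :
    ∀ᵐ t, t ∈ Ioo 0 T → (fun z => q t z - q' t z) =ᵐ[volume] 0 := by
  obtain ⟨C₀, hC₀, hflux⟩ := exists_norm_integral_flux_sub_mul_mollify_le hK γ (hq 0).nonneg
  have hδ (n : ℕ) : 0 < 1 / ((n : ℝ) + 1) := Nat.one_div_pos_of_nat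
  have hδ₁ (n : ℕ) : 1 / ((n : ℝ) + 1) ≤ 1 := by
    simpa using Nat.one_div_le_one_div (α := ℝ) (Nat.zero_le n)
  have henergy := ae_all_iff.2 fun n : ℕ => integral_sq_regVelocity_le h hT (hδ n) (hδ₁ n) hC₀
    (avgTranslationModulus_nonneg f _) fun t => hflux _ (hδ n) _ _ (hq t) (hq' t)
  filter_upwards [henergy] with t ht htT
  have hmodulus := ((tendsto_avgTranslationModulus hK.integrable).comp (tendsto_nhdsWithin_iff.2
    ⟨tendsto_one_div_add_atTop_nhds_zero_nat, Eventually.of_forall hδ⟩)).mul_const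
      (Real.exp (4 * (C₀ + 1) * t))
  rw [zero_mul] at hmodulus
  exact ae_eq_zero_of_tendsto (h.isBdd t) hδ tendsto_one_div_add_atTop_nhds_zero_nat
    (fun n => (ht n htT).1) <| squeeze_zero (fun n => integral_nonneg fun z => sq_nonneg _)
      (fun n => (ht n htT).2) hmodulus

end Uniqueness

/-! ### The plane in complex notation -/

section Plane

/-- The identification of `ℂ` with the plane `ℝ × ℝ` of the statement, through which vector fields
become complex functions. -/
abbrev planeEquiv : ℂ ≃L[ℝ] ℝ × ℝ := Complex.equivRealProdCLM

lemma planeEquiv_apply (z : ℂ) : planeEquiv z = (z.re, z.im) := rfl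

lemma planeEquiv_symm_apply (x : ℝ × ℝ) : planeEquiv.symm x = ⟨x.1, x.2⟩ := rfl

lemma planeEquiv_ne_zero {z : ℂ} (hz : z ≠ 0) : planeEquiv z ≠ 0 :=
  (map_ne_zero_iff planeEquiv planeEquiv.injective).2 hz

lemma measurePreserving_planeEquiv : MeasurePreserving (planeEquiv : ℂ → ℝ × ℝ) :=
  Complex.volume_preserving_equiv_real_prod

lemma measurableEmbedding_planeEquiv : MeasurableEmbedding (planeEquiv : ℂ → ℝ × ℝ) :=
  Complex.measurableEquivRealProd.measurableEmbedding

lemma norm2_planeEquiv (z : ℂ) : norm2 (planeEquiv z) = ‖z‖ := by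
  rw [norm2, planeEquiv_apply, Complex.norm_eq_sqrt_sq_add_sq]

/-- A vector field on the plane as a complex function of a complex variable. -/
def complexify (V : ℝ × ℝ → ℝ × ℝ) (z : ℂ) : ℂ := planeEquiv.symm (V (planeEquiv z))

variable {V : ℝ × ℝ → ℝ × ℝ} {z : ℂ}

lemma contDiffOn_complexify {n : WithTop ℕ∞} (hV : ContDiffOn ℝ n V {x | x ≠ 0}) :
    ContDiffOn ℝ n (complexify V) {0}ᶜ :=
  planeEquiv.symm.contDiff.comp_contDiffOn
    (hV.comp planeEquiv.contDiff.contDiffOn fun _ hz => planeEquiv_ne_zero hz)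

lemma locallyIntegrable_complexify (hV : LocallyIntegrable V) :
    LocallyIntegrable (complexify V) := by
  have hcomp : LocallyIntegrable (V ∘ planeEquiv.toHomeomorph) :=
    (locallyIntegrable_map_homeomorph planeEquiv.toHomeomorph (μ := volume)).1 <| by
      rwa [show Measure.map planeEquiv.toHomeomorph volume = volume from
        measurePreserving_planeEquiv.map_eq]
  intro z
  obtain ⟨s, hs, hi⟩ := hcomp z
  exact ⟨s, hs, (planeEquiv.symm : ℝ × ℝ →L[ℝ] ℂ).integrable_comp hi⟩

lemma crDeriv_complexify (c : ℂ) (hV : DifferentiableAt ℝ V (planeEquiv z)) :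
    crDeriv c (complexify V) z =
      complexify (fun x => (pd1 (fun y => (V y).1) x, pd1 (fun y => (V y).2) x)) z +
        c * complexify (fun x => (pd2 (fun y => (V y).1) x, pd2 (fun y => (V y).2) x)) z := by
  have hcomp : HasFDerivAt (complexify V) _ z :=
    planeEquiv.symm.hasFDerivAt.comp z (hV.hasFDerivAt.comp z planeEquiv.hasFDerivAt)
  have hprod : fderiv ℝ V (planeEquiv z) =
      (fderiv ℝ (fun y => (V y).1) (planeEquiv z)).prod
        (fderiv ℝ (fun y => (V y).2) (planeEquiv z)) :=
    hV.fst.fderiv_prodMk hV.snd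
  rw [crDeriv, hcomp.fderiv, hprod]
  rfl

lemma crDeriv_I_complexify (hV : DifferentiableAt ℝ V (planeEquiv z)) :
    crDeriv I (complexify V) z = complexify (fun x =>
      (pd1 (fun y => (V y).1) x - pd2 (fun y => (V y).2) x,
        pd2 (fun y => (V y).1) x + pd1 (fun y => (V y).2) x)) z := by
  rw [crDeriv_complexify I hV]
  apply Complex.ext <;> simp [complexify, planeEquiv_symm_apply, sub_eq_add_neg, add_comm]

lemma crDeriv_neg_I_complexify (hV : DifferentiableAt ℝ V (planeEquiv z)) :
    crDeriv (-I) (complexify V) z = complexify (fun x =>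
      (pd1 (fun y => (V y).1) x + pd2 (fun y => (V y).2) x,
        pd1 (fun y => (V y).2) x - pd2 (fun y => (V y).1) x)) z := by
  rw [crDeriv_complexify (-I) hV]
  apply Complex.ext <;> simp [complexify, planeEquiv_symm_apply, sub_eq_add_neg]

end Plane

section Laplacian

variable {g h : ℝ × ℝ → ℝ} {x : ℝ × ℝ}

lemma pd1_add (hg : DifferentiableAt ℝ g x) (hh : DifferentiableAt ℝ h x) :
    pd1 (fun y => g y + h y) x = pd1 g x + pd1 h x := by
  rw [pd1, fderiv_fun_add hg hh]; rfl

lemma pd1_sub (hg : DifferentiableAt ℝ g x) (hh : DifferentiableAt ℝ h x) :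
    pd1 (fun y => g y - h y) x = pd1 g x - pd1 h x := by
  rw [pd1, fderiv_fun_sub hg hh]; rfl

lemma pd2_add (hg : DifferentiableAt ℝ g x) (hh : DifferentiableAt ℝ h x) :
    pd2 (fun y => g y + h y) x = pd2 g x + pd2 h x := by
  rw [pd2, fderiv_fun_add hg hh]; rfl

lemma pd2_sub (hg : DifferentiableAt ℝ g x) (hh : DifferentiableAt ℝ h x) :
    pd2 (fun y => g y - h y) x = pd2 g x - pd2 h x := by
  rw [pd2, fderiv_fun_sub hg hh]; rfl

lemma differentiableAt_fderiv_of_contDiffAt_two {E F : Type*} [NormedAddCommGroup E]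
    [NormedSpace ℝ E] [NormedAddCommGroup F] [NormedSpace ℝ F] {f : E → F} {x : E}
    (hf : ContDiffAt ℝ 2 f x) : DifferentiableAt ℝ (fderiv ℝ f) x :=
  (hf.fderiv_right (m := 1) (by norm_num [one_add_one_eq_two])).differentiableAt one_ne_zero

lemma differentiableAt_pd1 (hg : ContDiffAt ℝ 2 g x) : DifferentiableAt ℝ (pd1 g) x :=
  (differentiableAt_fderiv_of_contDiffAt_two hg).clm_apply (differentiableAt_const _)

lemma differentiableAt_pd2 (hg : ContDiffAt ℝ 2 g x) : DifferentiableAt ℝ (pd2 g) x :=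
  (differentiableAt_fderiv_of_contDiffAt_two hg).clm_apply (differentiableAt_const _)

lemma fderiv_fderiv_apply_comm {E F : Type*} [NormedAddCommGroup E] [NormedSpace ℝ E]
    [NormedAddCommGroup F] [NormedSpace ℝ F] {f : E → F} {x : E} (hf : ContDiffAt ℝ 2 f x)
    (v w : E) :
    fderiv ℝ (fun y => fderiv ℝ f y v) x w = fderiv ℝ (fun y => fderiv ℝ f y w) x v := by
  have hd := differentiableAt_fderiv_of_contDiffAt_two hf
  have happly (u u' : E) :
      fderiv ℝ (fun y => fderiv ℝ f y u) x u' = fderiv ℝ (fderiv ℝ f) x u' u := by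
    rw [fderiv_clm_apply hd (differentiableAt_const u)]
    simp
  rw [happly, happly, hf.isSymmSndFDerivAt (by simp) w v]

lemma pd1_pd2 (hg : ContDiffAt ℝ 2 g x) : pd1 (pd2 g) x = pd2 (pd1 g) x :=
  fderiv_fderiv_apply_comm hg _ _

lemma crDeriv_neg_I_crDeriv_I_complexify {V : ℝ × ℝ → ℝ × ℝ} {z : ℂ}
    (hV : ContDiffAt ℝ 2 V (planeEquiv z)) :
    crDeriv (-I) (crDeriv I (complexify V)) z =
      complexify (fun x => (lap (fun y => (V y).1) x, lap (fun y => (V y).2) x)) z := by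
  have hnhds : ∀ᶠ w in 𝓝 z, ContDiffAt ℝ 2 V (planeEquiv w) :=
    planeEquiv.continuous.continuousAt.eventually (hV.eventually (by simp))
  have hI := hnhds.mono fun w hw => crDeriv_I_complexify (hw.differentiableAt two_ne_zero)
  have h₁ : ContDiffAt ℝ 2 (fun y => (V y).1) (planeEquiv z) := hV.fst
  have h₂ : ContDiffAt ℝ 2 (fun y => (V y).2) (planeEquiv z) := hV.snd
  have d₁₁ := differentiableAt_pd1 h₁
  have d₁₂ := differentiableAt_pd2 h₁
  have d₂₁ := differentiableAt_pd1 h₂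
  have d₂₂ := differentiableAt_pd2 h₂
  rw [crDeriv_congr hI, crDeriv_neg_I_complexify ((d₁₁.fun_sub d₂₂).prodMk (d₁₂.fun_add d₂₁))]
  simp only [complexify]
  rw [pd1_sub d₁₁ d₂₂, pd2_add d₁₂ d₂₁, pd1_add d₁₂ d₂₁, pd2_sub d₁₁ d₂₂, pd1_pd2 h₁, pd1_pd2 h₂,
    lap, lap]
  ring_nf

end Laplacian

section Kernel

variable {K : ℝ × ℝ → ℝ × ℝ} {z : ℂ}

lemma complexify_Hvec (z : ℂ) : complexify Hvec z = I / (2 * π) / conj z := by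
  have hinv : I / (2 * π) / conj z = (2 * π * (z.re ^ 2 + z.im ^ 2))⁻¹ • (I * z) := by
    rw [div_eq_mul_inv _ (conj z), Complex.inv_def, Complex.normSq_conj, Complex.conj_conj,
      Complex.normSq_apply, Complex.real_smul, mul_inv (2 * π)]
    push_cast
    ring
  rw [hinv, complexify, Hvec, map_smul]
  congr 1
  apply Complex.ext <;> simp [planeEquiv_symm_apply]

lemma complexify_sub_mul_crDeriv_crDeriv (hK : ContDiffOn ℝ 2 K {x : ℝ × ℝ | x ≠ 0}) {α : ℝ}
    (hKeq : ∀ x : ℝ × ℝ, x ≠ 0 →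
      (K x).1 - α * lap (fun y => (K y).1) x = (Hvec x).1 ∧
      (K x).2 - α * lap (fun y => (K y).2) x = (Hvec x).2) (hz : z ≠ 0) :
    complexify K z - α * crDeriv (-I) (crDeriv I (complexify K)) z = I / (2 * π) / conj z := by
  have hx := planeEquiv_ne_zero hz
  obtain ⟨h₁, h₂⟩ := hKeq _ hx
  rw [crDeriv_neg_I_crDeriv_I_complexify (hK.contDiffAt (isOpen_compl_singleton.mem_nhds hx)),
    ← complexify_Hvec]
  apply Complex.ext <;> simpa [complexify, planeEquiv_symm_apply]

lemma exists_norm_crDeriv_complexify_le (hK : ContDiffOn ℝ 2 K {x : ℝ × ℝ | x ≠ 0})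
    (hKgrad : ∃ C : ℝ, ∀ x : ℝ × ℝ, x ≠ 0 →
      |pd2 (fun y => (K y).1) x + pd1 (fun y => (K y).2) x| ≤ C ∧
      |pd1 (fun y => (K y).1) x - pd2 (fun y => (K y).2) x| ≤ C) :
    ∃ C : ℝ, ∀ z, ‖crDeriv I (complexify K) z‖ ≤ C := by
  obtain ⟨C, hC⟩ := hKgrad
  refine ⟨max (C + C) ‖crDeriv I (complexify K) 0‖, fun z => ?_⟩
  rcases eq_or_ne z 0 with rfl | hz
  · exact le_max_right _ _
  have hx := planeEquiv_ne_zero hz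
  obtain ⟨h₁, h₂⟩ := hC _ hx
  refine le_max_of_le_left ?_
  rw [crDeriv_I_complexify
    ((hK.contDiffAt (isOpen_compl_singleton.mem_nhds hx)).differentiableAt two_ne_zero)]
  exact (Complex.norm_le_abs_re_add_abs_im _).trans (add_le_add h₂ h₁)

end Kernel

/-! ### From the limit system to the transport equation for the difference -/

section SpaceTime

variable {X : Type*} [MeasurableSpace X] {μ : Measure X} {E F : Type*} [NormedAddCommGroup E]

lemma integrable_prod_of_integral_norm_le [IsFiniteMeasure μ] {Y : Type*} [MeasurableSpace Y]
    {ν : Measure Y} [SFinite ν] {f : X × Y → E} (hf : AEStronglyMeasurable f (μ.prod ν))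
    (hi : ∀ x, Integrable (fun y => f (x, y)) ν) {N : ℝ} (hN : ∀ x, ∫ y, ‖f (x, y)‖ ∂ν ≤ N) :
    Integrable f (μ.prod ν) := by
  refine (integrable_prod_iff hf).2 ⟨Eventually.of_forall hi, ?_⟩
  refine Integrable.of_bound hf.norm.integral_prod_right' N (Eventually.of_forall fun x => ?_)
  rw [Real.norm_of_nonneg (integral_nonneg fun y => norm_nonneg _)]
  exact hN x

lemma integrable_fderiv_apply [NormedSpace ℝ E] [NormedAddCommGroup F] [NormedSpace ℝ F]
    {b : E → F} (hb : ContDiff ℝ 1 b) (hbs : HasCompactSupport b) {g f : X → E}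
    (hg : AEStronglyMeasurable g μ) (hf : Integrable f μ) :
    Integrable (fun x => fderiv ℝ b (g x) (f x)) μ := by
  have hbc : Continuous (fderiv ℝ b) := hb.continuous_fderiv one_ne_zero
  obtain ⟨B, hB⟩ := (hbs.fderiv (𝕜 := ℝ)).exists_bound_of_continuous hbc
  exact (ContinuousLinearMap.id ℝ (E →L[ℝ] F)).integrable_of_bilin_of_bdd_left B
    (hbc.comp_aestronglyMeasurable hg) (Eventually.of_forall fun x => hB (g x)) hf

end SpaceTime

section FluxInTime

variable {M : ℝ} {p : ℝ → ℂ → ℝ} (μ : Measure ℝ)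

lemma integrable_prod_of_isBddVorticity [IsFiniteMeasure μ]
    (hp : Measurable fun x : ℝ × ℂ => p x.1 x.2) (hpb : ∀ t, IsBddVorticity M (p t)) :
    Integrable (fun x : ℝ × ℂ => p x.1 x.2) (μ.prod volume) :=
  integrable_prod_of_integral_norm_le hp.aestronglyMeasurable (fun t => (hpb t).integrable)
    fun t => (hpb t).integral_le

variable {f : ℂ → ℂ} (γ : ℝ)

lemma flux_of_eq_zero (f : ℂ → ℂ) {q : ℂ → ℝ} {z : ℂ} (h : q z = 0) : flux γ f q z = 0 := by
  simp [flux, h]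

lemma measurable_uncurry_flux (hf : Measurable f) (hp : Measurable fun x : ℝ × ℂ => p x.1 x.2) :
    Measurable fun x : ℝ × ℂ => flux γ f (p x.1) x.2 := by
  have hintegrand : Measurable fun y : (ℝ × ℂ) × ℂ => f (y.1.2 - y.2) * (p y.1.1 y.2 : ℂ) :=
    (hf.comp (measurable_fst.snd.sub measurable_snd)).mul
      (Complex.measurable_ofReal.comp (hp.comp (measurable_fst.fst.prodMk measurable_snd)))
  have hconv : Measurable fun x : ℝ × ℂ => conv f (p x.1) x.2 :=
    hintegrand.stronglyMeasurable.integral_prod_right'.measurable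
  exact (Complex.measurable_ofReal.comp hp).mul (hconv.add ((hf.comp measurable_snd).const_mul _))

lemma integrable_prod_flux [IsFiniteMeasure μ] (hfm : Measurable f) (hf : Integrable f)
    (hp : Measurable fun x : ℝ × ℂ => p x.1 x.2) (hpb : ∀ t, IsBddVorticity M (p t)) :
    Integrable (fun x : ℝ × ℂ => flux γ f (p x.1) x.2) (μ.prod volume) :=
  integrable_prod_of_integral_norm_le (measurable_uncurry_flux γ hfm hp).aestronglyMeasurable
    (fun t => integrable_flux γ hfm hf (hpb t)) fun t => integral_norm_flux_le γ hfm hf (hpb t)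

end FluxInTime

section Truncation

variable {T M R γ : ℝ} {K : ℝ × ℝ → ℝ × ℝ} {q₀ : ℝ × ℝ → ℝ} {q : ℝ → ℝ × ℝ → ℝ} {t : ℝ}

lemma IsBddVorticity.mono {N : ℝ} {p : ℂ → ℝ} (h : IsBddVorticity M p) (hMN : M ≤ N) :
    IsBddVorticity N p where
  measurable := h.measurable
  bound z := (h.bound z).trans hMN
  integrable := h.integrable
  integral_le := h.integral_le.trans hMN

/-- The restriction of a time-dependent function on the plane to the times in `(0, T]`, in complex
notation. Being extended by zero, it satisfies bounds that are uniform over all times. -/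
def truncate (T : ℝ) (q : ℝ → ℝ × ℝ → ℝ) (t : ℝ) (z : ℂ) : ℝ :=
  (Ioc 0 T).indicator (fun s => q s (planeEquiv z)) t

lemma truncate_of_mem (ht : t ∈ Ioc 0 T) : truncate T q t = fun z => q t (planeEquiv z) :=
  funext fun _ => indicator_of_mem ht _

lemma truncate_of_notMem (ht : t ∉ Ioc 0 T) : truncate T q t = 0 :=
  funext fun _ => indicator_of_notMem ht _

lemma measurable_truncate (T : ℝ) (hq : Measurable fun p : ℝ × (ℝ × ℝ) => q p.1 p.2) :
    Measurable fun p : ℝ × ℂ => truncate T q p.1 p.2 := by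
  have h : Measurable fun p : ℝ × ℂ => q p.1 (planeEquiv p.2) :=
    hq.comp (measurable_fst.prodMk (measurableEmbedding_planeEquiv.measurable.comp measurable_snd))
  exact h.indicator (measurable_fst measurableSet_Ioc : MeasurableSet (Prod.fst ⁻¹' Ioc 0 T))

lemma isBddVorticity_of_norm_le {p : ℂ → ℝ} (hp : Measurable p) (hbound : ∀ z, |p z| ≤ M)
    (hsupp : ∀ z, R < ‖z‖ → p z = 0) (hint : ∫ z, |p z| ≤ M) : IsBddVorticity M p where
  measurable := hp
  bound := hbound
  integrable := by
    refine IntegrableOn.integrable_of_forall_notMem_eq_zero (s := Metric.closedBall 0 R) ?_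
      fun z hz => hsupp z (by simpa using hz)
    exact IntegrableOn.of_bound measure_closedBall_lt_top hp.aestronglyMeasurable M
      (Eventually.of_forall hbound)
  integral_le := hint

lemma exists_isBddVorticity_truncate (h : IsSol γ K q₀ q) (hT : 0 < T) :
    ∃ M R, (∀ t, IsBddVorticity M (truncate T q t)) ∧ ∀ t z, R < ‖z‖ → truncate T q t z = 0 := by
  obtain ⟨hm, ⟨C, hC⟩, hs, -⟩ := h
  obtain ⟨R, hR⟩ := hs T hT
  have hC₀ : 0 ≤ C := (abs_nonneg _).trans ((hC 0 le_rfl).2 0)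
  have hsupp (t : ℝ) (z : ℂ) (hz : R < ‖z‖) : truncate T q t z = 0 := by
    by_cases ht : t ∈ Ioc 0 T
    · rw [truncate_of_mem ht]
      exact hR t ⟨ht.1.le, ht.2⟩ _ (by rwa [norm2_planeEquiv])
    · rw [truncate_of_notMem ht, Pi.zero_apply]
  refine ⟨C, R, fun t => isBddVorticity_of_norm_le
    ((measurable_truncate T hm).comp measurable_prodMk_left) ?_ (hsupp t) ?_, hsupp⟩
  all_goals by_cases ht : t ∈ Ioc 0 T
  · rw [truncate_of_mem ht]
    exact fun z => (hC t ht.1.le).2 _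
  · simpa [truncate_of_notMem ht] using hC₀
  · rw [truncate_of_mem ht, measurePreserving_planeEquiv.integral_comp
      measurableEmbedding_planeEquiv fun x => |q t x|]
    exact (hC t ht.1.le).1
  · simpa [truncate_of_notMem ht] using hC₀

end Truncation

section Velocity

variable {R γ : ℝ} {K : ℝ × ℝ → ℝ × ℝ} {p : ℝ × ℝ → ℝ} {f : ℂ → ℂ} {z : ℂ}

lemma complexify_uvel (hp : ∀ w, R < ‖w‖ → p (planeEquiv w) = 0)
    (hf : EqOn f (complexify K) (Metric.closedBall 0 (2 * R))) (hz : ‖z‖ ≤ R) :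
    complexify (uvel γ K p) z = conv f (fun w => p (planeEquiv w)) z + γ * f z := by
  have heq (w : ℂ) (hw : ‖w‖ ≤ 2 * R) : f w = complexify K w :=
    hf (mem_closedBall_zero_iff.2 hw)
  rw [complexify, uvel, map_add, map_smul, heq z (by linarith [norm_nonneg z]), Complex.real_smul]
  refine congrArg₂ (· + ·) ?_ rfl
  rw [← ContinuousLinearEquiv.integral_comp_comm,
    ← measurePreserving_planeEquiv.integral_comp measurableEmbedding_planeEquiv, conv]
  refine integral_congr_ae (Eventually.of_forall fun w => ?_)
  rcases le_or_gt ‖w‖ R with hw | hw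
  · simp only [heq (z - w) ((norm_sub_le _ _).trans (by linarith)), complexify, map_smul, map_sub,
      Complex.real_smul, mul_comm]
  · simp only [hp w hw, zero_smul, map_zero, Complex.ofReal_zero, mul_zero]

lemma flux_comp_planeEquiv (hp : ∀ w, R < ‖w‖ → p (planeEquiv w) = 0)
    (hf : EqOn f (complexify K) (Metric.closedBall 0 (2 * R))) (z : ℂ) :
    flux γ f (fun w => p (planeEquiv w)) z = p (planeEquiv z) • complexify (uvel γ K p) z := by
  rcases le_or_gt ‖z‖ R with hz | hz
  · rw [complexify_uvel hp hf hz, flux, Complex.real_smul]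
  · simp only [flux, hp z hz, Complex.ofReal_zero, zero_mul, zero_smul]

end Velocity

section SeparatedTest

variable {a : ℝ → ℝ} {b : ℂ → ℝ} {t : ℝ} {z : ℂ}

/-- The space-time test function with separated variables `a(t) b(x)`, where the plane carries its
complex notation. -/
def separatedTest (a : ℝ → ℝ) (b : ℂ → ℝ) (p : ℝ × (ℝ × ℝ)) : ℝ := a p.1 * b (planeEquiv.symm p.2)

lemma contDiff_separatedTest {n : WithTop ℕ∞} (ha : ContDiff ℝ n a) (hb : ContDiff ℝ n b) :
    ContDiff ℝ n (separatedTest a b) :=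
  (ha.comp contDiff_fst).mul (hb.comp (planeEquiv.symm.contDiff.comp contDiff_snd))

lemma hasCompactSupport_separatedTest (ha : HasCompactSupport a) (hb : HasCompactSupport b) :
    HasCompactSupport (separatedTest a b) := by
  refine HasCompactSupport.intro
    (IsCompact.prod ha (IsCompact.image hb planeEquiv.continuous)) fun p hp => ?_
  by_contra hne
  exact hp ⟨subset_tsupport _ (left_ne_zero_of_mul hne), planeEquiv.symm p.2,
    subset_tsupport _ (right_ne_zero_of_mul hne), planeEquiv.apply_symm_apply _⟩

lemma fderiv_separatedTest (ha : DifferentiableAt ℝ a t) (hb : DifferentiableAt ℝ b z) (s : ℝ)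
    (v : ℝ × ℝ) :
    fderiv ℝ (separatedTest a b) (t, planeEquiv z) (s, v) =
      s * deriv a t * b z + a t * fderiv ℝ b z (planeEquiv.symm v) := by
  have htime : HasFDerivAt (fun p : ℝ × (ℝ × ℝ) => a p.1) _ (t, planeEquiv z) :=
    ha.hasFDerivAt.comp (t, planeEquiv z) hasFDerivAt_fst
  have hspace : HasFDerivAt (fun p : ℝ × (ℝ × ℝ) => b (planeEquiv.symm p.2)) _ (t, planeEquiv z) :=
    HasFDerivAt.comp (t, planeEquiv z)
      (by simpa only [planeEquiv.symm_apply_apply] using hb.hasFDerivAt)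
      (planeEquiv.symm.hasFDerivAt.comp (t, planeEquiv z) hasFDerivAt_snd)
  have hmul : HasFDerivAt (separatedTest a b) _ (t, planeEquiv z) := htime.mul hspace
  rw [hmul.fderiv]
  simp only [add_apply, smul_apply, ContinuousLinearMap.comp_apply, smul_eq_mul,
    ContinuousLinearMap.coe_fst', ContinuousLinearMap.coe_snd', ContinuousLinearEquiv.coe_coe,
    planeEquiv.symm_apply_apply, fderiv_eq_smul_deriv]
  ring

lemma transport_separatedTest (ha : DifferentiableAt ℝ a t) (hb : DifferentiableAt ℝ b z)
    (u : ℝ × ℝ) :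
    fderiv ℝ (separatedTest a b) (t, planeEquiv z) (1, (0, 0)) +
        u.1 * fderiv ℝ (separatedTest a b) (t, planeEquiv z) (0, (1, 0)) +
        u.2 * fderiv ℝ (separatedTest a b) (t, planeEquiv z) (0, (0, 1)) =
      deriv a t * b z + a t * fderiv ℝ b z (planeEquiv.symm u) := by
  have hsum : ((1, u) : ℝ × (ℝ × ℝ)) = (1, (0, 0)) + u.1 • (0, (1, 0)) + u.2 • (0, (0, 1)) := by
    ext <;> simp
  rw [← smul_eq_mul u.1, ← smul_eq_mul u.2, ← map_smul, ← map_smul, ← map_add, ← map_add, ← hsum,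
    fderiv_separatedTest ha hb, one_mul]

end SeparatedTest

section WeakFormulation

variable {T M R γ : ℝ} {K : ℝ × ℝ → ℝ × ℝ} {q₀ : ℝ × ℝ → ℝ} {q q' : ℝ → ℝ × ℝ → ℝ} {f : ℂ → ℂ}
  {a : ℝ → ℝ} {b : ℂ → ℝ}

lemma setIntegral_Ioi_prod_comp_planeEquiv (F : ℝ × (ℝ × ℝ) → ℝ) :
    ∫ p in Ioi (0 : ℝ) ×ˢ univ, F p =
      ∫ x in Ioi (0 : ℝ) ×ˢ (univ : Set ℂ), F (x.1, planeEquiv x.2) := by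
  have hpres : MeasurePreserving (Prod.map id planeEquiv : ℝ × ℂ → ℝ × (ℝ × ℝ)) :=
    (MeasurePreserving.id volume).prod measurePreserving_planeEquiv
  rw [← hpres.setIntegral_preimage_emb
    (MeasurableEmbedding.id.prodMap measurableEmbedding_planeEquiv)]
  rfl

lemma mul_transport_separatedTest (hs : ∀ t z, R < ‖z‖ → truncate T q t z = 0)
    (hf : EqOn f (complexify K) (Metric.closedBall 0 (2 * R))) {t : ℝ} (ht : t ∈ Ioc 0 T) {z : ℂ}
    (ha : DifferentiableAt ℝ a t) (hb : DifferentiableAt ℝ b z) :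
    q t (planeEquiv z) * (fderiv ℝ (separatedTest a b) (t, planeEquiv z) (1, (0, 0)) +
        (uvel γ K (q t) (planeEquiv z)).1 *
          fderiv ℝ (separatedTest a b) (t, planeEquiv z) (0, (1, 0)) +
        (uvel γ K (q t) (planeEquiv z)).2 *
          fderiv ℝ (separatedTest a b) (t, planeEquiv z) (0, (0, 1))) =
      deriv a t * (truncate T q t z * b z) +
        a t * fderiv ℝ b z (flux γ f (truncate T q t) z) := by
  have hzero (w : ℂ) (hw : R < ‖w‖) : q t (planeEquiv w) = 0 := by
    simpa only [truncate_of_mem ht] using hs t w hw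
  rw [transport_separatedTest ha hb, truncate_of_mem ht, flux_comp_planeEquiv hzero hf, map_smul,
    smul_eq_mul, complexify]
  ring

lemma setIntegral_transport_separatedTest (hs : ∀ t z, R < ‖z‖ → truncate T q t z = 0)
    (hf : EqOn f (complexify K) (Metric.closedBall 0 (2 * R))) (ha : Differentiable ℝ a)
    (hb : Differentiable ℝ b) (haT : ∀ t, T ≤ t → a t = 0) :
    ∫ p in Ioi (0 : ℝ) ×ˢ (univ : Set (ℝ × ℝ)),
        q p.1 p.2 * (fderiv ℝ (separatedTest a b) p (1, (0, 0)) +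
          (uvel γ K (q p.1) p.2).1 * fderiv ℝ (separatedTest a b) p (0, (1, 0)) +
          (uvel γ K (q p.1) p.2).2 * fderiv ℝ (separatedTest a b) p (0, (0, 1))) =
      ∫ x in Ioc 0 T ×ˢ (univ : Set ℂ), (deriv a x.1 * (truncate T q x.1 x.2 * b x.2) +
        a x.1 * fderiv ℝ b x.2 (flux γ f (truncate T q x.1) x.2)) := by
  have hderiv (t : ℝ) (ht : T < t) : deriv a t = 0 := by
    have hzero : a =ᶠ[𝓝 t] fun _ => 0 :=
      (lt_mem_nhds ht).mono fun s hs => haT s hs.le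
    rw [hzero.deriv_eq, deriv_const]
  rw [setIntegral_Ioi_prod_comp_planeEquiv, setIntegral_eq_of_subset_of_forall_sdiff_eq_zero
    (s := Ioc (0 : ℝ) T ×ˢ (univ : Set ℂ)) (measurableSet_Ioi.prod MeasurableSet.univ)
    (prod_mono Ioc_subset_Ioi_self subset_rfl)]
  · exact setIntegral_congr_fun (measurableSet_Ioc.prod MeasurableSet.univ) fun x hx =>
      mul_transport_separatedTest hs hf hx.1 (ha x.1) (hb x.2)
  · intro x hx
    have ht : T < x.1 := by
      by_contra hc
      exact hx.2 ⟨⟨hx.1.1, not_lt.1 hc⟩, trivial⟩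
    rw [transport_separatedTest (ha x.1) (hb x.2), hderiv _ ht, haT _ ht.le, zero_mul, zero_mul,
      add_zero, mul_zero]

lemma integrable_prod_deriv_mul (hm : Measurable fun p : ℝ × (ℝ × ℝ) => q p.1 p.2)
    (hbdd : ∀ t, IsBddVorticity M (truncate T q t)) (ha : ContDiff ℝ 1 a)
    (has : HasCompactSupport a) (hb : Continuous b) (hbs : HasCompactSupport b) :
    Integrable (fun x : ℝ × ℂ => deriv a x.1 * (truncate T q x.1 x.2 * b x.2))
      ((volume.restrict (Ioc 0 T)).prod volume) := by
  have hac : Continuous (deriv a) := ha.continuous_deriv le_rfl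
  obtain ⟨A, hA⟩ := has.deriv.exists_bound_of_continuous hac
  obtain ⟨B, hB⟩ := hbs.exists_bound_of_continuous hb
  exact ((integrable_prod_of_isBddVorticity _ (measurable_truncate T hm) hbdd).mul_bdd
    (hb.comp continuous_snd).aestronglyMeasurable (Eventually.of_forall fun x => hB x.2)).bdd_mul
      (hac.comp continuous_fst).aestronglyMeasurable (Eventually.of_forall fun x => hA x.1)

lemma integrable_prod_mul_fderiv_flux (hm : Measurable fun p : ℝ × (ℝ × ℝ) => q p.1 p.2)
    (hbdd : ∀ t, IsBddVorticity M (truncate T q t)) (hfm : Measurable f) (hf : Integrable f)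
    (ha : Continuous a) (has : HasCompactSupport a) (hb : ContDiff ℝ 1 b)
    (hbs : HasCompactSupport b) :
    Integrable (fun x : ℝ × ℂ => a x.1 * fderiv ℝ b x.2 (flux γ f (truncate T q x.1) x.2))
      ((volume.restrict (Ioc 0 T)).prod volume) := by
  obtain ⟨A, hA⟩ := has.exists_bound_of_continuous ha
  exact (integrable_fderiv_apply hb hbs continuous_snd.aestronglyMeasurable
    (integrable_prod_flux _ γ hfm hf (measurable_truncate T hm) hbdd)).bdd_mul
      (ha.comp continuous_fst).aestronglyMeasurable (Eventually.of_forall fun x => hA x.1)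

lemma integrableOn_integral_truncate (hm : Measurable fun p : ℝ × (ℝ × ℝ) => q p.1 p.2)
    (hbdd : ∀ t, IsBddVorticity M (truncate T q t)) (hfm : Measurable f) (hf : Integrable f)
    (ha : ContDiff ℝ 1 a) (has : HasCompactSupport a) (hb : ContDiff ℝ 1 b)
    (hbs : HasCompactSupport b) :
    IntegrableOn (fun t => deriv a t * (∫ z, truncate T q t z * b z) +
      a t * ∫ z, fderiv ℝ b z (flux γ f (truncate T q t) z)) (Ioc 0 T) := by
  simp_rw [← integral_const_mul]
  exact (integrable_prod_deriv_mul hm hbdd ha has hb.continuous hbs).integral_prod_left.add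
    (integrable_prod_mul_fderiv_flux hm hbdd hfm hf ha.continuous has hb hbs).integral_prod_left

lemma setIntegral_integral_truncate_of_isSol (h : IsSol γ K q₀ q)
    (hbdd : ∀ t, IsBddVorticity M (truncate T q t))
    (hs : ∀ t z, R < ‖z‖ → truncate T q t z = 0) (hfm : Measurable f) (hf : Integrable f)
    (hfK : EqOn f (complexify K) (Metric.closedBall 0 (2 * R))) (ha : ContDiff ℝ (⊤ : ℕ∞) a)
    (has : HasCompactSupport a) (hb : ContDiff ℝ (⊤ : ℕ∞) b) (hbs : HasCompactSupport b)
    (haT : ∀ t, T ≤ t → a t = 0) :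
    ∫ t in Ioc 0 T, (deriv a t * (∫ z, truncate T q t z * b z) +
      a t * ∫ z, fderiv ℝ b z (flux γ f (truncate T q t) z)) =
      -∫ x, q₀ x * separatedTest a b (0, x) := by
  have hi₁ := integrable_prod_deriv_mul h.1 hbdd (ha.of_le (by simp)) has hb.continuous hbs
  have hi₂ := integrable_prod_mul_fderiv_flux (γ := γ) h.1 hbdd hfm hf ha.continuous has
    (hb.of_le (by simp)) hbs
  have hweak := h.2.2.2 _ (contDiff_separatedTest ha hb) (hasCompactSupport_separatedTest has hbs)
  rw [setIntegral_transport_separatedTest hs hfK (ha.differentiable (by simp))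
    (hb.differentiable (by simp)) haT, Measure.volume_eq_prod, ← Measure.prod_restrict,
    Measure.restrict_univ] at hweak
  simp_rw [← integral_const_mul]
  rw [integral_add hi₁.integral_prod_left hi₂.integral_prod_left, ← integral_prod _ hi₁,
    ← integral_prod _ hi₂, ← integral_add hi₁ hi₂]
  exact eq_neg_of_add_eq_zero_left hweak

end WeakFormulation

section Difference

variable {T M R γ : ℝ} {K : ℝ × ℝ → ℝ × ℝ} {q₀ : ℝ × ℝ → ℝ} {q q' : ℝ → ℝ × ℝ → ℝ} {f : ℂ → ℂ}

lemma integral_norm_flux_sub_le (hfm : Measurable f) (hf : Integrable f) {p p' : ℂ → ℝ}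
    (hp : IsBddVorticity M p) (hp' : IsBddVorticity M p') :
    ∫ z, ‖flux γ f p z - flux γ f p' z‖ ≤ 2 * ((M ^ 2 + M * |γ|) * ∫ z, ‖f z‖) := by
  have hi := integrable_flux γ hfm hf hp
  have hi' := integrable_flux γ hfm hf hp'
  calc ∫ z, ‖flux γ f p z - flux γ f p' z‖
      ≤ ∫ z, (‖flux γ f p z‖ + ‖flux γ f p' z‖) :=
        integral_mono (hi.sub hi').norm (hi.norm.add hi'.norm) fun z => norm_sub_le _ _
    _ = (∫ z, ‖flux γ f p z‖) + ∫ z, ‖flux γ f p' z‖ := integral_add hi.norm hi'.norm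
    _ ≤ _ := by
        linarith [integral_norm_flux_le γ hfm hf hp, integral_norm_flux_le γ hfm hf hp']

lemma integral_sub_mul_add_integral_fderiv_sub {b : ℂ → ℝ} (hb : ContDiff ℝ 1 b)
    (hbs : HasCompactSupport b) {p p' : ℂ → ℝ} (hp : Integrable p) (hp' : Integrable p')
    {m m' : ℂ → ℂ} (hm : Integrable m) (hm' : Integrable m') (c d : ℝ) :
    c * (∫ z, (p z - p' z) * b z) + d * ∫ z, fderiv ℝ b z (m z - m' z) =
      (c * (∫ z, p z * b z) + d * ∫ z, fderiv ℝ b z (m z)) -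
        (c * (∫ z, p' z * b z) + d * ∫ z, fderiv ℝ b z (m' z)) := by
  obtain ⟨B, hB⟩ := hbs.exists_bound_of_continuous hb.continuous
  have hmul {p : ℂ → ℝ} (hp : Integrable p) : Integrable fun z => p z * b z :=
    hp.mul_bdd hb.continuous.aestronglyMeasurable (Eventually.of_forall hB)
  have hfderiv {m : ℂ → ℂ} (hm : Integrable m) : Integrable fun z => fderiv ℝ b z (m z) :=
    integrable_fderiv_apply hb hbs aestronglyMeasurable_id hm
  simp only [sub_mul, map_sub]
  rw [integral_sub (hmul hp) (hmul hp'), integral_sub (hfderiv hm) (hfderiv hm')]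
  ring

lemma isWeakTransport_truncate_sub (hT : 0 < T) (h : IsSol γ K q₀ q) (h' : IsSol γ K q₀ q')
    (hb : ∀ t, IsBddVorticity M (truncate T q t)) (hb' : ∀ t, IsBddVorticity M (truncate T q' t))
    (hs : ∀ t z, R < ‖z‖ → truncate T q t z = 0) (hs' : ∀ t z, R < ‖z‖ → truncate T q' t z = 0)
    (hfm : Measurable f) (hf : Integrable f)
    (hfK : EqOn f (complexify K) (Metric.closedBall 0 (2 * R))) :
    IsWeakTransport T R (max (M + M) (2 * ((M ^ 2 + M * |γ|) * ∫ z, ‖f z‖)))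
      (fun t z => truncate T q t z - truncate T q' t z)
      fun t z => flux γ f (truncate T q t) z - flux γ f (truncate T q' t) z where
  measurable := (measurable_truncate T h.1).sub (measurable_truncate T h'.1)
  measurable_flux := (measurable_uncurry_flux γ hfm (measurable_truncate T h.1)).sub
    (measurable_uncurry_flux γ hfm (measurable_truncate T h'.1))
  isBdd t := ((hb t).sub (hb' t)).mono (le_max_left _ _)
  eq_zero t z hz := by rw [hs t z hz, hs' t z hz, sub_zero]
  integrable_flux t := (integrable_flux γ hfm hf (hb t)).sub (integrable_flux γ hfm hf (hb' t))
  integral_flux_le t :=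
    (integral_norm_flux_sub_le hfm hf (hb t) (hb' t)).trans (le_max_right _ _)
  flux_eq_zero t z hz := by
    rw [flux_of_eq_zero γ f (hs t z hz), flux_of_eq_zero γ f (hs' t z hz), sub_zero]
  weak a b ha has hbd hbs haT := by
    have ha₁ : ContDiff ℝ 1 a := ha.of_le (by simp)
    have hb₁ : ContDiff ℝ 1 b := hbd.of_le (by simp)
    simp_rw [integral_sub_mul_add_integral_fderiv_sub hb₁ hbs (hb _).integrable (hb' _).integrable
      (integrable_flux γ hfm hf (hb _)) (integrable_flux γ hfm hf (hb' _))]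
    rw [intervalIntegral.integral_of_le hT.le, integral_sub
      (integrableOn_integral_truncate h.1 hb hfm hf ha₁ has hb₁ hbs)
      (integrableOn_integral_truncate h'.1 hb' hfm hf ha₁ has hb₁ hbs),
      setIntegral_integral_truncate_of_isSol h hb hs hfm hf hfK ha has hbd hbs haT,
      setIntegral_integral_truncate_of_isSol h' hb' hs' hfm hf hfK ha has hbd hbs haT, sub_self]

lemma exists_common_bound_truncate (h : IsSol γ K q₀ q) (h' : IsSol γ K q₀ q') (hT : 0 < T) :
    ∃ M R, 0 < R ∧ ((∀ t, IsBddVorticity M (truncate T q t)) ∧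
      ∀ t, IsBddVorticity M (truncate T q' t)) ∧
      ∀ t z, R < ‖z‖ → truncate T q t z = 0 ∧ truncate T q' t z = 0 := by
  obtain ⟨M, R, hb, hs⟩ := exists_isBddVorticity_truncate h hT
  obtain ⟨M', R', hb', hs'⟩ := exists_isBddVorticity_truncate h' hT
  refine ⟨max M M', max (max R R') 1, lt_max_of_lt_right one_pos,
    ⟨fun t => (hb t).mono (le_max_left _ _), fun t => (hb' t).mono (le_max_right _ _)⟩,
    fun t z hz => ?_⟩
  obtain ⟨⟨hR, hR'⟩, -⟩ := And.imp_left max_lt_iff.1 (max_lt_iff.1 hz)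
  exact ⟨hs t z hR, hs' t z hR'⟩

lemma ae_ae_eq_of_isSol
    (hK : ∀ R > 0, ∃ f g C, IsBoundedCRKernel f g C ∧ EqOn f (complexify K) (Metric.closedBall 0 R))
    (h : IsSol γ K q₀ q) (h' : IsSol γ K q₀ q') (hT : 0 < T) :
    ∀ᵐ t, t ∈ Ioo 0 T → ∀ᵐ x, q t x = q' t x := by
  obtain ⟨M, R, hR, ⟨hb, hb'⟩, hs⟩ := exists_common_bound_truncate h h' hT
  obtain ⟨f, g, C, hf, hfK⟩ := hK (2 * R) (by positivity)
  have hweak := isWeakTransport_truncate_sub hT h h' hb hb' (fun t z hz => (hs t z hz).1)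
    (fun t z hz => (hs t z hz).2) hf.measurable hf.integrable hfK
  filter_upwards [ae_eq_of_isWeakTransport hT hf hb hb' hweak] with t ht htT
  have hplane : ∀ᵐ z : ℂ, q t (planeEquiv z) = q' t (planeEquiv z) := by
    filter_upwards [ht htT] with z hz
    simpa only [truncate_of_mem (Ioo_subset_Ioc_self htT), Pi.zero_apply, sub_eq_zero] using hz
  exact (measurePreserving_planeEquiv.symm
    Complex.measurableEquivRealProd).quasiMeasurePreserving.ae hplane

end Difference

lemma ae_prod_of_forall_ae_Ioo {Y : Type*} [MeasurableSpace Y] {ν : Measure Y} [SFinite ν]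
    {p : ℝ → Y → Prop} (hp : MeasurableSet {x : ℝ × Y | p x.1 x.2})
    (h : ∀ T > 0, ∀ᵐ t, t ∈ Ioo 0 T → ∀ᵐ y ∂ν, p t y) :
    ∀ᵐ x ∂(volume : Measure ℝ).prod ν, 0 < x.1 → p x.1 x.2 := by
  have hpos : MeasurableSet {x : ℝ × Y | 0 < x.1} :=
    measurableSet_lt measurable_const measurable_fst
  have htimes : ∀ᵐ t, ∀ n : ℕ, t ∈ Ioo (0 : ℝ) (n + 1) → ∀ᵐ y ∂ν, p t y :=
    ae_all_iff.2 fun n => h _ (by positivity)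
  refine (Measure.ae_prod_iff_ae_ae (hpos.imp hp)).2 ?_
  filter_upwards [htimes] with t ht
  rcases le_or_gt t 0 with ht₀ | ht₀
  · exact Eventually.of_forall fun y hy => absurd hy (not_lt.2 ht₀)
  · obtain ⟨n, hn⟩ := exists_nat_gt t
    exact (ht n ⟨ht₀, by linarith⟩).mono fun y hy _ => hy

end AlphaEuler

theorem stmt18_general (α γ : ℝ) (K : ℝ × ℝ → ℝ × ℝ)
    (hKsm : ContDiffOn ℝ 2 K {x : ℝ × ℝ | x ≠ 0})
    (hKloc : LocallyIntegrable K)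
    (hKeq : ∀ x : ℝ × ℝ, x ≠ 0 →
      (K x).1 - α * lap (fun y => (K y).1) x = (Hvec x).1 ∧
      (K x).2 - α * lap (fun y => (K y).2) x = (Hvec x).2)
    (hKgrad : ∃ C : ℝ, ∀ x : ℝ × ℝ, x ≠ 0 →
      |pd2 (fun y => (K y).1) x + pd1 (fun y => (K y).2) x| ≤ C ∧
      |pd1 (fun y => (K y).1) x - pd2 (fun y => (K y).2) x| ≤ C)
    (q₀ : ℝ × ℝ → ℝ) (q q' : ℝ → ℝ × ℝ → ℝ)
    (hq : IsSol γ K q₀ q) (hq' : IsSol γ K q₀ q') :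
    ∀ᵐ p : ℝ × (ℝ × ℝ), 0 < p.1 → q p.1 p.2 = q' p.1 p.2 := by
  obtain ⟨C, hC⟩ := AlphaEuler.exists_norm_crDeriv_complexify_le hKsm hKgrad
  have hkernel (R : ℝ) (hR : 0 < R) : ∃ f g C, AlphaEuler.IsBoundedCRKernel f g C ∧
      EqOn f (AlphaEuler.complexify K) (Metric.closedBall 0 R) :=
    AlphaEuler.exists_isBoundedCRKernel_eqOn (AlphaEuler.contDiffOn_complexify hKsm)
      (AlphaEuler.locallyIntegrable_complexify hKloc) hC
      (fun z hz => AlphaEuler.complexify_sub_mul_crDeriv_crDeriv hKsm hKeq hz) hR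
  have hmeas : MeasurableSet {p : ℝ × (ℝ × ℝ) | q p.1 p.2 = q' p.1 p.2} :=
    measurableSet_eq_fun hq.1 hq'.1
  exact AlphaEuler.ae_prod_of_forall_ae_Ioo (p := fun t x => q t x = q' t x) hmeas
    fun T hT => AlphaEuler.ae_ae_eq_of_isSol hkernel hq hq' hT

/-- Uniqueness for the limit system of the α-Euler equations in the exterior of a vanishing
obstacle: two solutions in `L^∞(ℝ₊; L¹ ∩ L^∞)`, compactly supported in space locally
uniformly in time, with velocity `u = K^α ∗ q + γ K^α` where `K^α` satisfies
`(1 − αΔ)K^α = H` off the origin and has bounded symmetric-gradient components, and with the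
same initial data, coincide. -/
theorem stmt18 (α γ : ℝ) (hα : 0 < α) (K : ℝ × ℝ → ℝ × ℝ)
    (hKsm : ContDiffOn ℝ 2 K {x : ℝ × ℝ | x ≠ 0})
    (hKloc : LocallyIntegrable K)
    (hKeq : ∀ x : ℝ × ℝ, x ≠ 0 →
      (K x).1 - α * lap (fun y => (K y).1) x = (Hvec x).1 ∧
      (K x).2 - α * lap (fun y => (K y).2) x = (Hvec x).2)
    (hKgrad : ∃ C : ℝ, ∀ x : ℝ × ℝ, x ≠ 0 →
      |pd2 (fun y => (K y).1) x + pd1 (fun y => (K y).2) x| ≤ C ∧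
      |pd1 (fun y => (K y).1) x - pd2 (fun y => (K y).2) x| ≤ C)
    (q₀ : ℝ × ℝ → ℝ) (q q' : ℝ → ℝ × ℝ → ℝ)
    (hq : IsSol γ K q₀ q) (hq' : IsSol γ K q₀ q') :
    ∀ᵐ p : ℝ × (ℝ × ℝ), 0 < p.1 → q p.1 p.2 = q' p.1 p.2 :=
  stmt18_general α γ K hKsm hKloc hKeq hKgrad q₀ q q' hq hq'
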